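/- arXiv:1709.05020 — 9 statements merged into one kernel-verified Lean document; each statement's English description precedes it below -/
import Mathlib

section
/- Let λ < 0 and m, n ≥ 2 be integers. Let (x, y, θ) be a solution of the generating system on a finite interval (a, b) such that θ(t) ∈ (−3π/2, −π/2) for all t ∈ (a, b) (so the curve moves leftward), x(t) → 0 and y(t) → y_b as t → b⁻, where y_b > 0 and y_b ≠ λ + √(λ² + 2(n−1)). Then θ(t) → −π as t → b⁻; that is, the solution curve can be continuously extended to meet the y-axis, and it meets the y-axis perpendicularly. -/
open Real

/-- Integrating-factor argument: `x ^ k * (S - δ)` is nondecreasing and tends to `0`. -/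
lemma aux_bound (j : ℕ) (t0 b δ : ℝ) (x S C T : ℝ → ℝ)
    (hx0 : ∀ t ∈ Set.Ioo t0 b, 0 < x t)
    (hC : ∀ t ∈ Set.Ioo t0 b, 0 < C t)
    (hS1 : ∀ t ∈ Set.Ioo t0 b, |S t| ≤ 1)
    (hx : ∀ t ∈ Set.Ioo t0 b, HasDerivAt x (-C t) t)
    (hS : ∀ t ∈ Set.Ioo t0 b, HasDerivAt S (C t * T t) t)
    (hT : ∀ t ∈ Set.Ioo t0 b, |x t * T t - ((j : ℝ) + 1) * S t| ≤ ((j : ℝ) + 1) * δ)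
    (hxlim : Filter.Tendsto x (nhdsWithin b (Set.Iio b)) (nhds 0)) :
    ∀ t ∈ Set.Ioo t0 b, S t ≤ δ := by
  intro t ht
  have hd : ∀ s ∈ Set.Ioo t0 b, HasDerivAt (fun s => x s ^ (j + 1) * (S s - δ))
      (C s * x s ^ j * (x s * T s - ((j : ℝ) + 1) * (S s - δ))) s := by
    intro s hs
    have h := ((hx s hs).pow (j + 1)).mul ((hS s hs).sub_const δ)
    refine HasDerivAt.congr_deriv h ?_
    simp only [Pi.pow_apply, Nat.add_sub_cancel]
    push_cast
    ring
  have hmono : MonotoneOn (fun s => x s ^ (j + 1) * (S s - δ)) (Set.Ioo t0 b) := by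
    apply monotoneOn_of_deriv_nonneg (convex_Ioo t0 b)
    · exact fun s hs => (hd s hs).continuousAt.continuousWithinAt
    · rw [interior_Ioo]
      exact fun s hs => (hd s hs).differentiableAt.differentiableWithinAt
    · rw [interior_Ioo]
      intro s hs
      rw [(hd s hs).deriv]
      have h1 := (abs_le.1 (hT s hs)).1
      have h2 := pow_pos (hx0 s hs) j
      have h3 := hC s hs
      apply mul_nonneg (by positivity)
      linarith
  have hnear : ∀ᶠ s in nhdsWithin b (Set.Iio b), s ∈ Set.Ioo t b :=
    Ioo_mem_nhdsLT ht.2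
  have hlim : Filter.Tendsto (fun s => x s ^ (j + 1) * (S s - δ))
      (nhdsWithin b (Set.Iio b)) (nhds 0) := by
    apply squeeze_zero_norm' (a := fun s => |x s| ^ (j + 1) * (1 + |δ|))
    · filter_upwards [hnear] with s hs
      rw [Real.norm_eq_abs, abs_mul, abs_pow]
      have h1 := hS1 s ⟨ht.1.trans hs.1, hs.2⟩
      have h2 := abs_sub (S s) δ
      gcongr
      linarith
    · have := ((hxlim.abs).pow (j + 1)).mul_const (1 + |δ|)
      simpa using this
  have hle : x t ^ (j + 1) * (S t - δ) ≤ 0 := by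
    apply ge_of_tendsto hlim
    filter_upwards [hnear] with s hs
    exact hmono ht ⟨ht.1.trans hs.1, hs.2⟩ hs.1.le
  have hp := pow_pos (hx0 t ht) (j + 1)
  by_contra hcon
  push Not at hcon
  have := mul_pos hp (sub_pos.2 hcon)
  linarith

/-- A leftward-moving solution curve of the generating system that approaches the
`y`-axis at a positive height `y_b` (with `y_b` not equal to the special height
`λ + √(λ² + 2(n−1))`) meets the `y`-axis perpendicularly: θ(t) → −π as t → b⁻. -/
theorem meets_y_axis_perpendicularly
    (lam : ℝ) (hlam : lam < 0) (m n : ℕ) (hm : 2 ≤ m) (hn : 2 ≤ n)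
    (a b : ℝ) (hab : a < b) (x y θ : ℝ → ℝ)
    (hpos : ∀ t ∈ Set.Ioo a b, 0 < x t ∧ 0 < y t)
    (hx : ∀ t ∈ Set.Ioo a b, HasDerivAt x (Real.cos (θ t)) t)
    (hy : ∀ t ∈ Set.Ioo a b, HasDerivAt y (Real.sin (θ t)) t)
    (hθ : ∀ t ∈ Set.Ioo a b, HasDerivAt θ
      ((x t / 2 - ((m : ℝ) - 1) / x t) * Real.sin (θ t) +
        (((n : ℝ) - 1) / y t - y t / 2) * Real.cos (θ t) + lam) t)
    (hθrange : ∀ t ∈ Set.Ioo a b, θ t ∈ Set.Ioo (-(3 * π / 2)) (-(π / 2)))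
    (yb : ℝ) (hyb : 0 < yb)
    (hyb' : yb ≠ lam + Real.sqrt (lam ^ 2 + 2 * ((n : ℝ) - 1)))
    (hxlim : Filter.Tendsto x (nhdsWithin b (Set.Iio b)) (nhds 0))
    (hylim : Filter.Tendsto y (nhdsWithin b (Set.Iio b)) (nhds yb)) :
    Filter.Tendsto θ (nhdsWithin b (Set.Iio b)) (nhds (-π)) := by
  obtain ⟨j, rfl⟩ : ∃ j, m = j + 2 := ⟨m - 2, by omega⟩
  have hmemab : ∀ᶠ t in nhdsWithin b (Set.Iio b), t ∈ Set.Ioo a b := Ioo_mem_nhdsLT hab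
  have hcos : ∀ t ∈ Set.Ioo a b, 0 < -cos (θ t) := by
    intro t ht
    obtain ⟨h1, h2⟩ := hθrange t ht
    rw [← cos_add_pi]
    apply cos_pos_of_mem_Ioo
    constructor <;> linarith
  let T : ℝ → ℝ := fun t => ((x t / 2 - (((j + 2 : ℕ) : ℝ) - 1) / x t) * Real.sin (θ t) +
        (((n : ℝ) - 1) / y t - y t / 2) * Real.cos (θ t) + lam)
  -- the error term
  have herr : Filter.Tendsto (fun t => x t * T t - ((j : ℝ) + 1) * (-sin (θ t)))
      (nhdsWithin b (Set.Iio b)) (nhds 0) := by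
    apply squeeze_zero_norm' (a := fun t => |x t| * (|x t| / 2 + |((n : ℝ) - 1) / y t - y t / 2|
      + |lam|))
    · filter_upwards [hmemab] with t ht
      have hxp := (hpos t ht).1
      have e : x t * T t - ((j : ℝ) + 1) * (-sin (θ t)) = x t * (x t / 2 * sin (θ t) +
          (((n : ℝ) - 1) / y t - y t / 2) * Real.cos (θ t) + lam) := by
        simp only [T]
        push_cast
        field_simp
        ring
      rw [e, Real.norm_eq_abs, abs_mul]
      apply mul_le_mul_of_nonneg_left _ (abs_nonneg _)
      refine (abs_add_three _ _ _).trans ?_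
      have h1 : |x t / 2 * sin (θ t)| ≤ |x t| / 2 := by
        rw [abs_mul, abs_div, abs_two]
        exact mul_le_of_le_one_right (by positivity) (abs_sin_le_one _)
      have h2 : |(((n : ℝ) - 1) / y t - y t / 2) * Real.cos (θ t)| ≤
          |((n : ℝ) - 1) / y t - y t / 2| := by
        rw [abs_mul]
        exact mul_le_of_le_one_right (by positivity) (abs_cos_le_one _)
      linarith
    · have hg : Filter.Tendsto (fun t => ((n : ℝ) - 1) / y t - y t / 2)
          (nhdsWithin b (Set.Iio b)) (nhds (((n : ℝ) - 1) / yb - yb / 2)) :=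
        (tendsto_const_nhds.div hylim hyb.ne').sub (hylim.div_const 2)
      have := hxlim.abs.mul (((hxlim.abs.div_const 2).add hg.abs).add_const |lam|)
      simpa using this
  have hsin : Filter.Tendsto (fun t => -sin (θ t)) (nhdsWithin b (Set.Iio b)) (nhds 0) := by
    rw [Metric.tendsto_nhds]
    intro ε hε
    have hj : (0 : ℝ) < (j : ℝ) + 1 := by positivity
    have hev := (Metric.tendsto_nhds.1 herr (((j : ℝ) + 1) * (ε / 2)) (by positivity)).and hmemab
    obtain ⟨t0, ht0, hsub⟩ := (mem_nhdsLT_iff_exists_Ioo_subset' hab).1 hev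
    have hI : ∀ t ∈ Set.Ioo t0 b, t ∈ Set.Ioo a b := fun t ht => (hsub ht).2
    have hE : ∀ t ∈ Set.Ioo t0 b,
        |x t * T t - ((j : ℝ) + 1) * (-sin (θ t))| ≤ ((j : ℝ) + 1) * (ε / 2) := by
      intro t ht
      have := (hsub ht).1
      rw [Real.dist_eq, sub_zero] at this
      exact this.le
    have hSd : ∀ t ∈ Set.Ioo t0 b, HasDerivAt (fun t => -sin (θ t)) (-cos (θ t) * T t) t := by
      intro t ht
      refine HasDerivAt.congr_deriv ((hθ t (hI t ht)).sin).neg ?_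
      simp only [T]
      ring
    have hxd : ∀ t ∈ Set.Ioo t0 b, HasDerivAt x (-(-cos (θ t))) t := by
      intro t ht
      rw [neg_neg]
      exact hx t (hI t ht)
    have h1 := aux_bound j t0 b (ε / 2) x (fun t => -sin (θ t)) (fun t => -cos (θ t)) T
      (fun t ht => (hpos t (hI t ht)).1) (fun t ht => hcos t (hI t ht))
      (fun t _ => by simpa using abs_sin_le_one (θ t)) hxd hSd hE hxlim
    have h2 := aux_bound j t0 b (ε / 2) x (fun t => sin (θ t)) (fun t => -cos (θ t))
      (fun t => -T t)
      (fun t ht => (hpos t (hI t ht)).1) (fun t ht => hcos t (hI t ht))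
      (fun t _ => abs_sin_le_one (θ t)) hxd
      (fun t ht => by
        convert (hθ t (hI t ht)).sin using 1
        simp only [T]
        ring)
      (fun t ht => by
        have := hE t ht
        rw [← abs_neg] at this
        convert this using 2
        ring) hxlim
    have hm0 : ∀ᶠ t in nhdsWithin b (Set.Iio b), t ∈ Set.Ioo t0 b := Ioo_mem_nhdsLT ht0
    filter_upwards [hm0] with t ht
    have k1 := h1 t ht
    have k2 := h2 t ht
    rw [Real.dist_eq, sub_zero, abs_lt]
    constructor <;> linarith
  have hfin : Filter.Tendsto (fun t => arcsin (-sin (θ t)) - π)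
      (nhdsWithin b (Set.Iio b)) (nhds (-π)) := by
    have := ((continuous_arcsin.tendsto 0).comp hsin).sub_const π
    simpa using this
  refine hfin.congr' ?_
  filter_upwards [hmemab] with t ht
  obtain ⟨h1, h2⟩ := hθrange t ht
  rw [← sin_add_pi, arcsin_sin (by linarith) (by linarith)]
  ring
end

section
/- Let λ < 0 and m, n ≥ 2 be integers. Let (x, y, θ) be a solution of the generating system on a finite interval (a, b) such that θ(t) ∈ (−π, 0) for all t ∈ (a, b) (so the curve moves downward), y(t) → 0 and x(t) → x_b as t → b⁻, where x_b > 0 and x_b ≠ λ + √(λ² + 2(m−1)). Then θ(t) → −π/2 as t → b⁻; that is, a solution curve that meets the x-axis away from the origin does so at a perpendicular angle. -/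
open Real

/-- Barrier lemma: an unstable angle cannot stay away from zero while bounded. -/
lemma barrier_aux (T b M : ℝ) (hT : T < b) (hM : 0 ≤ M) (p p' : ℝ → ℝ)
    (hp : ∀ t ∈ Set.Ioo T b, HasDerivAt p (p' t) t)
    (hlt : ∀ t ∈ Set.Ioo T b, p t < π / 2)
    (hge : ∀ t ∈ Set.Ioo T b, 0 < p t → Real.sin (p t) / (b - t) - M ≤ p' t)
    (e : ℝ) (he : 0 < e) :
    ∀ᶠ t in nhdsWithin b (Set.Iio b), p t < e := by
  by_cases he2 : π / 2 ≤ e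
  · filter_upwards [Ioo_mem_nhdsLT hT] with t ht
    exact lt_of_lt_of_le (hlt t ht) he2
  push Not at he2
  have hs : 0 < Real.sin e := Real.sin_pos_of_pos_of_lt_pi he (by linarith [Real.pi_pos])
  set c := Real.sin e / 2 with hc
  have hcpos : 0 < c := by positivity
  have hT1 : max T (b - c / (M + 1)) < b := by
    have : 0 < c / (M + 1) := by positivity
    exact max_lt hT (by linarith)
  filter_upwards [Ioo_mem_nhdsLT hT1] with t0 ht0
  have hTt0 : T < t0 := lt_of_le_of_lt (le_max_left _ _) ht0.1
  have hct0 : b - c / (M + 1) < t0 := lt_of_le_of_lt (le_max_right _ _) ht0.1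
  have ht0b := ht0.2
  by_contra hcon
  push Not at hcon
  set t1 := b - (b - t0) * Real.exp (-(2 / c)) with ht1
  have hexp : Real.exp (-(2 / c)) < 1 := by
    rw [Real.exp_lt_one_iff]
    have : 0 < 2 / c := by positivity
    linarith
  have hexp0 := Real.exp_pos (-(2 / c))
  have h01 : t0 < t1 := by nlinarith
  have h1b : t1 < b := by nlinarith
  have hB : ∀ s ∈ Set.Icc t0 t1, HasDerivAt
      (fun s => -(e + c * (Real.log (b - t0) - Real.log (b - s)))) (-(c / (b - s))) s := by
    intro s hs
    have hne : b - s ≠ 0 := by linarith [hs.2]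
    have h1 : HasDerivAt (fun s => b - s) (-1) s := by
      simpa using (hasDerivAt_id s).const_sub b
    have h2 := ((((h1.log hne).const_sub (Real.log (b - t0))).const_mul c).const_add e).neg
    have h3 : -(c / (b - s)) = -(c * -(-1 / (b - s))) := by ring
    rw [h3]
    exact h2
  have key := image_le_of_deriv_right_lt_deriv_boundary' (f := fun s => - p s)
    (f' := fun s => - p' s) (a := t0) (b := t1)
    (B := fun s => -(e + c * (Real.log (b - t0) - Real.log (b - s))))
    (B' := fun s => -(c / (b - s)))
    (fun s hs => ((hp s ⟨by linarith [hs.1], by linarith [hs.2]⟩).neg).continuousAt.continuousWithinAt)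
    (fun s hs => ((hp s ⟨by linarith [hs.1], by linarith [hs.2]⟩).neg).hasDerivWithinAt)
    (by simpa using hcon)
    (fun s hs => (hB s hs).continuousAt.continuousWithinAt)
    (fun s hs => (hB s ⟨hs.1, hs.2.le⟩).hasDerivWithinAt)
    (by
      intro s hs heq
      have hsI : s ∈ Set.Ioo T b := ⟨by linarith [hs.1], by linarith [hs.2]⟩
      have hbs : 0 < b - s := by linarith [hs.2]
      have hlog : Real.log (b - s) ≤ Real.log (b - t0) :=
        Real.log_le_log hbs (by linarith [hs.1])
      have hpe : e ≤ p s := by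
        have := mul_nonneg hcpos.le (sub_nonneg.2 hlog)
        linarith
      have hsin : Real.sin e ≤ Real.sin (p s) :=
        Real.sin_le_sin_of_le_of_le_pi_div_two (by linarith [Real.pi_pos]) (hlt s hsI).le hpe
      have h1 := hge s hsI (by linarith)
      have h2 : Real.sin e / (b - s) ≤ Real.sin (p s) / (b - s) := by gcongr
      have h3 : Real.sin e / (b - s) = c / (b - s) + c / (b - s) := by rw [hc]; ring
      have h4 : M < c / (b - s) := by
        rw [lt_div_iff₀ hbs]
        have h5 : b - s < c / (M + 1) := by linarith [hs.1]
        rw [lt_div_iff₀ (by linarith)] at h5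
        nlinarith
      linarith)
  have hk := key (Set.right_mem_Icc.2 h01.le)
  have hbt1 : b - t1 = (b - t0) * Real.exp (-(2 / c)) := by rw [ht1]; ring
  rw [hbt1, Real.log_mul (by linarith) hexp0.ne', Real.log_exp] at hk
  have h6 : c * (Real.log (b - t0) - (Real.log (b - t0) + -(2 / c))) = 2 := by
    field_simp
    ring
  rw [h6] at hk
  have := hlt t1 ⟨by linarith, h1b⟩
  linarith [Real.pi_lt_four]

/-- A downward-moving solution curve of the generating system that approaches the
`x`-axis at a positive abscissa `x_b` (with `x_b` not equal to the special value
`λ + √(λ² + 2(m−1))`) meets the `x`-axis perpendicularly: θ(t) → −π/2 as t → b⁻. -/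
theorem meets_x_axis_perpendicularly
    (lam : ℝ) (hlam : lam < 0) (m n : ℕ) (hm : 2 ≤ m) (hn : 2 ≤ n)
    (a b : ℝ) (hab : a < b) (x y θ : ℝ → ℝ)
    (hpos : ∀ t ∈ Set.Ioo a b, 0 < x t ∧ 0 < y t)
    (hx : ∀ t ∈ Set.Ioo a b, HasDerivAt x (Real.cos (θ t)) t)
    (hy : ∀ t ∈ Set.Ioo a b, HasDerivAt y (Real.sin (θ t)) t)
    (hθ : ∀ t ∈ Set.Ioo a b, HasDerivAt θ
      ((x t / 2 - ((m : ℝ) - 1) / x t) * Real.sin (θ t) +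
        (((n : ℝ) - 1) / y t - y t / 2) * Real.cos (θ t) + lam) t)
    (hθrange : ∀ t ∈ Set.Ioo a b, θ t ∈ Set.Ioo (-π) 0)
    (xb : ℝ) (hxb : 0 < xb)
    (hxb' : xb ≠ lam + Real.sqrt (lam ^ 2 + 2 * ((m : ℝ) - 1)))
    (hylim : Filter.Tendsto y (nhdsWithin b (Set.Iio b)) (nhds 0))
    (hxlim : Filter.Tendsto x (nhdsWithin b (Set.Iio b)) (nhds xb)) :
    Filter.Tendsto θ (nhdsWithin b (Set.Iio b)) (nhds (-(π / 2))) := by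
  -- the height is at most the remaining time
  have hyb : ∀ t ∈ Set.Ioo a b, y t ≤ b - t := by
    have hmono : MonotoneOn (fun t => y t + t) (Set.Ioo a b) := by
      apply monotoneOn_of_deriv_nonneg (convex_Ioo a b)
      · intro t ht
        exact ((hy t ht).add (hasDerivAt_id t)).continuousAt.continuousWithinAt
      · intro t ht
        rw [interior_Ioo] at ht
        exact ((hy t ht).add (hasDerivAt_id t)).differentiableAt.differentiableWithinAt
      · intro t ht
        rw [interior_Ioo] at ht
        have h := ((hy t ht).add (hasDerivAt_id t)).deriv
        have h' : deriv (fun t => y t + t) t = Real.sin (θ t) + 1 := h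
        rw [h']
        linarith [Real.neg_one_le_sin (θ t)]
    intro t ht
    have hl : Filter.Tendsto (fun t => y t + t) (nhdsWithin b (Set.Iio b)) (nhds (0 + b)) :=
      hylim.add (Filter.tendsto_id.mono_left nhdsWithin_le_nhds)
    have := ge_of_tendsto hl (b := y t + t) (by
      filter_upwards [Ioo_mem_nhdsLT ht.2] with s hs
      exact hmono ht ⟨ht.1.trans hs.1, hs.2⟩ hs.1.le)
    linarith
  set A := xb / 2 - ((m : ℝ) - 1) / xb with hA
  have hAlim : Filter.Tendsto (fun t => |x t / 2 - ((m : ℝ) - 1) / x t|)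
      (nhdsWithin b (Set.Iio b)) (nhds |A|) :=
    ((hxlim.div_const 2).sub (tendsto_const_nhds.div hxlim hxb.ne')).abs
  have hev := (hAlim.eventually_lt_const (show |A| < |A| + 1 by linarith)).and
    ((hylim.eventually_lt_const (show (0 : ℝ) < 1 by norm_num)).and (Ioo_mem_nhdsLT hab))
  obtain ⟨T, hTb, hT⟩ := (mem_nhdsLT_iff_exists_Ioo_subset (a := b)).1 hev
  set M := |A| + 2 + |lam| with hMdef
  have hM : 0 ≤ M := by positivity
  have hn1 : (1 : ℝ) ≤ (n : ℝ) - 1 := by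
    have : (2 : ℝ) ≤ n := by exact_mod_cast hn
    linarith
  have hTb' : T < b := hTb
  -- the bounded part of the angular velocity
  have hR : ∀ t ∈ Set.Ioo T b,
      |(x t / 2 - ((m : ℝ) - 1) / x t) * Real.sin (θ t) - y t / 2 * Real.cos (θ t) + lam| ≤ M := by
    intro t ht
    obtain ⟨h1, h2, h3⟩ := hT ht
    have hy0 := (hpos t h3).2
    have hb1 : |(x t / 2 - ((m : ℝ) - 1) / x t) * Real.sin (θ t)| ≤ |A| + 1 := by
      rw [abs_mul]
      calc _ ≤ |x t / 2 - ((m : ℝ) - 1) / x t| * 1 := by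
            gcongr
            exact Real.abs_sin_le_one _
        _ ≤ |A| + 1 := by rw [mul_one]; exact h1.le
    have hb2 : |y t / 2 * Real.cos (θ t)| ≤ 1 := by
      rw [abs_mul, abs_of_pos (by linarith : 0 < y t / 2)]
      calc _ ≤ y t / 2 * 1 := by
            gcongr
            exact Real.abs_cos_le_one _
        _ ≤ 1 := by linarith
    calc _ ≤ _ := abs_add_le _ _
      _ ≤ (|(x t / 2 - ((m : ℝ) - 1) / x t) * Real.sin (θ t)| + |y t / 2 * Real.cos (θ t)|)
          + |lam| := by gcongr; exact abs_sub _ _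
      _ ≤ M := by linarith
  have hdiv : ∀ t ∈ Set.Ioo T b, ∀ u : ℝ, 0 < u → u / (b - t) ≤ ((n : ℝ) - 1) / y t * u := by
    intro t ht u hu
    obtain ⟨h1, h2, h3⟩ := hT ht
    have hy0 := (hpos t h3).2
    have hle := hyb t h3
    calc u / (b - t) ≤ u / y t := by gcongr
      _ = 1 / y t * u := by ring
      _ ≤ _ := by gcongr
  have up := barrier_aux T b M hTb' hM (fun t => θ t + π / 2)
    (fun t => (x t / 2 - ((m : ℝ) - 1) / x t) * Real.sin (θ t) +
        (((n : ℝ) - 1) / y t - y t / 2) * Real.cos (θ t) + lam)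
    (fun t ht => (hθ t (hT ht).2.2).add_const _)
    (fun t ht => by linarith [(hθrange t (hT ht).2.2).2])
    (by
      intro t ht hpt
      have hr := hθrange t (hT ht).2.2
      have hcos : 0 < Real.cos (θ t) :=
        Real.cos_pos_of_mem_Ioo ⟨by linarith, by linarith [hr.2, Real.pi_pos]⟩
      rw [Real.sin_add_pi_div_two]
      have h1 := hdiv t ht _ hcos
      have h2 := (abs_le.1 (hR t ht)).1
      linarith)
  have dn := barrier_aux T b M hTb' hM (fun t => -(θ t + π / 2))
    (fun t => -((x t / 2 - ((m : ℝ) - 1) / x t) * Real.sin (θ t) +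
        (((n : ℝ) - 1) / y t - y t / 2) * Real.cos (θ t) + lam))
    (fun t ht => ((hθ t (hT ht).2.2).add_const _).neg)
    (fun t ht => by linarith [(hθrange t (hT ht).2.2).1])
    (by
      intro t ht hpt
      have hr := hθrange t (hT ht).2.2
      have hcos : 0 < -Real.cos (θ t) := by
        rw [← Real.sin_add_pi_div_two, ← Real.sin_neg]
        exact Real.sin_pos_of_pos_of_lt_pi hpt (by linarith [hr.1, Real.pi_pos])
      rw [Real.sin_neg, Real.sin_add_pi_div_two]
      have h1 := hdiv t ht _ hcos
      have h2 := (abs_le.1 (hR t ht)).2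
      linarith)
  rw [Metric.tendsto_nhds]
  intro e he
  filter_upwards [up e he, dn e he] with t h1 h2
  rw [Real.dist_eq, abs_lt]
  constructor <;> linarith
end

section
/- Let λ < 0 and m, n ≥ 2 be integers. There is no solution (x, y, θ) of the generating system on an interval of positive length whose angle function θ is constant, θ(t) ≡ θ₀, with sin θ₀ ≠ 0 and cos θ₀ ≠ 0. In other words, the only straight-line solutions of the generating system are horizontal or vertical lines. -/
open Real

/-- A function that is constant on an open interval has zero derivative there. -/
lemma deriv_zero_of_const {a b : ℝ} {f : ℝ → ℝ} {k : ℝ} (h : ∀ t ∈ Set.Ioo a b, f t = k)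
    {t d : ℝ} (ht : t ∈ Set.Ioo a b) (hd : HasDerivAt f d t) : d = 0 := by
  have h1 : HasDerivAt f 0 t := by
    refine (hasDerivAt_const t k).congr_of_eventuallyEq ?_
    filter_upwards [isOpen_Ioo.mem_nhds ht] with u hu using h u hu
  exact hd.unique h1

/-- There is no straight-line solution of the generating system whose direction is
neither horizontal nor vertical: no solution on an interval of positive length can
have constant angle θ ≡ θ₀ with sin θ₀ ≠ 0 and cos θ₀ ≠ 0. -/
theorem no_oblique_line_solution
    (lam : ℝ) (hlam : lam < 0) (m n : ℕ) (hm : 2 ≤ m) (hn : 2 ≤ n) :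
    ¬ ∃ (a b : ℝ) (x y θ : ℝ → ℝ) (θ₀ : ℝ),
      a < b ∧
      Real.sin θ₀ ≠ 0 ∧ Real.cos θ₀ ≠ 0 ∧
      (∀ t ∈ Set.Ioo a b, θ t = θ₀) ∧
      (∀ t ∈ Set.Ioo a b, 0 < x t ∧ 0 < y t) ∧
      (∀ t ∈ Set.Ioo a b, HasDerivAt x (Real.cos (θ t)) t) ∧
      (∀ t ∈ Set.Ioo a b, HasDerivAt y (Real.sin (θ t)) t) ∧
      (∀ t ∈ Set.Ioo a b, HasDerivAt θ
        ((x t / 2 - ((m : ℝ) - 1) / x t) * Real.sin (θ t) +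
          (((n : ℝ) - 1) / y t - y t / 2) * Real.cos (θ t) + lam) t) := by
  rintro ⟨a, b, x, y, θ, θ₀, hab, hs, hc, hθ, hpos, hx, hy, hd⟩
  have hp : (0 : ℝ) < (m : ℝ) - 1 := by
    have : (2 : ℝ) ≤ m := by exact_mod_cast hm
    linarith
  have hq : (0 : ℝ) < (n : ℝ) - 1 := by
    have : (2 : ℝ) ≤ n := by exact_mod_cast hn
    linarith
  set p : ℝ := (m : ℝ) - 1
  set q : ℝ := (n : ℝ) - 1
  set s := Real.sin θ₀
  set c := Real.cos θ₀
  have hx' : ∀ t ∈ Set.Ioo a b, HasDerivAt x c t := fun t ht => by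
    have := hx t ht
    rwa [hθ t ht] at this
  have hy' : ∀ t ∈ Set.Ioo a b, HasDerivAt y s t := fun t ht => by
    have := hy t ht
    rwa [hθ t ht] at this
  have h0 : ∀ t ∈ Set.Ioo a b,
      (x t / 2 - p / x t) * s + (q / y t - y t / 2) * c + lam = 0 := fun t ht => by
    have := deriv_zero_of_const hθ ht (hd t ht)
    rwa [hθ t ht] at this
  have h1 : ∀ t ∈ Set.Ioo a b, p * (y t * y t) - q * (x t * x t) = 0 := fun t ht => by
    obtain ⟨hxp, hyp⟩ := hpos t ht
    have e := deriv_zero_of_const h0 ht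
      ((((((hx' t ht).div_const 2).sub
        ((hasDerivAt_const t p).div (hx' t ht) hxp.ne')).mul_const s).add
        ((((hasDerivAt_const t q).div (hy' t ht) hyp.ne').sub
        ((hy' t ht).div_const 2)).mul_const c)).add_const lam)
    field_simp at e
    have e2 : (s * c) * (p * (y t * y t) - q * (x t * x t)) = 0 := by
      first
        | linear_combination e
        | linear_combination e / 2
        | linear_combination s * c * e
        | linear_combination s * c * e / 2
    exact (mul_eq_zero.mp e2).resolve_left (mul_ne_zero hs hc)
  have h2 : ∀ t ∈ Set.Ioo a b, p * (y t * s) - q * (x t * c) = 0 := fun t ht => by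
    have e := deriv_zero_of_const h1 ht
      ((((hy' t ht).mul (hy' t ht)).const_mul p).sub
        (((hx' t ht).mul (hx' t ht)).const_mul q))
    linear_combination e / 2
  have h3 : ∀ t ∈ Set.Ioo a b, p * (s * s) - q * (c * c) = 0 := fun t ht =>
    deriv_zero_of_const h2 ht
      ((((hy' t ht).mul_const s).const_mul p).sub (((hx' t ht).mul_const c).const_mul q))
  obtain ⟨t, ht⟩ := Set.nonempty_Ioo.mpr hab
  obtain ⟨hxp, hyp⟩ := hpos t ht
  have e0 := h0 t ht
  have e2 := h2 t ht
  have e3 := h3 t ht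
  have k1 : x t * s = y t * c := by
    have : (q * c) * (x t * s - y t * c) = 0 := by
      linear_combination y t * e3 - s * e2
    have := (mul_eq_zero.mp this).resolve_left (mul_ne_zero hq.ne' hc)
    linarith
  have k2 : p / x t * s = q / y t * c := by
    field_simp
    linear_combination e2
  have : lam = 0 := by linear_combination e0 - k1 / 2 + k2
  exact hlam.ne this
end

section
/- Let λ < 0 and m, n ≥ 2 be integers, and let k > 0 be a real constant. There is no solution (x, y, θ) of the generating system on an interval of positive length with θ constant and y(t) = k·x(t) for all t; that is, no straight line through the origin satisfies the generating system. -/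
open Real

/-- No straight line through the origin is a solution of the generating system:
there is no solution on an interval of positive length with constant angle θ and
with `y = k·x` for a positive constant `k`. -/
theorem no_line_through_origin_solution
    (lam : ℝ) (hlam : lam < 0) (m n : ℕ) (hm : 2 ≤ m) (hn : 2 ≤ n)
    (k : ℝ) (hk : 0 < k) :
    ¬ ∃ (a b : ℝ) (x y θ : ℝ → ℝ),
      a < b ∧
      (∀ t₁ ∈ Set.Ioo a b, ∀ t₂ ∈ Set.Ioo a b, θ t₁ = θ t₂) ∧
      (∀ t ∈ Set.Ioo a b, y t = k * x t) ∧
      (∀ t ∈ Set.Ioo a b, 0 < x t ∧ 0 < y t) ∧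
      (∀ t ∈ Set.Ioo a b, HasDerivAt x (Real.cos (θ t)) t) ∧
      (∀ t ∈ Set.Ioo a b, HasDerivAt y (Real.sin (θ t)) t) ∧
      (∀ t ∈ Set.Ioo a b, HasDerivAt θ
        ((x t / 2 - ((m : ℝ) - 1) / x t) * Real.sin (θ t) +
          (((n : ℝ) - 1) / y t - y t / 2) * Real.cos (θ t) + lam) t) := by
  rintro ⟨a, b, x, y, θ, hab, hθ, hy, hpos, hx', hy', hθ'⟩
  have hnhds : ∀ t ∈ Set.Ioo a b, Set.Ioo a b ∈ nhds t := fun t ht => isOpen_Ioo.mem_nhds ht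
  have hsin : ∀ t ∈ Set.Ioo a b, Real.sin (θ t) = k * Real.cos (θ t) := by
    intro t ht
    have h1 : HasDerivAt y (k * Real.cos (θ t)) t := by
      refine ((hx' t ht).const_mul k).congr_of_eventuallyEq ?_
      filter_upwards [hnhds t ht] with s hs using hy s hs
    exact (hy' t ht).unique h1
  obtain ⟨t₀, ht₀⟩ : ∃ t₀, t₀ ∈ Set.Ioo a b := Set.nonempty_Ioo.mpr hab
  have hxc : ∀ t ∈ Set.Ioo a b,
      x t = -(Real.cos (θ t₀) * (((n : ℝ) - 1) / k - ((m : ℝ) - 1) * k)) / lam := by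
    intro t ht
    have h1 : HasDerivAt θ 0 t := by
      refine (hasDerivAt_const t (θ t₀)).congr_of_eventuallyEq ?_
      filter_upwards [hnhds t ht] with s hs using hθ s hs t₀ ht₀
    have h2 := (hθ' t ht).unique h1
    rw [hsin t ht, hy t ht, hθ t ht t₀ ht₀] at h2
    have hxp := (hpos t ht).1.ne'
    have hk' := hk.ne'
    have hl := hlam.ne
    field_simp at h2 ⊢
    linarith
  have hc : Real.cos (θ t₀) = 0 := by
    refine (hx' t₀ ht₀).unique ((hasDerivAt_const t₀ (x t₀)).congr_of_eventuallyEq ?_)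
    filter_upwards [hnhds t₀ ht₀] with s hs using (hxc s hs).trans (hxc t₀ ht₀).symm
  have h3 := hxc t₀ ht₀
  have h4 := (hpos t₀ ht₀).1
  rw [h3, hc] at h4
  simp at h4
end

section
/- Let λ < 0 and n ≥ 2 be an integer, and let (x, y, θ) be a solution of the generating system with m = n on an interval I. Define x̃(t) = y(−t), ỹ(t) = x(−t), θ̃(t) = −π/2 − θ(−t) for t ∈ −I. Then (x̃, ỹ, θ̃) is again a solution of the generating system with m = n on −I; i.e., for m = n the system is invariant under reflection across the diagonal line y = x combined with reversal of the parametrization. -/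
open Real

/-- For `m = n`, the generating system is invariant under reflection across the diagonal
`y = x` combined with reversal of the parametrization: if `(x, y, θ)` is a solution on
`I`, then `x̃(t) = y(−t)`, `ỹ(t) = x(−t)`, `θ̃(t) = −π/2 − θ(−t)` is a solution on `−I`. -/
theorem reflection_across_diagonal_is_solution
    (lam : ℝ) (hlam : lam < 0) (n : ℕ) (hn : 2 ≤ n)
    (I : Set ℝ) (x y θ : ℝ → ℝ)
    (hpos : ∀ t ∈ I, 0 < x t ∧ 0 < y t)
    (hx : ∀ t ∈ I, HasDerivAt x (Real.cos (θ t)) t)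
    (hy : ∀ t ∈ I, HasDerivAt y (Real.sin (θ t)) t)
    (hθ : ∀ t ∈ I, HasDerivAt θ
      ((x t / 2 - ((n : ℝ) - 1) / x t) * Real.sin (θ t) +
        (((n : ℝ) - 1) / y t - y t / 2) * Real.cos (θ t) + lam) t) :
    ∀ t : ℝ, -t ∈ I →
      (0 < y (-t) ∧ 0 < x (-t)) ∧
      HasDerivAt (fun u : ℝ => y (-u)) (Real.cos (-(π / 2) - θ (-t))) t ∧
      HasDerivAt (fun u : ℝ => x (-u)) (Real.sin (-(π / 2) - θ (-t))) t ∧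
      HasDerivAt (fun u : ℝ => -(π / 2) - θ (-u))
        ((y (-t) / 2 - ((n : ℝ) - 1) / y (-t)) * Real.sin (-(π / 2) - θ (-t)) +
          (((n : ℝ) - 1) / x (-t) - x (-t) / 2) * Real.cos (-(π / 2) - θ (-t)) + lam) t := by
  intro t ht
  have hc : Real.cos (-(π / 2) - θ (-t)) = -Real.sin (θ (-t)) := by
    rw [Real.cos_sub, Real.cos_neg, Real.sin_neg, Real.cos_pi_div_two, Real.sin_pi_div_two]
    ring
  have hs : Real.sin (-(π / 2) - θ (-t)) = -Real.cos (θ (-t)) := by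
    rw [Real.sin_sub, Real.cos_neg, Real.sin_neg, Real.cos_pi_div_two, Real.sin_pi_div_two]
    ring
  have hneg : HasDerivAt (fun u : ℝ => -u) (-1) t := hasDerivAt_neg t
  rw [hc, hs]
  refine ⟨⟨(hpos _ ht).2, (hpos _ ht).1⟩, ?_, ?_, ?_⟩
  · exact ((hy _ ht).comp t hneg).congr_deriv (by ring)
  · exact ((hx _ ht).comp t hneg).congr_deriv (by ring)
  · exact (((hθ _ ht).comp t hneg).const_sub (-(π / 2))).congr_deriv (by ring)
end

section
/- Let λ < 0 and n ≥ 2 be an integer, and let (r, s, φ) be a solution of the transformed system on an interval [a, b] such that s(t) ≥ 0, r(t) > s(t), and φ(t) ∈ (−π, 0) for all t ∈ [a, b]. Then there is at most one time t ∈ [a, b] with φ(t) = −π/2. -/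
open Real

lemma no_two_crossings (f f' : ℝ → ℝ) (c x y : ℝ) (hxy : x < y)
    (hf : ∀ t ∈ Set.Icc x y, HasDerivAt f (f' t) t)
    (hneg : ∀ t ∈ Set.Icc x y, f t = c → f' t < 0) (hx : f x = c) (hy : f y = c) : False := by
  have hle : ∀ ⦃t⦄, t ∈ Set.Icc x y → f t ≤ c :=
    image_le_of_deriv_right_lt_deriv_boundary (f := f) (f' := f') (B := fun _ => c)
      (B' := fun _ => 0)
      (fun t ht => (hf t ht).continuousAt.continuousWithinAt)
      (fun t ht => (hf t (Set.Ico_subset_Icc_self ht)).hasDerivWithinAt)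
      hx.le (fun t => hasDerivAt_const t c)
      (fun t ht h => hneg t (Set.Ico_subset_Icc_self ht) h)
  have hyy : y ∈ Set.Icc x y := ⟨hxy.le, le_rfl⟩
  have h1 := hasDerivAt_iff_tendsto_slope.1 (hf y hyy)
  have h2 := h1.mono_left (nhdsWithin_mono y (fun z (hz : z ∈ Set.Iio y) => ne_of_lt hz))
  have h3 : 0 ≤ f' y := by
    refine ge_of_tendsto h2 ?_
    filter_upwards [Ioo_mem_nhdsLT hxy] with z hz
    have h4 := hle ⟨hz.1.le, hz.2.le⟩
    rw [slope_def_field]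
    exact div_nonneg_of_nonpos (by linarith) (by linarith [hz.2])
  exact absurd (hneg y hyy hy) (not_lt.2 h3)

/-- A solution of the transformed system staying below the diagonal (`s ≥ 0`, `r > s`)
with `φ ∈ (−π, 0)` passes through the angle `−π/2` at most once. -/
theorem at_most_one_critical_time
    (lam : ℝ) (hlam : lam < 0) (n : ℕ) (hn : 2 ≤ n)
    (a b : ℝ) (r s φ : ℝ → ℝ)
    (hr : ∀ t ∈ Set.Icc a b, HasDerivAt r (Real.sin (φ t)) t)
    (hs : ∀ t ∈ Set.Icc a b, HasDerivAt s (Real.cos (φ t)) t)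
    (hφ : ∀ t ∈ Set.Icc a b, HasDerivAt φ
      ((-(r t) / 2 + 2 * ((n : ℝ) - 1) * r t / ((r t) ^ 2 - (s t) ^ 2)) * Real.cos (φ t) +
        (s t / 2 + 2 * ((n : ℝ) - 1) * s t / ((r t) ^ 2 - (s t) ^ 2)) * Real.sin (φ t) +
        lam) t)
    (hsnn : ∀ t ∈ Set.Icc a b, 0 ≤ s t)
    (hrs : ∀ t ∈ Set.Icc a b, s t < r t)
    (hφrange : ∀ t ∈ Set.Icc a b, φ t ∈ Set.Ioo (-π) 0) :
    ∀ t₁ ∈ Set.Icc a b, ∀ t₂ ∈ Set.Icc a b,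
      φ t₁ = -(π / 2) → φ t₂ = -(π / 2) → t₁ = t₂ := by
  have key : ∀ x ∈ Set.Icc a b, ∀ y ∈ Set.Icc a b, φ x = -(π / 2) → φ y = -(π / 2) →
      ¬ x < y := by
    intro x hx y hy hpx hpy hxy
    have hsub : Set.Icc x y ⊆ Set.Icc a b := Set.Icc_subset_Icc hx.1 hy.2
    refine no_two_crossings φ _ _ x y hxy (fun t ht => hφ t (hsub ht)) ?_ hpx hpy
    intro t ht h
    have h0 := hsnn t (hsub ht)
    have h1 := hrs t (hsub ht)
    have h2 : 0 < (r t) ^ 2 - (s t) ^ 2 := by nlinarith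
    have h3 : (0 : ℝ) ≤ (n : ℝ) - 1 := by
      have : (2 : ℝ) ≤ n := by exact_mod_cast hn
      linarith
    have h4 : 0 ≤ 2 * ((n : ℝ) - 1) * s t / ((r t) ^ 2 - (s t) ^ 2) := by positivity
    simp only [h, Real.cos_neg, Real.sin_neg, Real.cos_pi_div_two, Real.sin_pi_div_two]
    linarith
  intro x hx y hy hpx hpy
  exact le_antisymm (not_lt.1 (key y hy x hx hpy hpx)) (not_lt.1 (key x hx y hy hpx hpy))
end

section
/- Let λ < 0 and n ≥ 2 be an integer. There exists R₀ > 0 such that for every R ≥ R₀ the following holds: if (r, s, φ) is a solution of the transformed system on a right-maximal interval [0, T) (0 < T ≤ ∞, i.e. the solution cannot be extended as a solution of the transformed system, with r² > s², to any strictly larger interval [0, T')) with initial conditions r(0) = R, s(0) = 0, φ(0) = 0, then there exists t ∈ (0, T) with φ(t) = −π/2 and φ(τ) ∈ (−π/2, 0] for all τ ∈ [0, t). -/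
open Real

/-- `TransSol lam n r s φ J` says that `(r, s, φ)` solves the transformed system of ODEs
on the set `J`, staying in the region `r² > s²`. -/
def TransSol (lam : ℝ) (n : ℕ) (r s φ : ℝ → ℝ) (J : Set ℝ) : Prop :=
  ∀ t ∈ J, (s t) ^ 2 < (r t) ^ 2 ∧
    HasDerivAt r (Real.sin (φ t)) t ∧
    HasDerivAt s (Real.cos (φ t)) t ∧
    HasDerivAt φ
      ((-(r t) / 2 + 2 * ((n : ℝ) - 1) * r t / ((r t) ^ 2 - (s t) ^ 2)) * Real.cos (φ t) +
        (s t / 2 + 2 * ((n : ℝ) - 1) * s t / ((r t) ^ 2 - (s t) ^ 2)) * Real.sin (φ t) +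
        lam) t

/-- Continuation of a solution of an autonomous ODE past a time at which it has a limit. -/
lemma ode_extend {E : Type*} [NormedAddCommGroup E] [NormedSpace ℝ E] [CompleteSpace E]
    (F : E → E) (f : ℝ → E) (T : ℝ) (p : E) (hT : 0 < T)
    (hf : ∀ t ∈ Set.Ico 0 T, HasDerivAt f (F (f t)) t)
    (hlim : Filter.Tendsto f (nhdsWithin T (Set.Iio T)) (nhds p))
    (hF : ContDiffAt ℝ 1 F p) (U : Set E) (hU : U ∈ nhds p) :
    ∃ T' : ℝ, T < T' ∧ ∃ g : ℝ → E, (∀ t < T, g t = f t) ∧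
      ∀ t ∈ Set.Ico 0 T', HasDerivAt g (F (g t)) t ∧ (T ≤ t → g t ∈ U) := by
  obtain ⟨α, hα0, ε, hε, hα⟩ :=
    hF.exists_forall_mem_closedBall_exists_eq_forall_mem_Ioo_hasDerivAt₀ T
  have hαc : ContinuousAt α T := (hα T ⟨by linarith, by linarith⟩).continuousAt
  have hUe : ∀ᶠ t in nhds T, α t ∈ U := hαc (by rw [hα0]; exact hU)
  obtain ⟨δ, hδ, hδU⟩ := Metric.eventually_nhds_iff.1 hUe
  let g : ℝ → E := fun t => if t < T then f t else α t
  have g1 : ∀ t < T, g t = f t := fun t ht => if_pos ht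
  have g2 : ∀ t, T ≤ t → g t = α t := fun t ht => if_neg (not_lt.2 ht)
  have gd1 : ∀ t ∈ Set.Ico 0 T, HasDerivAt g (F (g t)) t := by
    intro t ht
    rw [g1 t ht.2]
    refine (hf t ht).congr_of_eventuallyEq ?_
    filter_upwards [Iio_mem_nhds ht.2] with x hx using g1 x hx
  have gT : g T = p := by rw [g2 T le_rfl, hα0]
  have glim : Filter.Tendsto g (nhdsWithin T (Set.Iio T)) (nhds p) := by
    refine hlim.congr' ?_
    filter_upwards [self_mem_nhdsWithin] with x hx using (g1 x hx).symm
  have hIoo : Set.Ioo 0 T ∈ nhdsWithin T (Set.Iio T) := Ioo_mem_nhdsLT hT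
  have gL : HasDerivWithinAt g (F (g T)) (Set.Iic T) T := by
    refine hasDerivWithinAt_Iic_of_tendsto_deriv (s := Set.Ioo 0 T) ?_ ?_ hIoo ?_
    · intro t ht
      exact (gd1 t ⟨ht.1.le, ht.2⟩).differentiableAt.differentiableWithinAt
    · rw [ContinuousWithinAt, gT]
      exact glim.mono_left (nhdsWithin_mono _ Set.Ioo_subset_Iio_self)
    · rw [gT]
      refine (hF.continuousAt.tendsto.comp glim).congr' ?_
      filter_upwards [hIoo] with t ht
      exact (gd1 t ⟨ht.1.le, ht.2⟩).deriv.symm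
  have gR : HasDerivWithinAt g (F (g T)) (Set.Ici T) T := by
    have := (hα T ⟨by linarith, by linarith⟩).hasDerivWithinAt (s := Set.Ici T)
    rw [g2 T le_rfl]
    exact this.congr (fun x hx => g2 x hx) (g2 T le_rfl)
  have gTd : HasDerivAt g (F (g T)) T := by
    have := gL.union gR
    simpa using this
  refine ⟨T + min ε δ, by have := lt_min hε hδ; linarith, g, g1, ?_⟩
  intro t ht
  have h1 := min_le_left ε δ
  have h2 := min_le_right ε δ
  refine ⟨?_, ?_⟩
  · rcases lt_trichotomy t T with h | h | h
    · exact gd1 t ⟨ht.1, h⟩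
    · rw [h]; exact gTd
    · rw [g2 t h.le]
      refine (hα t ⟨by linarith, by linarith [ht.2]⟩).congr_of_eventuallyEq ?_
      filter_upwards [Ioi_mem_nhds h] with x hx using g2 x (le_of_lt hx)
  · intro h
    rw [g2 t h]
    apply hδU
    rw [Real.dist_eq, abs_lt]
    constructor <;> linarith [ht.2]

/-- Lower bound from a derivative bound. -/
lemma le_of_deriv_ge {f f' : ℝ → ℝ} {b C : ℝ} (hb : 0 ≤ b)
    (hf : ∀ t ∈ Set.Icc 0 b, HasDerivAt f (f' t) t)
    (hC : ∀ t ∈ Set.Icc 0 b, C ≤ f' t) : C * b ≤ f b - f 0 := by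
  have := (convex_Icc 0 b).mul_sub_le_image_sub_of_le_deriv (f := f) (C := C)
    (fun t ht => (hf t ht).continuousAt.continuousWithinAt)
    (fun t ht => (hf t (interior_subset ht)).differentiableAt.differentiableWithinAt)
    (fun t ht => by rw [(hf t (interior_subset ht)).deriv]; exact hC t (interior_subset ht))
    0 ⟨le_rfl, hb⟩ b ⟨hb, le_rfl⟩ hb
  simpa using this

/-- Upper bound from a derivative bound. -/
lemma le_of_deriv_le {f f' : ℝ → ℝ} {b C : ℝ} (hb : 0 ≤ b)
    (hf : ∀ t ∈ Set.Icc 0 b, HasDerivAt f (f' t) t)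
    (hC : ∀ t ∈ Set.Icc 0 b, f' t ≤ C) : f b - f 0 ≤ C * b := by
  have := le_of_deriv_ge (f := fun t => -f t) (f' := fun t => -f' t) (C := -C) hb
    (fun t ht => (hf t ht).neg) (fun t ht => neg_le_neg (hC t ht))
  linarith

/-- First hitting time of the level `-(π/2)`. -/
lemma first_hit {φ : ℝ → ℝ} {b : ℝ} (hb : 0 ≤ b) (h0 : φ 0 = 0)
    (hc : ContinuousOn φ (Set.Icc 0 b)) (hφb : φ b ≤ -(π / 2)) :
    ∃ t, 0 < t ∧ t ≤ b ∧ φ t = -(π / 2) ∧ ∀ τ, 0 ≤ τ → τ < t → -(π / 2) < φ τ := by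
  have hpi := Real.pi_pos
  have key : ∀ c ∈ Set.Icc 0 b, φ c ≤ -(π / 2) → ∃ t ∈ Set.Icc 0 c, φ t = -(π / 2) := by
    intro c hcb hφc
    have := intermediate_value_Icc' hcb.1 (hc.mono (Set.Icc_subset_Icc_right hcb.2))
    exact this ⟨hφc, by rw [h0]; linarith⟩
  let S : Set ℝ := Set.Icc 0 b ∩ φ ⁻¹' {-(π / 2)}
  have hScl : IsClosed S := hc.preimage_isClosed_of_isClosed isClosed_Icc isClosed_singleton
  have hScomp : IsCompact S := isCompact_Icc.of_isClosed_subset hScl Set.inter_subset_left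
  have hSne : S.Nonempty := by
    obtain ⟨t, ht, h⟩ := key b ⟨hb, le_rfl⟩ hφb
    exact ⟨t, ht, h⟩
  obtain ⟨t, ⟨htb, htφ⟩, hmin⟩ := hScomp.exists_isLeast hSne
  have htφ' : φ t = -(π / 2) := htφ
  refine ⟨t, ?_, htb.2, htφ', ?_⟩
  · rcases htb.1.eq_or_lt with h | h
    · rw [← h, h0] at htφ'; linarith
    · exact h
  · intro τ h1 h2
    by_contra hcon
    obtain ⟨u, hu, huφ⟩ := key τ ⟨h1, by linarith [htb.2]⟩ (not_lt.1 hcon)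
    have : t ≤ u := hmin ⟨⟨hu.1, by linarith [hu.2, htb.2]⟩, huφ⟩
    linarith [hu.2]

/-- A solution with bounded time and monotone components, staying away from the boundary,
extends. -/
lemma transSol_extend (lam : ℝ) (n : ℕ) (r s φ : ℝ → ℝ) (T a b c : ℝ) (hT : 0 < T)
    (h : TransSol lam n r s φ (Set.Ico 0 T))
    (hr : Filter.Tendsto r (nhdsWithin T (Set.Iio T)) (nhds a))
    (hs : Filter.Tendsto s (nhdsWithin T (Set.Iio T)) (nhds b))
    (hφ : Filter.Tendsto φ (nhdsWithin T (Set.Iio T)) (nhds c))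
    (hab : b ^ 2 < a ^ 2) :
    ∃ T' : ℝ, T < T' ∧ ∃ r' s' φ' : ℝ → ℝ,
      (∀ u ∈ Set.Ico 0 T, r' u = r u ∧ s' u = s u ∧ φ' u = φ u) ∧
      TransSol lam n r' s' φ' (Set.Ico 0 T') := by
  let F : ℝ × ℝ × ℝ → ℝ × ℝ × ℝ := fun x => (Real.sin x.2.2, Real.cos x.2.2,
    (-x.1 / 2 + 2 * ((n : ℝ) - 1) * x.1 / (x.1 ^ 2 - x.2.1 ^ 2)) * Real.cos x.2.2 +
        (x.2.1 / 2 + 2 * ((n : ℝ) - 1) * x.2.1 / (x.1 ^ 2 - x.2.1 ^ 2)) * Real.sin x.2.2 + lam)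
  have hne : a ^ 2 - b ^ 2 ≠ 0 := by linarith
  have hF : ContDiffAt ℝ 1 F (a, b, c) := by
    have e1 : ContDiffAt ℝ 1 (fun x : ℝ × ℝ × ℝ => x.1) (a, b, c) := by fun_prop
    have e2 : ContDiffAt ℝ 1 (fun x : ℝ × ℝ × ℝ => x.2.1) (a, b, c) := by fun_prop
    have e3 : ContDiffAt ℝ 1 (fun x : ℝ × ℝ × ℝ => x.2.2) (a, b, c) := by fun_prop
    have d : ContDiffAt ℝ 1 (fun x : ℝ × ℝ × ℝ => x.1 ^ 2 - x.2.1 ^ 2) (a, b, c) :=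
      (e1.pow 2).sub (e2.pow 2)
    exact e3.sin.prodMk (e3.cos.prodMk
      (((((e1.neg.div_const 2).add ((contDiffAt_const.mul e1).div d hne)).mul e3.cos).add
        (((e2.div_const 2).add ((contDiffAt_const.mul e2).div d hne)).mul e3.sin)).add
          contDiffAt_const))
  have hU : {x : ℝ × ℝ × ℝ | x.2.1 ^ 2 < x.1 ^ 2} ∈ nhds (a, b, c) :=
    (isOpen_lt (by fun_prop) (by fun_prop)).mem_nhds hab
  obtain ⟨T', hT', g, hg1, hg2⟩ := ode_extend F (fun t => (r t, s t, φ t)) T (a, b, c) hT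
    (fun t ht => (h t ht).2.1.prodMk ((h t ht).2.2.1.prodMk (h t ht).2.2.2))
    (hr.prodMk_nhds (hs.prodMk_nhds hφ)) hF _ hU
  refine ⟨T', hT', fun t => (g t).1, fun t => (g t).2.1, fun t => (g t).2.2, ?_, ?_⟩
  · intro u hu
    simp [hg1 u hu.2]
  · intro t ht
    obtain ⟨hd, hm⟩ := hg2 t ht
    refine ⟨?_, ?_, ?_, ?_⟩
    · rcases lt_or_ge t T with h' | h'
      · simpa [hg1 t h'] using (h t ⟨ht.1, h'⟩).1
      · exact hm h'
    · exact hd.fst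
    · exact hd.snd.fst
    · exact hd.snd.snd

/-- A priori bounds, valid for all times `≤ L`. -/
lemma apriori (lam : ℝ) (hlam : lam < 0) (n : ℕ) (hn : 2 ≤ n) (L R : ℝ) (hL : 0 < L)
    (hR : 2 * L + 4 * ((n : ℝ) - 1) + 1 ≤ R) (r s φ : ℝ → ℝ) (b : ℝ) (hb : 0 ≤ b) (hbL : b ≤ L)
    (h : TransSol lam n r s φ (Set.Icc 0 b)) (hr0 : r 0 = R) (hs0 : s 0 = 0) (hφ0 : φ 0 = 0) :
    R - L ≤ r b ∧ r b ≤ R + L ∧ -L ≤ s b ∧ s b ≤ L ∧ φ b ≤ 0 ∧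
    ((∀ t ∈ Set.Icc 0 b, -(π / 2) ≤ φ t) → 0 ≤ s b ∧ φ b ≤ lam * b ∧
      ((-(r b) / 2 + 2 * ((n : ℝ) - 1) * r b / ((r b) ^ 2 - (s b) ^ 2)) * Real.cos (φ b) +
        (s b / 2 + 2 * ((n : ℝ) - 1) * s b / ((r b) ^ 2 - (s b) ^ 2)) * Real.sin (φ b) +
        lam) ≤ lam) := by
  have hn' : (2 : ℝ) ≤ n := by exact_mod_cast hn
  set m : ℝ := 2 * ((n : ℝ) - 1) with hm
  have hm2 : 2 ≤ m := by linarith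
  have sub : ∀ t ∈ Set.Icc 0 b, ∀ u ∈ Set.Icc 0 t, u ∈ Set.Icc 0 b :=
    fun t ht u hu => ⟨hu.1, hu.2.trans ht.2⟩
  have B : ∀ t ∈ Set.Icc 0 b, R - L ≤ r t ∧ r t ≤ R + L ∧ -L ≤ s t ∧ s t ≤ L := by
    intro t ht
    have r1 := le_of_deriv_ge (f := r) (C := -1) ht.1 (fun u hu => (h u (sub t ht u hu)).2.1)
      (fun u _ => Real.neg_one_le_sin _)
    have r2 := le_of_deriv_le (f := r) (C := 1) ht.1 (fun u hu => (h u (sub t ht u hu)).2.1)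
      (fun u _ => Real.sin_le_one _)
    have s1 := le_of_deriv_ge (f := s) (C := -1) ht.1 (fun u hu => (h u (sub t ht u hu)).2.2.1)
      (fun u _ => Real.neg_one_le_cos _)
    have s2 := le_of_deriv_le (f := s) (C := 1) ht.1 (fun u hu => (h u (sub t ht u hu)).2.2.1)
      (fun u _ => Real.cos_le_one _)
    have := ht.2
    refine ⟨?_, ?_, ?_, ?_⟩ <;> linarith
  have A : ∀ t ∈ Set.Icc 0 b, -(r t) / 2 + m * r t / ((r t) ^ 2 - (s t) ^ 2) ≤ 0 := by
    intro t ht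
    obtain ⟨h1, h2, h3, h4⟩ := B t ht
    have hrpos : 0 < r t := by linarith
    have hs2 : (s t) ^ 2 ≤ L ^ 2 := sq_le_sq' h3 h4
    have hr2 : (L + 2 * m + 1) ^ 2 ≤ (r t) ^ 2 := pow_le_pow_left₀ (by linarith) (by linarith) 2
    have hD : 2 * m ≤ (r t) ^ 2 - (s t) ^ 2 := by nlinarith
    have : m * r t / ((r t) ^ 2 - (s t) ^ 2) ≤ r t / 2 := by
      rw [div_le_iff₀ (by linarith)]
      nlinarith
    linarith
  have hφc : ContinuousOn φ (Set.Icc 0 b) :=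
    fun t ht => (h t ht).2.2.2.continuousAt.continuousWithinAt
  have P : ∀ t ∈ Set.Icc 0 b, φ t ≤ 0 := by
    refine image_le_of_deriv_right_lt_deriv_boundary' (f := φ) (B := fun _ => 0)
      (B' := fun _ => 0) hφc
      (fun t ht => (h t ⟨ht.1, ht.2.le⟩).2.2.2.hasDerivWithinAt) hφ0.le continuousOn_const
      (fun t _ => hasDerivWithinAt_const _ _ _) ?_
    intro t ht h0
    have hA := A t ⟨ht.1, ht.2.le⟩
    rw [h0, Real.cos_zero, Real.sin_zero]
    linarith
  have hbm : b ∈ Set.Icc 0 b := ⟨hb, le_rfl⟩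
  obtain ⟨h1, h2, h3, h4⟩ := B b hbm
  refine ⟨h1, h2, h3, h4, P b hbm, ?_⟩
  intro hlow
  have hpi := Real.pi_pos
  have C : ∀ t ∈ Set.Icc 0 b, 0 ≤ Real.cos (φ t) := fun t ht =>
    Real.cos_nonneg_of_neg_pi_div_two_le_of_le (by have := hlow t ht; linarith)
      (by have := P t ht; linarith)
  have S : ∀ t ∈ Set.Icc 0 b, 0 ≤ s t := by
    intro t ht
    have s1 := le_of_deriv_ge (f := s) (C := 0) ht.1 (fun u hu => (h u (sub t ht u hu)).2.2.1)
      (fun u hu => C u (sub t ht u hu))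
    linarith
  have D : ∀ t ∈ Set.Icc 0 b,
      (-(r t) / 2 + m * r t / ((r t) ^ 2 - (s t) ^ 2)) * Real.cos (φ t) +
        (s t / 2 + m * s t / ((r t) ^ 2 - (s t) ^ 2)) * Real.sin (φ t) + lam ≤ lam := by
    intro t ht
    have e1 := mul_nonpos_of_nonpos_of_nonneg (A t ht) (C t ht)
    have e2 : Real.sin (φ t) ≤ 0 := Real.sin_nonpos_of_nonpos_of_neg_pi_le (P t ht)
      (by have := hlow t ht; linarith)
    have e3 : 0 ≤ s t / 2 + m * s t / ((r t) ^ 2 - (s t) ^ 2) := by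
      have := S t ht
      have hp : 0 ≤ (r t) ^ 2 - (s t) ^ 2 := by linarith [(h t ht).1]
      have : 0 ≤ m * s t := by positivity
      positivity
    have e4 := mul_nonpos_of_nonneg_of_nonpos e3 e2
    linarith
  refine ⟨S b hbm, ?_, D b hbm⟩
  have := le_of_deriv_le (f := φ) (C := lam) hb (fun u hu => (h u hu).2.2.2) D
  linarith

/-- For all sufficiently large `R`, the solution of the transformed system launched from
`r(0) = R`, `s(0) = 0`, `φ(0) = 0` on its right-maximal interval of existence `[0, T)`
(with `0 < T ≤ ∞`) reaches the angle `φ = −π/2` at some first time, with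
`φ ∈ (−π/2, 0]` beforehand. -/
theorem reaches_vertical_angle_for_large_R
    (lam : ℝ) (hlam : lam < 0) (n : ℕ) (hn : 2 ≤ n) :
    ∃ R₀ : ℝ, 0 < R₀ ∧
      ∀ R : ℝ, R₀ ≤ R →
        ∀ (r s φ : ℝ → ℝ) (J : Set ℝ),
          TransSol lam n r s φ J →
          r 0 = R → s 0 = 0 → φ 0 = 0 →
          (J = Set.Ici (0 : ℝ) ∨
            ∃ T : ℝ, 0 < T ∧ J = Set.Ico (0 : ℝ) T ∧
              ∀ T' : ℝ, T < T' →
                ¬ ∃ r' s' φ' : ℝ → ℝ,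
                    (∀ u ∈ J, r' u = r u ∧ s' u = s u ∧ φ' u = φ u) ∧
                    TransSol lam n r' s' φ' (Set.Ico (0 : ℝ) T')) →
          ∃ t : ℝ, t ∈ J ∧ 0 < t ∧ φ t = -(π / 2) ∧
            ∀ τ : ℝ, 0 ≤ τ → τ < t → -(π / 2) < φ τ ∧ φ τ ≤ 0 := by
  have hpi := Real.pi_pos
  have hn' : (2 : ℝ) ≤ n := by exact_mod_cast hn
  set L : ℝ := π / 2 / (-lam) with hLdef
  have hL : 0 < L := by
    have : 0 < -lam := by linarith
    positivity
  have hlamL : lam * L = -(π / 2) := by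
    have hl0 : lam ≠ 0 := hlam.ne
    rw [hLdef]; field_simp
  refine ⟨2 * L + 4 * ((n : ℝ) - 1) + 1, by linarith, ?_⟩
  intro R hR r s φ J hsol hr0 hs0 hφ0 hJ
  have hJI : ∀ t ∈ J, 0 ≤ t ∧ Set.Icc 0 t ⊆ J := by
    rcases hJ with rfl | ⟨T, hT, rfl, -⟩
    · exact fun t ht => ⟨ht, fun u hu => hu.1⟩
    · exact fun t ht => ⟨ht.1, fun u hu => ⟨hu.1, hu.2.trans_lt ht.2⟩⟩
  have ap : ∀ t ∈ J, t ≤ L → _ := fun t ht htL =>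
    apriori lam hlam n hn L R hL hR r s φ t (hJI t ht).1 htL
      (fun u hu => hsol u ((hJI t ht).2 hu)) hr0 hs0 hφ0
  suffices hex : ∃ b ∈ J, b ≤ L ∧ φ b ≤ -(π / 2) by
    obtain ⟨b, hbJ, hbL, hφb⟩ := hex
    obtain ⟨hb0, hsub⟩ := hJI b hbJ
    obtain ⟨t, ht0, htb, htφ, hτ⟩ := first_hit hb0 hφ0
      (fun u hu => (hsol u (hsub hu)).2.2.2.continuousAt.continuousWithinAt) hφb
    refine ⟨t, hsub ⟨ht0.le, htb⟩, ht0, htφ, fun τ h1 h2 => ⟨hτ τ h1 h2, ?_⟩⟩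
    exact (ap τ (hsub ⟨h1, by linarith⟩) (by linarith)).2.2.2.2.1
  by_contra hno
  push Not at hno
  have low : ∀ t ∈ J, t ≤ L → ∀ u ∈ Set.Icc 0 t, -(π / 2) ≤ φ u := fun t ht htL u hu =>
    (hno u ((hJI t ht).2 hu) (hu.2.trans htL)).le
  have hLJ : L ∉ J := by
    intro hLJ
    have h1 := ((ap L hLJ le_rfl).2.2.2.2.2 (low L hLJ le_rfl)).2.1
    have h2 := hno L hLJ le_rfl
    linarith
  rcases hJ with rfl | ⟨T, hT, rfl, hmax⟩
  · exact hLJ hL.le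
  have hTL : T ≤ L := by
    by_contra hc
    exact hLJ ⟨hL.le, not_le.1 hc⟩
  have hne : (Set.Ioo 0 T).Nonempty := Set.nonempty_Ioo.2 hT
  have inJ : ∀ t ∈ Set.Ioo 0 T, t ∈ Set.Ico 0 T := fun t ht => ⟨ht.1.le, ht.2⟩
  have apT : ∀ t ∈ Set.Ioo 0 T, _ := fun t ht => ap t (inJ t ht) (ht.2.le.trans hTL)
  have ap2 : ∀ t ∈ Set.Ioo 0 T, _ := fun t ht =>
    (apT t ht).2.2.2.2.2 (low t (inJ t ht) (ht.2.le.trans hTL))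
  have lowT : ∀ t ∈ Set.Ioo 0 T, -(π / 2) ≤ φ t := fun t ht =>
    (hno t (inJ t ht) (ht.2.le.trans hTL)).le
  have mono : ∀ f f' : ℝ → ℝ, (∀ t ∈ Set.Ioo 0 T, HasDerivAt f (f' t) t) →
      (∀ t ∈ Set.Ioo 0 T, 0 ≤ f' t) → MonotoneOn f (Set.Ioo 0 T) := by
    intro f f' hf hf'
    refine monotoneOn_of_hasDerivWithinAt_nonneg (f' := f') (convex_Ioo 0 T)
      (fun t ht => (hf t ht).continuousAt.continuousWithinAt) ?_ ?_
    · intro t ht; exact (hf t (interior_subset ht)).hasDerivWithinAt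
    · intro t ht; exact hf' t (interior_subset ht)
  have anti : ∀ f f' : ℝ → ℝ, (∀ t ∈ Set.Ioo 0 T, HasDerivAt f (f' t) t) →
      (∀ t ∈ Set.Ioo 0 T, f' t ≤ 0) → AntitoneOn f (Set.Ioo 0 T) := by
    intro f f' hf hf' x hx y hy hxy
    have := mono (fun t => -f t) (fun t => -f' t) (fun t ht => (hf t ht).neg)
      (fun t ht => by have := hf' t ht; linarith) hx hy hxy
    simpa using this
  have hrl := (anti r _ (fun t ht => (hsol t (inJ t ht)).2.1) (fun t ht =>
    Real.sin_nonpos_of_nonpos_of_neg_pi_le (apT t ht).2.2.2.2.1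
      (by have := lowT t ht; linarith))).tendsto_nhdsWithin_Ioo_left hne
    ⟨R - L, by rintro _ ⟨t, ht, rfl⟩; exact (apT t ht).1⟩
  have hsl := (mono s _ (fun t ht => (hsol t (inJ t ht)).2.2.1) (fun t ht =>
    Real.cos_nonneg_of_neg_pi_div_two_le_of_le (by have := lowT t ht; linarith)
      (by have := (apT t ht).2.2.2.2.1; linarith))).tendsto_nhdsWithin_Ioo_left hne
    ⟨L, by rintro _ ⟨t, ht, rfl⟩; exact (apT t ht).2.2.2.1⟩
  have hφl := (anti φ _ (fun t ht => (hsol t (inJ t ht)).2.2.2) (fun t ht =>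
    (ap2 t ht).2.2.trans hlam.le)).tendsto_nhdsWithin_Ioo_left hne
    ⟨-(π / 2), by rintro _ ⟨t, ht, rfl⟩; exact lowT t ht⟩
  have hIoo : Set.Ioo 0 T ∈ nhdsWithin T (Set.Iio T) := Ioo_mem_nhdsLT hT
  have ha := ge_of_tendsto hrl (Filter.mem_of_superset hIoo fun t ht => (apT t ht).1)
  have hb1 := le_of_tendsto hsl (Filter.mem_of_superset hIoo fun t ht => (apT t ht).2.2.2.1)
  have hb2 := ge_of_tendsto hsl (Filter.mem_of_superset hIoo fun t ht => (apT t ht).2.2.1)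
  obtain ⟨T', hT', r', s', φ', hext⟩ := transSol_extend lam n r s φ T _ _ _ hT hsol hrl hsl hφl
    (sq_lt_sq' (by linarith) (by linarith))
  exact hmax T' hT' ⟨r', s', φ', hext⟩
end

section
/- Let λ < 0 and n ≥ 2 be an integer. There exists R₀ > 0 such that for every R ≥ R₀ the following holds: if (r, s, φ) is a solution of the transformed system on a right-maximal interval [0, T) (i.e. the solution cannot be extended as a solution of the transformed system, with r² > s², to any strictly larger interval) with initial conditions r(0) = R, s(0) = 0, φ(0) = 0, then there exists a time T₁ ∈ (0, T) with s(T₁) = 0, s(t) > 0 for all t ∈ (0, T₁), and φ(t) ∈ (−π, 0) for all t ∈ (0, T₁]; that is, for all sufficiently large R the solution launched perpendicularly from the diagonal returns to the diagonal before its inclination angle reaches −π. -/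
open Real

open Set Filter Topology

/-- The angular component of the transformed vector field. -/
noncomputable def Phi (lam : ℝ) (n : ℕ) (r s φ : ℝ) : ℝ :=
  (-r / 2 + 2 * ((n : ℝ) - 1) * r / (r ^ 2 - s ^ 2)) * Real.cos φ +
        (s / 2 + 2 * ((n : ℝ) - 1) * s / (r ^ 2 - s ^ 2)) * Real.sin φ + lam

lemma barrier {f f' : ℝ → ℝ} {b : ℝ} (hf : ∀ t ∈ Icc 0 b, HasDerivAt f (f' t) t)
    (h0 : f 0 ≤ 0) (h : ∀ t ∈ Icc 0 b, f t = 0 → f' t < 0) :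
    ∀ t, 0 < t → t ≤ b → f t < 0 := by
  have hle : ∀ ⦃x⦄, x ∈ Icc 0 b → f x ≤ 0 := by
    apply image_le_of_deriv_right_lt_deriv_boundary' (f' := f') (B := fun _ => 0) (B' := fun _ => 0)
    · exact fun t ht => (hf t ht).continuousAt.continuousWithinAt
    · exact fun t ht => (hf t (Ico_subset_Icc_self ht)).hasDerivWithinAt
    · exact h0
    · exact continuousOn_const
    · exact fun t ht => hasDerivWithinAt_const _ _ _
    · exact fun t ht e => h t (Ico_subset_Icc_self ht) e
  intro t ht htb
  rcases lt_or_eq_of_le (hle ⟨ht.le, htb⟩) with h1 | h1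
  · exact h1
  exfalso
  have hd := hf t ⟨ht.le, htb⟩
  have hneg := h t ⟨ht.le, htb⟩ h1
  have hs := (hd.tendsto_slope.mono_left (nhdsWithin_mono (s := Iio t) t (fun x hx => ne_of_lt hx)))
  have ev := hs.eventually (gt_mem_nhds hneg)
  have ev2 : ∀ᶠ x in 𝓝[<] t, 0 < x :=
    (lt_mem_nhds ht).filter_mono nhdsWithin_le_nhds
  have ev3 : ∀ᶠ x in 𝓝[<] t, x < t := self_mem_nhdsWithin
  obtain ⟨x, hx1, hx2, hx3⟩ := (ev.and (ev2.and ev3)).exists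
  have h5 := hle ⟨hx2.le, hx3.le.trans htb⟩
  rw [slope_def_field, h1] at hx1
  have : 0 ≤ (f x - 0) / (x - t) := div_nonneg_of_nonpos (by linarith) (by linarith)
  linarith

lemma lim_exists {f f' : ℝ → ℝ} {T C : ℝ} (hT : 0 < T)
    (hf : ∀ t ∈ Ico 0 T, HasDerivAt f (f' t) t) (hC : ∀ t ∈ Ico 0 T, |f' t| ≤ C) :
    ∃ l, Tendsto f (𝓝[<] T) (𝓝 l) := by
  have hC0 : 0 ≤ C := (abs_nonneg _).trans (hC 0 ⟨le_rfl, hT⟩)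
  have hl : LipschitzOnWith C.toNNReal f (Ico 0 T) := by
    apply (convex_Ico 0 T).lipschitzOnWith_of_nnnorm_hasDerivWithin_le (f' := f')
    · exact fun t ht => (hf t ht).hasDerivWithinAt
    · intro t ht
      rw [← NNReal.coe_le_coe, Real.coe_toNNReal C hC0]
      exact hC t ht
  obtain ⟨g, hg, hfg⟩ := hl.extend_real
  refine ⟨g T, ?_⟩
  have h1 : Tendsto g (𝓝[<] T) (𝓝 (g T)) := hg.continuous.continuousAt.mono_left nhdsWithin_le_nhds
  refine h1.congr' ?_
  filter_upwards [Ico_mem_nhdsLT hT] with x hx using (hfg hx).symm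

lemma glue {f f' g : ℝ → ℝ} {T c : ℝ} (hT : 0 < T)
    (hf : ∀ t ∈ Ico 0 T, HasDerivAt f (f' t) t)
    (hlim : Tendsto f (𝓝[<] T) (𝓝 (g T))) (hlim' : Tendsto f' (𝓝[<] T) (𝓝 c))
    (hg : HasDerivAt g c T) : HasDerivAt (fun t => if t < T then f t else g t) c T := by
  set F : ℝ → ℝ := fun t => if t < T then f t else g t with hF
  have hFl : ∀ t ∈ Ico 0 T, HasDerivAt F (f' t) t := by
    intro t ht
    refine (hf t ht).congr_of_eventuallyEq ?_
    filter_upwards [gt_mem_nhds ht.2] with x hx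
    simp [hF, hx]
  have hFT : F T = g T := by simp [hF]
  have hL : HasDerivWithinAt F c (Iic T) T := by
    apply hasDerivWithinAt_Iic_of_tendsto_deriv (s := Ico 0 T)
    · exact fun t ht => (hFl t ht).differentiableAt.differentiableWithinAt
    · rw [ContinuousWithinAt, hFT]
      refine (hlim.mono_left (nhdsWithin_mono _ (fun x hx => hx.2))).congr' ?_
      filter_upwards [self_mem_nhdsWithin] with x hx
      simp [hF, hx.2]
    · exact Ico_mem_nhdsLT hT
    · refine hlim'.congr' ?_
      filter_upwards [Ico_mem_nhdsLT hT] with x hx using (hFl x hx).deriv.symm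
  have hR : HasDerivWithinAt F c (Ici T) T := by
    refine hg.hasDerivWithinAt.congr ?_ hFT
    intro x hx
    have hx' : T ≤ x := hx
    simp [hF, not_lt.2 hx']
  have := hL.union hR
  rwa [Iic_union_Ici, hasDerivWithinAt_univ] at this

set_option maxHeartbeats 1600000 in
lemma extend {lam : ℝ} {n : ℕ} {r s φ : ℝ → ℝ} {T C d : ℝ} (hT : 0 < T) (hd : 0 < d)
    (h : TransSol lam n r s φ (Ico 0 T))
    (hC : ∀ t ∈ Ico 0 T, |Phi lam n (r t) (s t) (φ t)| ≤ C)
    (hD : ∀ t ∈ Ico 0 T, d ≤ r t ^ 2 - s t ^ 2) :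
    ∃ T' > T, ∃ r' s' φ' : ℝ → ℝ,
      (∀ u ∈ Ico 0 T, r' u = r u ∧ s' u = s u ∧ φ' u = φ u) ∧
        TransSol lam n r' s' φ' (Ico 0 T') := by
  obtain ⟨a, ha⟩ := lim_exists hT (fun t ht => (h t ht).2.1) (C := 1)
    (fun t _ => Real.abs_sin_le_one _)
  obtain ⟨b, hb⟩ := lim_exists hT (fun t ht => (h t ht).2.2.1) (C := 1)
    (fun t _ => Real.abs_cos_le_one _)
  obtain ⟨c, hc⟩ := lim_exists hT (fun t ht => (h t ht).2.2.2) hC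
  have hDl : d ≤ a ^ 2 - b ^ 2 := by
    refine ge_of_tendsto ((ha.pow 2).sub (hb.pow 2)) ?_
    filter_upwards [Ico_mem_nhdsLT hT] with x hx using hD x hx
  have hD0 : a ^ 2 - b ^ 2 ≠ 0 := by linarith [hd]
  let V : ℝ × ℝ × ℝ → ℝ × ℝ × ℝ := fun x =>
    (Real.sin x.2.2, Real.cos x.2.2, Phi lam n x.1 x.2.1 x.2.2)
  have hP : ContDiffAt ℝ 1 (fun x : ℝ × ℝ × ℝ => Phi lam n x.1 x.2.1 x.2.2) (a, b, c) := by
    unfold Phi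
    have hden : ContDiffAt ℝ 1 (fun x : ℝ × ℝ × ℝ => x.1 ^ 2 - x.2.1 ^ 2) (a, b, c) := by fun_prop
    have h1 : ContDiffAt ℝ 1 (fun x : ℝ × ℝ × ℝ =>
        2 * ((n : ℝ) - 1) * x.1 / (x.1 ^ 2 - x.2.1 ^ 2)) (a, b, c) :=
      ContDiffAt.div (by fun_prop) hden hD0
    have h2 : ContDiffAt ℝ 1 (fun x : ℝ × ℝ × ℝ =>
        2 * ((n : ℝ) - 1) * x.2.1 / (x.1 ^ 2 - x.2.1 ^ 2)) (a, b, c) :=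
      ContDiffAt.div (by fun_prop) hden hD0
    have h3 : ContDiffAt ℝ 1 (fun x : ℝ × ℝ × ℝ => Real.cos x.2.2) (a, b, c) := by fun_prop
    have h4 : ContDiffAt ℝ 1 (fun x : ℝ × ℝ × ℝ => Real.sin x.2.2) (a, b, c) := by fun_prop
    have h5 : ContDiffAt ℝ 1 (fun x : ℝ × ℝ × ℝ => - x.1 / 2) (a, b, c) := by fun_prop
    have h6 : ContDiffAt ℝ 1 (fun x : ℝ × ℝ × ℝ => x.2.1 / 2) (a, b, c) := by fun_prop
    exact (((h5.add h1).mul h3).add ((h6.add h2).mul h4)).add contDiffAt_const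
  have hV : ContDiffAt ℝ 1 V (a, b, c) := by
    refine ContDiffAt.prodMk (by fun_prop) (ContDiffAt.prodMk (by fun_prop) hP)
  obtain ⟨α, hα0, ε, hε, hα⟩ :=
    hV.exists_forall_mem_closedBall_exists_eq_forall_mem_Ioo_hasDerivAt₀ T
  have hαT := hα T ⟨by linarith, by linarith⟩
  have hcont : ContinuousAt (fun t => (α t).1 ^ 2 - (α t).2.1 ^ 2) T := by
    have := hαT.continuousAt
    fun_prop
  have hev : ∀ᶠ t in 𝓝 T, 0 < (α t).1 ^ 2 - (α t).2.1 ^ 2 := by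
    apply hcont.eventually (lt_mem_nhds _)
    simp only [hα0]; linarith
  obtain ⟨δ, hδ, hball⟩ := Metric.eventually_nhds_iff.1 hev
  have c1 : ∀ t ∈ Ioo (T - ε) (T + ε), HasDerivAt (fun t => (α t).1) (Real.sin (α t).2.2) t :=
    fun t ht => (hα t ht).fst
  have c2 : ∀ t ∈ Ioo (T - ε) (T + ε), HasDerivAt (fun t => (α t).2.1) (Real.cos (α t).2.2) t :=
    fun t ht => (hα t ht).snd.fst
  have c3 : ∀ t ∈ Ioo (T - ε) (T + ε), HasDerivAt (fun t => (α t).2.2)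
      (Phi lam n (α t).1 (α t).2.1 (α t).2.2) t :=
    fun t ht => (hα t ht).snd.snd
  have hTI : T ∈ Ioo (T - ε) (T + ε) := ⟨by linarith, by linarith⟩
  have hlim : Tendsto (fun t => ((r t, s t, φ t) : ℝ × ℝ × ℝ)) (𝓝[<] T) (𝓝 (a, b, c)) :=
    ha.prodMk_nhds (hb.prodMk_nhds hc)
  have hPlim : Tendsto (fun t => Phi lam n (r t) (s t) (φ t)) (𝓝[<] T) (𝓝 (Phi lam n a b c)) :=
    Tendsto.comp (g := fun x : ℝ × ℝ × ℝ => Phi lam n x.1 x.2.1 x.2.2) hP.continuousAt hlim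
  have hderφ : ∀ t ∈ Ico 0 T, HasDerivAt φ (Phi lam n (r t) (s t) (φ t)) t :=
    fun t ht => (h t ht).2.2.2
  have hglueφ : HasDerivAt (fun t => if t < T then φ t else (α t).2.2)
      (Phi lam n (α T).1 (α T).2.1 (α T).2.2) T := by
    refine glue hT hderφ (by simpa [hα0] using hc) ?_ (c3 T hTI)
    rw [hα0]
    exact hPlim
  refine ⟨T + min ε δ, by simp [hε, hδ], fun t => if t < T then r t else (α t).1,
    fun t => if t < T then s t else (α t).2.1, fun t => if t < T then φ t else (α t).2.2, ?_, ?_⟩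
  · intro u hu
    simp [hu.2]
  intro t ht
  have hm1 := min_le_left ε δ
  have hm2 := min_le_right ε δ
  rcases lt_trichotomy t T with htT | htT | htT
  · have e : ∀ f g : ℝ → ℝ, (fun t => if t < T then f t else g t) =ᶠ[𝓝 t] f := by
      intro f g
      filter_upwards [gt_mem_nhds htT] with x hx
      simp [hx]
    obtain ⟨k0, k1, k2, k3⟩ := h t ⟨ht.1, htT⟩
    simp only [htT, if_true]
    exact ⟨k0, k1.congr_of_eventuallyEq (e _ _), k2.congr_of_eventuallyEq (e _ _),
      k3.congr_of_eventuallyEq (e _ _)⟩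
  · subst htT
    simp only [lt_irrefl, if_false]
    refine ⟨?_, ?_, ?_, ?_⟩
    · rw [hα0]; simp only; linarith
    · refine glue hT (fun t ht => (h t ht).2.1) (by simpa [hα0] using ha) ?_ (c1 t hTI)
      rw [hα0]
      exact (Real.continuous_sin.tendsto c).comp hc
    · refine glue hT (fun t ht => (h t ht).2.2.1) (by simpa [hα0] using hb) ?_ (c2 t hTI)
      rw [hα0]
      exact (Real.continuous_cos.tendsto c).comp hc
    · exact hglueφ
  · have e : ∀ f g : ℝ → ℝ, (fun t => if t < T then f t else g t) =ᶠ[𝓝 t] g := by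
      intro f g
      filter_upwards [lt_mem_nhds htT] with x hx
      simp [not_lt.2 (le_of_lt hx)]
    have hI : t ∈ Ioo (T - ε) (T + ε) := ⟨by linarith, by linarith [ht.2]⟩
    have hb' := hball (y := t) (by rw [Real.dist_eq, abs_lt]; constructor <;> linarith [ht.2])
    simp only [not_lt.2 htT.le, if_false]
    refine ⟨by linarith, (c1 t hI).congr_of_eventuallyEq (e _ _),
      (c2 t hI).congr_of_eventuallyEq (e _ _), (c3 t hI).congr_of_eventuallyEq (e _ _)⟩

/-- elementary 1-Lipschitz bound -/
lemma lip1 {f f' : ℝ → ℝ} {b : ℝ} (hf : ∀ t ∈ Icc 0 b, HasDerivAt f (f' t) t)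
    (h1 : ∀ t, |f' t| ≤ 1) (hb : 0 ≤ b) : |f b - f 0| ≤ b := by
  have := (convex_Icc 0 b).norm_image_sub_le_of_norm_hasDerivWithin_le (C := 1)
    (fun t ht => (hf t ht).hasDerivWithinAt) (fun t _ => h1 t) (left_mem_Icc.2 hb)
    (right_mem_Icc.2 hb)
  simpa [abs_of_nonneg hb] using this

lemma apriori_s16 {lam : ℝ} {n : ℕ} (hn : 2 ≤ n) {r s φ : ℝ → ℝ} {t K R : ℝ} (ht : 0 ≤ t) (htK : t ≤ K)
    (hK : 0 < K)
    (hR : 4 * K ≤ R) (h : TransSol lam n r s φ (Icc 0 t)) (hr : r 0 = R) (hs : s 0 = 0) :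
    3 * R / 4 ≤ r t ∧ r t ≤ 5 * R / 4 ∧ |s t| ≤ R / 4 ∧ R ^ 2 / 4 ≤ r t ^ 2 - s t ^ 2 ∧
      0 ≤ 2 * ((n : ℝ) - 1) * r t / (r t ^ 2 - s t ^ 2) ∧
      2 * ((n : ℝ) - 1) * r t / (r t ^ 2 - s t ^ 2) ≤ 10 * n / R ∧
      |2 * ((n : ℝ) - 1) * s t / (r t ^ 2 - s t ^ 2)| ≤ 10 * n / R := by
  have hn1 : (2 : ℝ) ≤ n := by exact_mod_cast hn
  have h1 := lip1 (fun t ht => (h t ht).2.1) (fun t => Real.abs_sin_le_one _) ht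
  have h2 := lip1 (fun t ht => (h t ht).2.2.1) (fun t => Real.abs_cos_le_one _) ht
  rw [hr] at h1
  rw [hs, sub_zero] at h2
  have h3 := abs_le.1 h1
  have h4 := abs_le.1 h2
  have hRp : 0 < R := by linarith
  have hD : R ^ 2 / 4 ≤ r t ^ 2 - s t ^ 2 := by
    have e1 : R / 2 ≤ r t - s t := by linarith
    have e2 : R / 2 ≤ r t + s t := by linarith
    nlinarith [mul_le_mul e1 e2 (by linarith) (by linarith)]
  have hDp : 0 < r t ^ 2 - s t ^ 2 := lt_of_lt_of_le (by positivity) hD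
  have key : 2 * ((n : ℝ) - 1) * (5 * R / 4) / (R ^ 2 / 4) ≤ 10 * n / R := by
    rw [div_le_div_iff₀ (by positivity) hRp]
    nlinarith [sq_nonneg R]
  refine ⟨by linarith, by linarith, by linarith, hD, ?_, ?_, ?_⟩
  · apply div_nonneg _ hDp.le
    exact mul_nonneg (by linarith) (by linarith)
  · refine le_trans ?_ key
    apply div_le_div₀ _ _ (by positivity) hD
    · exact mul_nonneg (by linarith) (by linarith)
    · exact mul_le_mul_of_nonneg_left (by linarith) (by linarith)
  · refine le_trans ?_ key
    rw [abs_div, abs_of_pos hDp, abs_mul, abs_of_nonneg (by linarith : 0 ≤ 2 * ((n : ℝ) - 1))]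
    apply div_le_div₀ _ _ (by positivity) hD
    · exact mul_nonneg (by linarith) (by linarith)
    · exact mul_le_mul_of_nonneg_left (by linarith) (by linarith)

/-- For all sufficiently large `R`, the solution of the transformed system launched
perpendicularly from the diagonal (`r(0) = R`, `s(0) = 0`, `φ(0) = 0`), considered on its
right-maximal interval of existence `[0, T)` (with `0 < T ≤ ∞`), returns to the diagonal
(`s = 0`) at some positive time while its inclination angle stays in `(−π, 0)`. -/
theorem returns_to_diagonal_for_large_R
    (lam : ℝ) (hlam : lam < 0) (n : ℕ) (hn : 2 ≤ n) :
    ∃ R₀ : ℝ, 0 < R₀ ∧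
      ∀ R : ℝ, R₀ ≤ R →
        ∀ (r s φ : ℝ → ℝ) (J : Set ℝ),
          TransSol lam n r s φ J →
          r 0 = R → s 0 = 0 → φ 0 = 0 →
          (J = Set.Ici (0 : ℝ) ∨
            ∃ T : ℝ, 0 < T ∧ J = Set.Ico (0 : ℝ) T ∧
              ∀ T' : ℝ, T < T' →
                ¬ ∃ r' s' φ' : ℝ → ℝ,
                    (∀ u ∈ J, r' u = r u ∧ s' u = s u ∧ φ' u = φ u) ∧
                    TransSol lam n r' s' φ' (Set.Ico (0 : ℝ) T')) →
          ∃ T₁ : ℝ, T₁ ∈ J ∧ 0 < T₁ ∧ s T₁ = 0 ∧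
            (∀ t : ℝ, 0 < t → t < T₁ → 0 < s t) ∧
            (∀ t : ℝ, 0 < t → t ≤ T₁ → -π < φ t ∧ φ t < 0) := by
  set K : ℝ := -2 * π / lam + 1 with hKdef
  have hpi := Real.pi_pos
  have hnp : (2 : ℝ) ≤ n := by exact_mod_cast hn
  have hK : 0 < K := by
    have : 0 < -2 * π / lam := div_pos_of_neg_of_neg (by linarith) hlam
    linarith
  have hq : 0 < 20 * n / (-lam) := by
    apply div_pos <;> linarith
  refine ⟨4 * K + 4 * (-lam) + 20 * n / (-lam), by linarith, ?_⟩
  intro R hR r s φ J hsol hr0 hs0 hφ0 hJ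
  have hR4 : 4 * K ≤ R := by linarith
  have hRp : 0 < R := by linarith
  have hRl : 4 * (-lam) < R := by linarith
  have hsmall : 10 * n / R ≤ -lam / 2 := by
    have h1 : 20 * n / (-lam) ≤ R := by linarith
    rw [div_le_iff₀ (by linarith)] at h1
    rw [div_le_iff₀ hRp]
    linarith
  -- the solution lives at least up to time K
  have hKJ : Icc 0 K ⊆ J := by
    rcases hJ with hJ | ⟨T, hT, hJ, hmax⟩
    · rw [hJ]; exact fun t ht => ht.1
    rw [hJ]
    by_contra hcon
    have hTK : T ≤ K := by
      by_contra h'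
      exact hcon (fun t ht => ⟨ht.1, by linarith [ht.2]⟩)
    subst hJ
    have hap : ∀ t ∈ Ico 0 T, _ := fun t ht =>
      apriori_s16 hn ht.1 (ht.2.le.trans hTK) hK hR4
        (fun u hu => hsol u ⟨hu.1, hu.2.trans_lt ht.2⟩) hr0 hs0
    obtain ⟨T', hT', hex⟩ := extend (C := 2 * R + 4 * (-lam)) (d := R ^ 2 / 4) hT (by positivity) hsol
      (by
        intro t ht
        obtain ⟨b1, b2, b3, b4, b5, b6, b7⟩ := hap t ht
        unfold Phi
        have hc := Real.abs_cos_le_one (φ t)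
        have hs := Real.abs_sin_le_one (φ t)
        set A := 2 * ((n : ℝ) - 1) * r t / (r t ^ 2 - s t ^ 2)
        set B := 2 * ((n : ℝ) - 1) * s t / (r t ^ 2 - s t ^ 2)
        have e1 : |(-r t / 2 + A) * Real.cos (φ t)| ≤ R + (-lam) := by
          rw [abs_mul]
          have : |-r t / 2 + A| ≤ R + (-lam) := by
            rw [abs_le]; constructor <;> linarith
          calc _ ≤ (R + (-lam)) * 1 := mul_le_mul this hc (abs_nonneg _) (by linarith)
            _ = _ := by ring
        have e2 : |(s t / 2 + B) * Real.sin (φ t)| ≤ R + (-lam) := by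
          rw [abs_mul]
          have : |s t / 2 + B| ≤ R + (-lam) := by
            rw [abs_le] at b3 b7 ⊢; constructor <;> linarith
          calc _ ≤ (R + (-lam)) * 1 := mul_le_mul this hs (abs_nonneg _) (by linarith)
            _ = _ := by ring
        rw [abs_le] at e1 e2 ⊢
        constructor <;> linarith)
      (fun t ht => (hap t ht).2.2.2.1)
    exact hmax T' hT' hex
  have hsol' : TransSol lam n r s φ (Icc 0 K) := fun t ht => hsol t (hKJ ht)
  have hap : ∀ t ∈ Icc 0 K, _ := fun t ht =>
    apriori_s16 hn ht.1 ht.2 hK hR4 (fun u hu => hsol' u ⟨hu.1, hu.2.trans ht.2⟩) hr0 hs0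
  have hneg : ∀ t, 0 < t → t ≤ K → φ t < 0 := by
    apply barrier (fun t ht => (hsol' t ht).2.2.2) hφ0.le
    intro t ht h0
    obtain ⟨b1, b2, b3, b4, b5, b6, b7⟩ := hap t ht
    rw [h0, Real.cos_zero, Real.sin_zero]
    linarith
  have hpos : ∀ t, 0 < t → t ≤ K → -π - φ t < 0 := by
    apply barrier (f := fun t => -π - φ t) (fun t ht => ((hsol' t ht).2.2.2).const_sub (-π))
    · simp only [hφ0]; linarith
    intro t ht h0
    obtain ⟨b1, b2, b3, b4, b5, b6, b7⟩ := hap t ht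
    have : φ t = -π := by linarith
    rw [this, Real.cos_neg, Real.sin_neg, Real.cos_pi, Real.sin_pi]
    linarith
  have hscont : ContinuousOn s (Icc 0 K) :=
    fun t ht => (hsol' t ht).2.2.1.continuousAt.continuousWithinAt
  -- s cannot stay positive
  have hret : ∃ t₁, 0 < t₁ ∧ t₁ ≤ K ∧ s t₁ ≤ 0 := by
    by_contra! hno
    have hd : ∀ t ∈ Icc 0 K, HasDerivAt (fun t => φ t + r t * s t / 2) _ t := fun t ht =>
      (hsol' t ht).2.2.2.add
        (((hsol' t ht).2.1.mul (hsol' t ht).2.2.1).div_const 2)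
    have hmv := (convex_Icc 0 K).image_sub_le_mul_sub_of_deriv_le
      (f := fun t => φ t + r t * s t / 2) (C := lam / 2)
      (fun t ht => (hd t ht).continuousAt.continuousWithinAt)
      (fun t ht => (hd t (interior_subset ht)).differentiableAt.differentiableWithinAt)
      (by
        intro t ht
        rw [interior_Icc] at ht
        have htc : t ∈ Icc 0 K := Ioo_subset_Icc_self ht
        rw [(hd t htc).deriv]
        obtain ⟨b1, b2, b3, b4, b5, b6, b7⟩ := hap t htc
        have p1 := hneg t ht.1 ht.2.le
        have p2 := hpos t ht.1 ht.2.le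
        have hst := hno t ht.1 ht.2.le
        have hsin : Real.sin (φ t) ≤ 0 := Real.sin_nonpos_of_nonpos_of_neg_pi_le p1.le (by linarith)
        have hB : 0 ≤ 2 * ((n : ℝ) - 1) * s t / (r t ^ 2 - s t ^ 2) := by
          apply div_nonneg _ (le_trans (by positivity) b4)
          exact mul_nonneg (by linarith) hst.le
        have hc := Real.cos_le_one (φ t)
        set A := 2 * ((n : ℝ) - 1) * r t / (r t ^ 2 - s t ^ 2)
        set B := 2 * ((n : ℝ) - 1) * s t / (r t ^ 2 - s t ^ 2)
        have q1 : A * Real.cos (φ t) ≤ A := mul_le_of_le_one_right b5 hc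
        have q2 : (s t + B) * Real.sin (φ t) ≤ 0 :=
          mul_nonpos_of_nonneg_of_nonpos (by linarith) hsin
        nlinarith)
      0 (left_mem_Icc.2 hK.le) K (right_mem_Icc.2 hK.le) hK.le
    simp only [hφ0, hs0] at hmv
    have z1 := hpos K hK le_rfl
    have z2 := hno K hK le_rfl
    have z3 := (hap K (right_mem_Icc.2 hK.le)).1
    have z4 : 0 < r K * s K := mul_pos (by linarith) z2
    have z5 : lam / 2 * K = -π + lam / 2 := by
      have hne : lam ≠ 0 := hlam.ne
      rw [hKdef]; field_simp
    rw [sub_zero, z5] at hmv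
    linarith
  obtain ⟨t₁, ht₁, ht₁K, hst₁⟩ := hret
  -- s is positive initially
  have hinit : ∃ δ > 0, ∀ t, 0 < t → t < δ → 0 < s t := by
    have hd := (hsol' 0 (left_mem_Icc.2 hK.le)).2.2.1
    rw [hφ0, Real.cos_zero] at hd
    have hsl := (hd.tendsto_slope.mono_left
      (nhdsWithin_mono (s := Ioi 0) 0 (fun x hx => ne_of_gt hx)))
    have ev := hsl.eventually (lt_mem_nhds zero_lt_one)
    obtain ⟨δ, hδ, hsub⟩ := mem_nhdsGT_iff_exists_Ioo_subset.1 ev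
    refine ⟨δ, hδ, fun t h1 h2 => ?_⟩
    have := hsub ⟨h1, h2⟩
    simp only [mem_ofPred_eq, slope_def_field, hs0, sub_zero] at this
    exact (div_pos_iff_of_pos_right h1).1 this
  obtain ⟨δ, hδ, hδs⟩ := hinit
  have hδt : δ ≤ t₁ := by
    by_contra! hh
    linarith [hδs t₁ ht₁ hh]
  set e := δ / 2 with he
  have hes : 0 < s e := hδs e (by linarith) (by linarith)
  have hcomp : IsCompact {t | t ∈ Icc e t₁ ∧ s t ≤ 0} := by
    have : IsClosed (Icc e t₁ ∩ s ⁻¹' Iic 0) := by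
      apply ContinuousOn.preimage_isClosed_of_isClosed _ isClosed_Icc isClosed_Iic
      exact hscont.mono (fun t ht => ⟨by linarith [ht.1], ht.2.trans ht₁K⟩)
    exact isCompact_Icc.of_isClosed_subset this inter_subset_left
  obtain ⟨T₁, ⟨hT₁, hsT₁⟩, hleast⟩ := hcomp.exists_isLeast ⟨t₁, ⟨by linarith, le_rfl⟩, hst₁⟩
  have hT₁K : T₁ ≤ K := hT₁.2.trans ht₁K
  have hT₁p : 0 < T₁ := by linarith [hT₁.1]
  refine ⟨T₁, hKJ ⟨hT₁p.le, hT₁K⟩, hT₁p, ?_, ?_, ?_⟩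
  · obtain ⟨z, hz, hz0⟩ := intermediate_value_Icc' hT₁.1
      (hscont.mono (fun t ht => ⟨by linarith [ht.1], ht.2.trans hT₁K⟩)) ⟨hsT₁, hes.le⟩
    have := hleast ⟨⟨hz.1, hz.2.trans hT₁.2⟩, hz0.le⟩
    rwa [le_antisymm this hz.2]
  · intro t h1 h2
    by_contra! h3
    by_cases h4 : t < δ
    · linarith [hδs t h1 h4]
    · have := hleast ⟨⟨by linarith, h2.le.trans hT₁.2⟩, h3⟩
      linarith
  · intro t h1 h2
    exact ⟨by linarith [hpos t h1 (h2.trans hT₁K)], hneg t h1 (h2.trans hT₁K)⟩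
end

section
/- Let λ < 0 and n ≥ 2 be an integer. Then there exist T > 0 and a solution (x, y, θ) of the generating system with m = n on [0, T] such that: x(0) = y(0) > 0 and θ(0) = −π/4 (the curve starts on the diagonal y = x and leaves it perpendicularly); x(T) = y(T) > 0 and θ(T) = −5π/4 (the curve returns to the diagonal and meets it perpendicularly); and 0 < y(t) < x(t) for all t ∈ (0, T) (the curve stays strictly below the diagonal in between). -/
open Real

namespace LamArc

/-- State space. -/
abbrev E3 := ℝ × ℝ × ℝ

/-- bounded Lipschitz scalar functions -/
def BL (f : E3 → ℝ) : Prop :=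
  ∃ K C : ℝ, 0 ≤ K ∧ 0 ≤ C ∧ (∀ p q, |f p - f q| ≤ K * dist p q) ∧ ∀ p, |f p| ≤ C

theorem BL.const (c : ℝ) : BL (fun _ => c) :=
  ⟨0, |c|, le_rfl, abs_nonneg _, by simp, by simp⟩

theorem BL.add {f g : E3 → ℝ} (hf : BL f) (hg : BL g) : BL (fun p => f p + g p) := by
  obtain ⟨K, C, hK, hC, h1, h2⟩ := hf
  obtain ⟨K', C', hK', hC', h1', h2'⟩ := hg
  refine ⟨K + K', C + C', by positivity, by positivity, fun p q => ?_, fun p => ?_⟩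
  · have := abs_add_le (f p - f q) (g p - g q)
    rw [show f p + g p - (f q + g q) = f p - f q + (g p - g q) by ring]
    linarith [h1 p q, h1' p q]
  · exact (abs_add_le _ _).trans (add_le_add (h2 p) (h2' p))

theorem BL.mul {f g : E3 → ℝ} (hf : BL f) (hg : BL g) : BL (fun p => f p * g p) := by
  obtain ⟨K, C, hK, hC, h1, h2⟩ := hf
  obtain ⟨K', C', hK', hC', h1', h2'⟩ := hg
  refine ⟨K * C' + C * K', C * C', by positivity, by positivity, fun p q => ?_, fun p => ?_⟩
  · rw [show f p * g p - f q * g q = (f p - f q) * g p + f q * (g p - g q) by ring]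
    refine (abs_add_le _ _).trans ?_
    rw [abs_mul, abs_mul]
    have a1 := mul_le_mul (h1 p q) (h2' p) (abs_nonneg _) (by positivity)
    have a2 := mul_le_mul (h2 q) (h1' p q) (abs_nonneg _) hC
    nlinarith
  · rw [abs_mul]
    exact mul_le_mul (h2 p) (h2' p) (abs_nonneg _) hC

theorem BL.inv {f : E3 → ℝ} (hf : BL f) {c : ℝ} (hc : 0 < c) (h : ∀ p, c ≤ f p) :
    BL (fun p => (f p)⁻¹) := by
  obtain ⟨K, C, hK, hC, h1, h2⟩ := hf
  refine ⟨K * (c⁻¹ * c⁻¹), c⁻¹, by positivity, by positivity, fun p q => ?_, fun p => ?_⟩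
  · have hp : 0 < f p := hc.trans_le (h p)
    have hq : 0 < f q := hc.trans_le (h q)
    have : (f p)⁻¹ - (f q)⁻¹ = -((f p - f q) * ((f p)⁻¹ * (f q)⁻¹)) := by field_simp; ring
    rw [this, abs_neg, abs_mul, abs_of_pos (by positivity : 0 < (f p)⁻¹ * (f q)⁻¹)]
    have a1 : (f p)⁻¹ * (f q)⁻¹ ≤ c⁻¹ * c⁻¹ :=
      mul_le_mul (inv_anti₀ hc (h p)) (inv_anti₀ hc (h q)) (by positivity) (by positivity)
    have := mul_le_mul (h1 p q) a1 (by positivity) (by positivity)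
    linarith
  · have hp : 0 < f p := hc.trans_le (h p)
    rw [abs_of_pos (by positivity)]
    exact inv_anti₀ hc (h p)

theorem BL.sin {f : E3 → ℝ} {K : ℝ} (hK : 0 ≤ K) (hf : ∀ p q, |f p - f q| ≤ K * dist p q) :
    BL (fun p => Real.sin (f p)) := by
  refine ⟨K, 1, hK, zero_le_one, fun p q => ?_, fun p => abs_sin_le_one _⟩
  have := Real.lipschitzWith_sin.dist_le_mul (f p) (f q)
  simp only [Real.dist_eq, NNReal.coe_one, one_mul] at this
  exact this.trans (hf p q)

theorem BL.cos {f : E3 → ℝ} {K : ℝ} (hK : 0 ≤ K) (hf : ∀ p q, |f p - f q| ≤ K * dist p q) :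
    BL (fun p => Real.cos (f p)) := by
  refine ⟨K, 1, hK, zero_le_one, fun p q => ?_, fun p => abs_cos_le_one _⟩
  have := Real.lipschitzWith_cos.dist_le_mul (f p) (f q)
  simp only [Real.dist_eq, NNReal.coe_one, one_mul] at this
  exact this.trans (hf p q)

/-- clamping -/
noncomputable def cl (l M x : ℝ) : ℝ := max l (min M x)

theorem cl_lip (l M x y : ℝ) : |cl l M x - cl l M y| ≤ |x - y| := by
  unfold cl
  have h1 := abs_max_sub_max_le_max l (min M x) l (min M y)
  have h2 := abs_min_sub_min_le_max M x M y
  simp only [sub_self, abs_zero, abs_nonneg, max_eq_right] at h1 h2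
  exact h1.trans h2

theorem cl_eq {l M x : ℝ} (h1 : l ≤ x) (h2 : x ≤ M) : cl l M x = x := by
  unfold cl; rw [min_eq_right h2, max_eq_right h1]

theorem le_cl (l M x : ℝ) : l ≤ cl l M x := le_max_left _ _
theorem cl_le {l M x : ℝ} (h : l ≤ M) : cl l M x ≤ M := max_le h (min_le_left _ _)
theorem cl_le' {l M x y : ℝ} (h : l ≤ y) (hx : x ≤ y) : cl l M x ≤ y :=
  max_le h ((min_le_right _ _).trans hx)

theorem d1 (p q : E3) : |p.1 - q.1| ≤ dist p q := by
  rw [← Real.dist_eq, Prod.dist_eq]; exact le_max_left _ _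
theorem d2 (p q : E3) : |p.2.1 - q.2.1| ≤ dist p q := by
  rw [← Real.dist_eq, Prod.dist_eq, Prod.dist_eq]; exact (le_max_left _ _).trans (le_max_right _ _)
theorem d3 (p q : E3) : |p.2.2 - q.2.2| ≤ dist p q := by
  rw [← Real.dist_eq, Prod.dist_eq, Prod.dist_eq]; exact (le_max_right _ _).trans (le_max_right _ _)

theorem BL.cl {f : E3 → ℝ} {l M : ℝ} (h : l ≤ M) (hf : ∀ p q, |f p - f q| ≤ dist p q) :
    BL (fun p => cl l M (f p)) := by
  refine ⟨1, |l| + |M|, zero_le_one, by positivity, fun p q => ?_, fun p => ?_⟩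
  · rw [one_mul]; exact (cl_lip _ _ _ _).trans (hf p q)
  · have h1 := le_cl l M (f p)
    have h2 : LamArc.cl l M (f p) ≤ M := cl_le h
    rw [abs_le]
    constructor <;> linarith [neg_abs_le l, le_abs_self M, abs_nonneg l, abs_nonneg M]

/-- angular field (true) -/
noncomputable def G0 (a : ℕ) (μ ρ β χ : ℝ) : ℝ :=
  (2 * a * Real.tan (2 * β) * Real.sin χ - (ρ ^ 2 / 2 - (2 * a + 1)) * Real.cos χ) / ρ + μ

/-- angular field (truncated) -/
noncomputable def G (a : ℕ) (μ l M B ρ β χ : ℝ) : ℝ := G0 a μ (cl l M ρ) (cl (-B) B β) χ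

noncomputable def Fld (a : ℕ) (μ l M B : ℝ) (p : E3) : E3 :=
  (Real.sin p.2.2, Real.cos p.2.2 / cl l M p.1, G a μ l M B p.1 p.2.1 p.2.2)

theorem cos_cl_pos {B : ℝ} (hB : 0 < B) (hB' : B < π / 4) (x : ℝ) :
    Real.cos (2 * B) ≤ Real.cos (2 * cl (-B) B x) := by
  have h1 := le_cl (-B) B x
  have h2 : cl (-B) B x ≤ B := cl_le (by linarith)
  rw [← Real.cos_abs (2 * cl (-B) B x)]
  have : |2 * cl (-B) B x| ≤ 2 * B := by rw [abs_le]; constructor <;> linarith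
  exact Real.cos_le_cos_of_nonneg_of_le_pi (abs_nonneg _) (by linarith [Real.pi_pos]) this

theorem BL_G (a : ℕ) (μ l M B : ℝ) (hl : 0 < l) (hlM : l ≤ M) (hB : 0 < B) (hB' : B < π / 4) :
    BL (fun p => G a μ l M B p.1 p.2.1 p.2.2) := by
  have hR : BL (fun p => cl l M p.1) := BL.cl hlM d1
  have hRi : BL (fun p => (cl l M p.1)⁻¹) := hR.inv hl (fun p => le_cl _ _ _)
  have hb : ∀ p q : E3, |2 * cl (-B) B p.2.1 - 2 * cl (-B) B q.2.1| ≤ 2 * dist p q := by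
    intro p q
    rw [← mul_sub, abs_mul, abs_of_pos (by norm_num : (0:ℝ) < 2)]
    have := (cl_lip (-B) B p.2.1 q.2.1).trans (d2 p q)
    linarith
  have hs : BL (fun p => Real.sin (2 * cl (-B) B p.2.1)) := BL.sin (by norm_num) hb
  have hc : BL (fun p => Real.cos (2 * cl (-B) B p.2.1)) := BL.cos (by norm_num) hb
  have hci := hc.inv (c := Real.cos (2 * B))
    (Real.cos_pos_of_mem_Ioo ⟨by linarith, by linarith⟩) (fun p => cos_cl_pos hB hB' _)
  have hsx : BL (fun p => Real.sin p.2.2) := BL.sin zero_le_one (fun p q => by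
    rw [one_mul]; exact d3 p q)
  have hcx : BL (fun p => Real.cos p.2.2) := BL.cos zero_le_one (fun p q => by
    rw [one_mul]; exact d3 p q)
  have key := (((((BL.const (2 * a)).mul (hs.mul hci)).mul hsx).add
    ((((hR.mul hR).mul (BL.const (-1/2))).add (BL.const (2 * a + 1))).mul hcx)).mul hRi).add
    (BL.const μ)
  convert key using 2 with p
  unfold G G0
  rw [Real.tan_eq_sin_div_cos]
  ring

theorem Fld_lip (a : ℕ) (μ l M B : ℝ) (hl : 0 < l) (hlM : l ≤ M) (hB : 0 < B) (hB' : B < π / 4) :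
    ∃ K C : NNReal, LipschitzWith K (Fld a μ l M B) ∧ ∀ p, ‖Fld a μ l M B p‖ ≤ C := by
  obtain ⟨K3, C3, hK3, hC3, h3, h3'⟩ := BL_G a μ l M B hl hlM hB hB'
  have hR : BL (fun p => cl l M p.1) := BL.cl hlM d1
  have hRi : BL (fun p => (cl l M p.1)⁻¹) := hR.inv hl (fun p => le_cl _ _ _)
  have hcx : BL (fun p => Real.cos p.2.2) := BL.cos zero_le_one (fun p q => by
    rw [one_mul]; exact d3 p q)
  obtain ⟨K2, C2, hK2, hC2, h2, h2'⟩ := hcx.mul hRi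
  obtain ⟨K1, C1, hK1, hC1, h1, h1'⟩ : BL (fun p => Real.sin p.2.2) := 
    BL.sin zero_le_one (fun p q => by rw [one_mul]; exact d3 p q)
  obtain ⟨K, hK⟩ : ∃ K : NNReal, (K : ℝ) = K1 + K2 + K3 := ⟨⟨_, by positivity⟩, rfl⟩
  obtain ⟨C, hC⟩ : ∃ C : NNReal, (C : ℝ) = C1 + C2 + C3 := ⟨⟨_, by positivity⟩, rfl⟩
  refine ⟨K, C, ?_, ?_⟩
  · refine LipschitzWith.of_dist_le_mul fun p q => ?_
    have e1 := h1 p q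
    have e2 := h2 p q
    have e3 := h3 p q
    beta_reduce at e1 e2 e3
    have hd : 0 ≤ dist p q := dist_nonneg
    have := mul_nonneg hK1 hd
    have := mul_nonneg hK2 hd
    have := mul_nonneg hK3 hd
    rw [Prod.dist_eq, Prod.dist_eq, Real.dist_eq, Real.dist_eq, Real.dist_eq]
    simp only [Fld, div_eq_mul_inv, hK, hC]
    refine max_le (by nlinarith) (max_le (by nlinarith) (by nlinarith))
  · intro p
    have e1 := h1' p
    have e2 := h2' p
    have e3 := h3' p
    beta_reduce at e1 e2 e3
    rw [Prod.norm_def, Prod.norm_def, Real.norm_eq_abs, Real.norm_eq_abs, Real.norm_eq_abs]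
    simp only [Fld, div_eq_mul_inv, hK, hC]
    refine max_le (by linarith) (max_le (by linarith) (by linarith))

/-- Existence of solutions for a bounded Lipschitz field. -/
theorem exists_sol (F : E3 → E3) (K C : NNReal) (hF : LipschitzWith K F) (hC : ∀ p, ‖F p‖ ≤ C)
    (N : ℝ) (hN : 0 < N) (x : E3) :
    ∃ f : ℝ → E3, f 0 = x ∧ ∀ t ∈ Set.Ioo (-N) N, HasDerivAt f (F (f t)) t := by
  obtain ⟨N', hN'⟩ : ∃ N' : NNReal, (N' : ℝ) = N := ⟨⟨N, hN.le⟩, rfl⟩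
  have hP : IsPicardLindelof (fun _ => F) (tmin := -N) (tmax := N) ⟨0, by constructor <;> linarith⟩
      x (C * N') 0 C K := by
    refine IsPicardLindelof.of_time_independent (fun p _ => hC p) (hF.lipschitzOnWith) ?_
    simp [hN']
  obtain ⟨f, hf0, hf⟩ := hP.exists_eq_forall_mem_Icc_hasDerivWithinAt₀
  exact ⟨f, hf0, fun t ht => (hf t ⟨ht.1.le, ht.2.le⟩).hasDerivAt (Icc_mem_nhds ht.1 ht.2)⟩

/-- The family of trajectories of the truncated system that leave the diagonal perpendicularly. -/
structure PFlow (a : ℕ) (μ l M B N : ℝ) where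
  ρ : ℝ → ℝ → ℝ
  β : ℝ → ℝ → ℝ
  χ : ℝ → ℝ → ℝ
  C : ℝ
  hC : 0 < C
  ρ0 : ∀ r, ρ r 0 = r
  β0 : ∀ r, β r 0 = 0
  χ0 : ∀ r, χ r 0 = 0
  dρ : ∀ r, ∀ t ∈ Set.Ioo (-N) N, HasDerivAt (ρ r) (Real.sin (χ r t)) t
  dβ : ∀ r, ∀ t ∈ Set.Ioo (-N) N, HasDerivAt (β r) (Real.cos (χ r t) / cl l M (ρ r t)) t
  dχ : ∀ r, ∀ t ∈ Set.Ioo (-N) N, HasDerivAt (χ r) (G a μ l M B (ρ r t) (β r t) (χ r t)) t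
  lipβ : ∀ r r' t t', t ∈ Set.Ico 0 N → t' ∈ Set.Ico 0 N →
    |β r t - β r' t'| ≤ C * (|r - r'| + |t - t'|)
  lipχ : ∀ r r' t t', t ∈ Set.Ico 0 N → t' ∈ Set.Ico 0 N →
    |χ r t - χ r' t'| ≤ C * (|r - r'| + |t - t'|)
  lipG : ∀ r, ∀ t ∈ Set.Ico 0 N,
    |G a μ l M B (ρ r t) (β r t) (χ r t) - G a μ l M B r 0 0| ≤ C * t
  uniq : ∀ r, ∀ t ∈ Set.Ico 0 N, Real.sin (χ r t) = 0 →
    G a μ l M B (ρ r t) (β r t) (χ r t) = 0 → χ r 0 = χ r t ∧ ρ r 0 = ρ r t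

theorem exists_PFlow (a : ℕ) (μ l M B N : ℝ) (hl : 0 < l) (hlM : l ≤ M) (hB : 0 < B)
    (hB' : B < π / 4) (hN : 0 < N) : Nonempty (PFlow a μ l M B N) := by
  obtain ⟨K, C, hK, hC⟩ := Fld_lip a μ l M B hl hlM hB hB'
  have hex := fun r : ℝ => exists_sol (Fld a μ l M B) K C hK hC N hN (r, 0, 0)
  choose f hf0 hf using hex
  have hfc : ∀ r s, s ∈ Set.Ico 0 N → ContinuousOn (f r) (Set.Icc 0 s) := fun r s hs t ht =>
    (hf r t ⟨by linarith [ht.1], by linarith [ht.2, hs.2]⟩).continuousAt.continuousWithinAt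
  -- time Lipschitz
  have htime : ∀ r t t', t ∈ Set.Ico 0 N → t' ∈ Set.Ico 0 N →
      dist (f r t) (f r t') ≤ C * |t - t'| := by
    intro r t t' ht ht'
    have := (convex_Ico 0 N).norm_image_sub_le_of_norm_hasDerivWithin_le (f := f r)
      (f' := fun t => Fld a μ l M B (f r t)) (C := C) 
      (fun s hs => (hf r s ⟨by linarith [hs.1], hs.2⟩).hasDerivWithinAt) (fun s _ => hC _) ht' ht
    rw [dist_eq_norm]; simpa using this
  have hsp : ∀ r r' t, t ∈ Set.Ico 0 N → dist (f r t) (f r' t) ≤ |r - r'| * exp (K * N) := by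
    intro r r' t ht
    have := dist_le_of_trajectories_ODE (v := fun _ => Fld a μ l M B) (K := K) (fun _ => hK)
      (hfc r t ht) (fun s hs => (hf r s ⟨by linarith [hs.1], by linarith [hs.2, ht.2]⟩).hasDerivWithinAt)
      (hfc r' t ht) (fun s hs => (hf r' s ⟨by linarith [hs.1], by linarith [hs.2, ht.2]⟩).hasDerivWithinAt)
      (δ := |r - r'|) (by rw [hf0, hf0]; simp [Prod.dist_eq, Real.dist_eq]) t ⟨ht.1, le_rfl⟩
    refine this.trans (mul_le_mul_of_nonneg_left ?_ (abs_nonneg _))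
    apply Real.exp_le_exp.mpr
    have : (0:ℝ) ≤ K := K.2
    nlinarith [ht.2]
  have hlip : ∀ r r' t t', t ∈ Set.Ico 0 N → t' ∈ Set.Ico 0 N →
      dist (f r t) (f r' t') ≤ (C + exp (K * N) + 1 + K * (C + 1)) * (|r - r'| + |t - t'|) := by
    intro r r' t t' ht ht'
    have h1 := dist_triangle (f r t) (f r t') (f r' t')
    have h2 := htime r t t' ht ht'
    have h3 := hsp r r' t' ht'
    have e1 := abs_nonneg (r - r')
    have e2 := abs_nonneg (t - t')
    have : (0:ℝ) ≤ K := K.2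
    have : (0:ℝ) ≤ C := C.2
    have := exp_pos (K * N)
    have q1 : 0 ≤ (1 + K * (C + 1) : ℝ) * (|r - r'| + |t - t'|) := by positivity
    have q2 : 0 ≤ (C:ℝ) * |r - r'| := by positivity
    have q3 : 0 ≤ exp (K * N) * |t - t'| := by positivity
    nlinarith
  refine ⟨{ ρ := fun r t => (f r t).1, β := fun r t => (f r t).2.1, χ := fun r t => (f r t).2.2,
            C := C + exp (K * N) + 1 + K * (C + 1), hC := by have := exp_pos (K * N); positivity,
            ρ0 := fun r => by simp [hf0], β0 := fun r => by simp [hf0],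
            χ0 := fun r => by simp [hf0],
            dρ := fun r t ht => (hf r t ht).fst, dβ := fun r t ht => (hf r t ht).snd.fst,
            dχ := fun r t ht => (hf r t ht).snd.snd,
            lipβ := fun r r' t t' ht ht' => (d2 _ _).trans (hlip r r' t t' ht ht'),
            lipχ := fun r r' t t' ht ht' => (d3 _ _).trans (hlip r r' t t' ht ht'),
            lipG := ?_, uniq := ?_ }⟩
  · intro r t ht
    have h1 := (d3 _ _).trans (hK.dist_le_mul (f r t) (f r 0))
    have h2 := htime r t 0 ht ⟨le_rfl, hN⟩
    rw [sub_zero, abs_of_nonneg ht.1] at h2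
    rw [hf0] at h1 h2
    simp only [Fld] at h1
    refine h1.trans ?_
    have k0 : (0:ℝ) ≤ K := K.2
    have c0 : (0:ℝ) ≤ C := C.2
    have := exp_pos (K * N)
    have h3 := mul_le_mul_of_nonneg_left h2 k0
    have q : 0 ≤ (C + exp (K * N) + 1 + K : ℝ) * t := mul_nonneg (by positivity) ht.1
    nlinarith
  · intro r t1 ht1 hs hG
    rcases ht1.1.eq_or_lt with h0 | h0
    · subst h0; simp
    -- comparison with the circle solution
    set q := f r t1 with hq
    set k : ℝ := Real.cos q.2.2 / cl l M q.1 with hk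
    set g : ℝ → E3 := fun s => (q.1, q.2.1 + k * (s - t1), q.2.2) with hg
    have hgd : ∀ s, HasDerivAt g (Fld a μ l M B (g s)) s := by
      intro s
      have : Fld a μ l M B (g s) = (0, k, 0) := by
        simp only [Fld, hg]
        refine Prod.ext hs (Prod.ext rfl ?_)
        simp only [G, G0] at hG ⊢
        simp only [hs, mul_zero] at hG ⊢
        exact hG
      rw [this]
      refine (hasDerivAt_const _ _).prodMk (HasDerivAt.prodMk ?_ (hasDerivAt_const _ _))
      simpa using (((hasDerivAt_id s).sub_const t1).const_mul k).const_add q.2.1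
    have hbig : -N < -(N/2) := by linarith
    obtain ⟨b, hb1, hb2⟩ := exists_between ht1.2
    have := ODE_solution_unique_of_mem_Icc (v := fun _ => Fld a μ l M B) (s := fun _ => Set.univ)
      (K := K) (f := f r) (g := g) (a := -(N/2)) (b := b) (t₀ := t1)
      (fun t _ => hK.lipschitzOnWith) ⟨by linarith, hb1⟩
      (fun t ht => (hf r t ⟨by linarith [ht.1], by linarith [ht.2]⟩).continuousAt.continuousWithinAt)
      (fun t ht => hf r t ⟨by linarith [ht.1], by linarith [ht.2]⟩) (fun _ _ => trivial)
      (fun t ht => (hgd t).continuousAt.continuousWithinAt)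
      (fun t ht => hgd t) (fun _ _ => trivial) (by simp [hg, hq])
    have h00 := this (show (0:ℝ) ∈ Set.Icc (-(N/2)) b from ⟨by linarith, by linarith⟩)
    rw [h00]
    simp [hg]

end LamArc

open Real

namespace LamArc

theorem barrier_pos {f f' : ℝ → ℝ} {T : ℝ} (hd : ∀ t ∈ Set.Icc 0 T, HasDerivAt f (f' t) t)
    (h0 : 0 ≤ f 0) (hb : ∀ t ∈ Set.Icc 0 T, f t = 0 → 0 < f' t) :
    ∀ t ∈ Set.Ioc 0 T, 0 < f t := by
  have h1 : ∀ t ∈ Set.Icc 0 T, (0:ℝ) ≤ f t := by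
    have := image_le_of_deriv_right_lt_deriv_boundary' (f := fun t => - f t)
      (f' := fun t => - f' t) (B := fun _ => (0:ℝ)) (B' := fun _ => 0) (a := 0) (b := T)
      (fun t ht => (hd t ht).neg.continuousAt.continuousWithinAt)
      (fun t ht => (hd t ⟨ht.1, ht.2.le⟩).neg.hasDerivWithinAt) (by simpa using h0)
      continuousOn_const (fun t ht => (hasDerivAt_const _ _).hasDerivWithinAt)
      (fun t ht h => by
        have := hb t ⟨ht.1, ht.2.le⟩ (by simpa using h)
        simpa using this)
    intro t ht
    have := this ht
    simpa using this
  intro t ht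
  refine lt_of_le_of_ne (h1 t ⟨ht.1.le, ht.2⟩) fun h => ?_
  have hpos := hb t ⟨ht.1.le, ht.2⟩ h.symm
  have hl := (hd t ⟨ht.1.le, ht.2⟩).tendsto_slope.eventually (lt_mem_nhds hpos)
  have hl' : ∀ᶠ s in nhdsWithin t (Set.Iio t), 0 < slope f t s :=
    hl.filter_mono (nhdsWithin_mono _ (fun s hs => ne_of_lt hs))
  have h2 : ∀ᶠ s in nhdsWithin t (Set.Iio t), s ∈ Set.Ioo 0 t := Ioo_mem_nhdsLT ht.1
  obtain ⟨s, hs, hs'⟩ := (hl'.and h2).exists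
  rw [slope_def_field, ← h] at hs
  have h3 := h1 s ⟨hs'.1.le, hs'.2.le.trans ht.2⟩
  have : (f s - 0) / (s - t) ≤ 0 := div_nonpos_of_nonneg_of_nonpos (by linarith) (by linarith [hs'.2])
  linarith

theorem barrier_le {f f' : ℝ → ℝ} {T c : ℝ} (hd : ∀ t ∈ Set.Icc 0 T, HasDerivAt f (f' t) t)
    (h0 : f 0 ≤ c) (hb : ∀ t ∈ Set.Icc 0 T, c ≤ f t → f' t ≤ 0) :
    ∀ t ∈ Set.Icc 0 T, f t ≤ c := by
  intro t ht
  refine le_of_forall_pos_le_add fun ε hε => ?_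
  have hT : 0 < T + 1 := by linarith [ht.1, ht.2]
  set e := ε / (T + 1) with he
  have he0 : 0 < e := by positivity
  have := image_le_of_deriv_right_lt_deriv_boundary' (f := f)
      (f' := f') (B := fun t => c + e * t) (B' := fun _ => e) (a := 0) (b := T)
      (fun t ht => (hd t ht).continuousAt.continuousWithinAt)
      (fun t ht => (hd t ⟨ht.1, ht.2.le⟩).hasDerivWithinAt) (by simpa using h0)
      (by fun_prop)
      (fun t ht => by simpa using (((hasDerivAt_id t).const_mul e).const_add c).hasDerivWithinAt)
      (fun t ht h => by
        have := hb t ⟨ht.1, ht.2.le⟩ (by rw [h]; have := mul_nonneg he0.le ht.1; linarith)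
        linarith) ht
  have h2 : e * t ≤ ε := by
    have : e * (T + 1) = ε := by rw [he]; field_simp
    nlinarith [ht.2]
  linarith

theorem mono_of_deriv {f f' : ℝ → ℝ} {s T : ℝ} (hd : ∀ t ∈ Set.Icc s T, HasDerivAt f (f' t) t)
    (hb : ∀ t ∈ Set.Icc s T, 0 ≤ f' t) : MonotoneOn f (Set.Icc s T) :=
  monotoneOn_of_hasDerivWithinAt_nonneg (convex_Icc _ _)
    (fun t ht => (hd t ht).continuousAt.continuousWithinAt)
    (fun t ht => (hd t (interior_subset ht)).hasDerivWithinAt) (fun t ht => hb t (interior_subset ht))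

theorem anti_of_deriv {f f' : ℝ → ℝ} {s T : ℝ} (hd : ∀ t ∈ Set.Icc s T, HasDerivAt f (f' t) t)
    (hb : ∀ t ∈ Set.Icc s T, f' t ≤ 0) : AntitoneOn f (Set.Icc s T) :=
  antitoneOn_of_hasDerivWithinAt_nonpos (convex_Icc _ _)
    (fun t ht => (hd t ht).continuousAt.continuousWithinAt)
    (fun t ht => (hd t (interior_subset ht)).hasDerivWithinAt) (fun t ht => hb t (interior_subset ht))

/-- Solutions of the true polar system on `[0,T]` staying in the relevant region. -/
structure TSol (a : ℕ) (μ : ℝ) (ρ β χ : ℝ → ℝ) (T : ℝ) : Prop where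
  dρ : ∀ t ∈ Set.Icc 0 T, HasDerivAt ρ (Real.sin (χ t)) t
  dβ : ∀ t ∈ Set.Icc 0 T, HasDerivAt β (Real.cos (χ t) / ρ t) t
  dχ : ∀ t ∈ Set.Icc 0 T, HasDerivAt χ (G0 a μ (ρ t) (β t) (χ t)) t
  ρpos : ∀ t ∈ Set.Icc 0 T, 0 < ρ t
  βnn : ∀ t ∈ Set.Icc 0 T, 0 ≤ β t
  βlt : ∀ t ∈ Set.Icc 0 T, β t < π / 4
  χnn : ∀ t ∈ Set.Icc 0 T, 0 ≤ χ t
  χle : ∀ t ∈ Set.Icc 0 T, χ t ≤ π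

theorem TSol.restrict {a : ℕ} {μ : ℝ} {ρ β χ : ℝ → ℝ} {T s : ℝ} (h : TSol a μ ρ β χ T)
    (hs : s ≤ T) : TSol a μ ρ β χ s := by
  have H : ∀ t ∈ Set.Icc 0 s, t ∈ Set.Icc 0 T := fun t ht => ⟨ht.1, ht.2.trans hs⟩
  exact ⟨fun t ht => h.1 t (H t ht), fun t ht => h.2 t (H t ht), fun t ht => h.3 t (H t ht),
    fun t ht => h.4 t (H t ht), fun t ht => h.5 t (H t ht), fun t ht => h.6 t (H t ht),
    fun t ht => h.7 t (H t ht), fun t ht => h.8 t (H t ht)⟩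

noncomputable def J (a : ℕ) (b : ℝ) : ℝ := ∫ s in (0:ℝ)..b, Real.cos (2 * s) ^ a

theorem J_zero (a : ℕ) : J a 0 = 0 := by simp [J]

theorem J_deriv (a : ℕ) (b : ℝ) : HasDerivAt (J a) (Real.cos (2 * b) ^ a) b := by
  have hc : Continuous fun s : ℝ => Real.cos (2 * s) ^ a := by fun_prop
  exact intervalIntegral.integral_hasDerivAt_right (hc.intervalIntegrable _ _)
    (hc.stronglyMeasurableAtFilter _ _) hc.continuousAt

theorem cos2_nn {b : ℝ} (h0 : 0 ≤ b) (h1 : b ≤ π / 4) : 0 ≤ Real.cos (2 * b) :=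
  Real.cos_nonneg_of_mem_Icc ⟨by linarith, by linarith⟩

theorem cos2_pos {b : ℝ} (h0 : 0 ≤ b) (h1 : b < π / 4) : 0 < Real.cos (2 * b) :=
  Real.cos_pos_of_mem_Ioo ⟨by linarith, by linarith⟩

theorem J_mono (a : ℕ) : MonotoneOn (J a) (Set.Icc 0 (π / 4)) :=
  mono_of_deriv (fun t _ => J_deriv a t) (fun t ht => pow_nonneg (cos2_nn ht.1 ht.2) _)

theorem J_pos (a : ℕ) : 0 < J a (π / 4) := by
  unfold J
  refine intervalIntegral.intervalIntegral_pos_of_pos_on ?_ ?_ (by positivity)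
  · exact Continuous.intervalIntegrable (by fun_prop) _ _
  · intro s hs
    exact pow_pos (cos2_pos hs.1.le hs.2) _

/-- barrier function off the axis -/
noncomputable def mf (a : ℕ) (c b : ℝ) : ℝ := Real.cos (2 * b) ^ a - c * J a b

theorem mf_anti (a : ℕ) {c : ℝ} (hc : 0 ≤ c) : AntitoneOn (mf a c) (Set.Icc 0 (π / 4)) := by
  intro x hx y hy hxy
  unfold mf
  have h1 : Real.cos (2 * y) ^ a ≤ Real.cos (2 * x) ^ a :=
    pow_le_pow_left₀ (cos2_nn hy.1 hy.2)
      (Real.cos_le_cos_of_nonneg_of_le_pi (by linarith [hx.1]) (by linarith [hy.2, Real.pi_pos])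
        (by linarith)) _
  have h2 := mul_le_mul_of_nonneg_left (J_mono a hx hy hxy) hc
  linarith

theorem mf_cont (a : ℕ) (c : ℝ) : Continuous (mf a c) := by
  have : Continuous (J a) := continuous_iff_continuousAt.2 fun b => (J_deriv a b).continuousAt
  unfold mf; fun_prop

theorem exists_B (a : ℕ) (ha : 1 ≤ a) {c : ℝ} (hc : 0 < c) :
    ∃ B, 0 < B ∧ B < π / 4 ∧ mf a c B < 0 := by
  have h1 : mf a c (π / 4) < 0 := by
    unfold mf
    rw [show 2 * (π / 4) = π / 2 by ring, Real.cos_pi_div_two, zero_pow (by omega)]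
    have := J_pos a
    nlinarith
  have h2 : ∀ᶠ b in nhdsWithin (π / 4) (Set.Iio (π / 4)), mf a c b < 0 :=
    ((mf_cont a c).continuousAt.eventually (gt_mem_nhds h1)).filter_mono nhdsWithin_le_nhds
  have h3 : ∀ᶠ s in nhdsWithin (π / 4) (Set.Iio (π / 4)), s ∈ Set.Ioo 0 (π / 4) :=
    Ioo_mem_nhdsLT (by positivity)
  obtain ⟨s, hs, hs'⟩ := (h2.and h3).exists
  exact ⟨s, hs'.1, hs'.2, hs⟩

section
variable {a : ℕ} {μ : ℝ} {ρ β χ : ℝ → ℝ} {T : ℝ}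

theorem TSol.sin_nn (h : TSol a μ ρ β χ T) : ∀ t ∈ Set.Icc 0 T, 0 ≤ Real.sin (χ t) :=
  fun t ht => Real.sin_nonneg_of_nonneg_of_le_pi (h.χnn t ht) (h.χle t ht)

theorem TSol.ρmono (h : TSol a μ ρ β χ T) : MonotoneOn ρ (Set.Icc 0 T) :=
  mono_of_deriv h.dρ h.sin_nn

theorem TSol.time (h : TSol a μ ρ β χ T) (hT : 0 ≤ T) (hβ : β 0 = 0) (hχ : χ 0 = 0) :
    μ * T ≤ χ T + (ρ T ^ 2 / 2 - (2 * a + 1)) * β T := by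
  have hd : ∀ t ∈ Set.Icc 0 T, HasDerivAt
      (fun t => χ t + (ρ t ^ 2 / 2 - (2 * a + 1)) * β t - μ * t)
      ((2 * a / ρ t) * Real.tan (2 * β t) * Real.sin (χ t) + β t * ρ t * Real.sin (χ t)) t := by
    intro t ht
    have h1 := h.dρ t ht
    have h2 := h.dβ t ht
    have h3 := h.dχ t ht
    have hp := (h.ρpos t ht).ne'
    have := (h3.add ((((h1.pow 2).div_const 2).sub_const (2 * (a:ℝ) + 1)).mul h2)).sub
      ((hasDerivAt_id t).const_mul μ)
    refine HasDerivAt.congr_deriv this ?_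
    unfold G0
    simp only [Pi.pow_apply]
    field_simp
    ring
  have := mono_of_deriv hd (fun t ht => by
    have h1 := h.sin_nn t ht
    have h2 := h.ρpos t ht
    have h3 := h.βnn t ht
    have h4 : 0 ≤ Real.tan (2 * β t) :=
      Real.tan_nonneg_of_nonneg_of_le_pi_div_two (by linarith) (by linarith [h.βlt t ht])
    positivity) (⟨le_rfl, hT⟩ : (0:ℝ) ∈ Set.Icc 0 T) ⟨hT, le_rfl⟩ hT
  simp only [hβ, hχ] at this
  simp at this
  linarith

/-- `Y - μ ρ J(β)` -/
noncomputable def YJ (a : ℕ) (μ : ℝ) (ρ β χ : ℝ → ℝ) (t : ℝ) : ℝ :=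
  Real.cos (2 * β t) ^ a * Real.sin (χ t) - μ * ρ t * J a (β t)

theorem TSol.dYJ (h : TSol a μ ρ β χ T) : ∀ t ∈ Set.Icc 0 T, HasDerivAt (YJ a μ ρ β χ)
    (-(ρ t ^ 2 / 2 - (2 * a + 1)) * Real.cos (2 * β t) ^ a * Real.cos (χ t) ^ 2 / ρ t
      - μ * Real.sin (χ t) * J a (β t)) t := by
  intro t ht
  have h1 := h.dρ t ht
  have h2 := h.dβ t ht
  have h3 := h.dχ t ht
  have hp := (h.ρpos t ht).ne'
  have hc := (cos2_pos (h.βnn t ht) (h.βlt t ht)).ne'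
  have hcos := ((h2.const_mul 2).cos.pow a)
  have hJ := (J_deriv a (β t)).comp t h2
  have := (hcos.mul h3.sin).sub ((h1.const_mul μ).mul hJ)
  refine HasDerivAt.congr_deriv this ?_
  unfold G0
  rw [Real.tan_eq_sin_div_cos]
  simp only [Pi.pow_apply, Function.comp]
  rcases a with _ | k
  · simp
    field_simp
    ring
  · simp only [Nat.add_sub_cancel, Nat.cast_add, Nat.cast_one, pow_succ]
    field_simp
    ring

theorem TSol.Y1 (h : TSol a μ ρ β χ T) (hμ : 0 < μ) (hT : 0 ≤ T) (hβ : β 0 = 0)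
    (hmax : ∀ t ∈ Set.Icc 0 T, β t ≤ β T) (hQ : ρ T ^ 2 / 2 - (2 * a + 1) ≤ 0) :
    0 ≤ mf a (μ * ρ 0) (β T) := by
  have h0 : (0:ℝ) ∈ Set.Icc 0 T := ⟨le_rfl, hT⟩
  have hTT : T ∈ Set.Icc 0 T := ⟨hT, le_rfl⟩
  have := mono_of_deriv (f := fun t => YJ a μ ρ β χ t + μ * J a (β T) * ρ t)
    (fun t ht => (h.dYJ t ht).add ((h.dρ t ht).const_mul (μ * J a (β T)))) (fun t ht => by
      have hs := h.sin_nn t ht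
      have hp := h.ρpos t ht
      have hJ : J a (β t) ≤ J a (β T) := J_mono a ⟨h.βnn t ht, (h.βlt t ht).le⟩
        ⟨h.βnn T hTT, (h.βlt T hTT).le⟩ (hmax t ht)
      have hq : ρ t ^ 2 / 2 - (2 * a + 1) ≤ 0 := by
        have := h.ρmono ht hTT ht.2
        nlinarith
      have hc := (cos2_pos (h.βnn t ht) (h.βlt t ht)).le
      have e1 : 0 ≤ -(ρ t ^ 2 / 2 - (2 * a + 1)) * Real.cos (2 * β t) ^ a * Real.cos (χ t) ^ 2 / ρ t := by
        have : 0 ≤ -(ρ t ^ 2 / 2 - (2 * a + 1)) := by linarith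
        positivity
      have e2 : 0 ≤ μ * Real.sin (χ t) * (J a (β T) - J a (β t)) :=
        mul_nonneg (by positivity) (by linarith)
      linarith) h0 hTT hT
  have hs := h.sin_nn 0 h0
  simp only [YJ, hβ, J_zero, mul_zero, Real.cos_zero, one_pow] at this
  have hc := pow_nonneg (cos2_pos (h.βnn T hTT) (h.βlt T hTT)).le a
  have hs1 := Real.sin_le_one (χ T)
  unfold mf
  have := mul_le_mul_of_nonneg_left hs1 hc
  linarith

theorem TSol.Y2 (h : TSol a μ ρ β χ T) (hμ : 0 < μ) {s : ℝ} (hs0 : 0 ≤ s) (hs : s ≤ T)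
    (hβ : β T = 0) (hQ : 0 ≤ ρ s ^ 2 / 2 - (2 * a + 1)) :
    Real.sin (χ T) + μ * ρ s * J a (β s) ≤ Real.cos (2 * β s) ^ a * Real.sin (χ s) := by
  have hsub : ∀ t ∈ Set.Icc s T, t ∈ Set.Icc 0 T := fun t ht => ⟨hs0.trans ht.1, ht.2⟩
  have hss : s ∈ Set.Icc s T := ⟨le_rfl, hs⟩
  have hTT : T ∈ Set.Icc s T := ⟨hs, le_rfl⟩
  have := anti_of_deriv (fun t ht => h.dYJ t (hsub t ht)) (fun t ht' => by
      have ht := hsub t ht'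
      have hsn := h.sin_nn t ht
      have hp := h.ρpos t ht
      have hJ : 0 ≤ J a (β t) := by
        rw [← J_zero a]
        exact J_mono a ⟨le_rfl, by positivity⟩ ⟨h.βnn t ht, (h.βlt t ht).le⟩ (h.βnn t ht)
      have hq : 0 ≤ ρ t ^ 2 / 2 - (2 * a + 1) := by
        have := h.ρmono (hsub s hss) ht ht'.1
        have := h.ρpos s (hsub s hss)
        nlinarith
      have hc := (cos2_pos (h.βnn t ht) (h.βlt t ht)).le
      have e1 : 0 ≤ (ρ t ^ 2 / 2 - (2 * a + 1)) * Real.cos (2 * β t) ^ a * Real.cos (χ t) ^ 2 / ρ t := by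
        positivity
      have e2 : 0 ≤ μ * Real.sin (χ t) * J a (β t) := by positivity
      have e3 : -(ρ t ^ 2 / 2 - (2 * a + 1)) * Real.cos (2 * β t) ^ a * Real.cos (χ t) ^ 2 / ρ t =
        -((ρ t ^ 2 / 2 - (2 * a + 1)) * Real.cos (2 * β t) ^ a * Real.cos (χ t) ^ 2 / ρ t) := by ring
      linarith) hss hTT hs
  simp only [YJ, hβ, J_zero, mul_zero, Real.cos_zero, one_pow] at this
  linarith

theorem TSol.Ybound (h : TSol a μ ρ β χ T) (hμ : 0 < μ) (hT : 0 ≤ T) (hβ : β 0 = 0)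
    (hβT : β T = 0) : ∀ t ∈ Set.Icc 0 T, 0 ≤ mf a (μ * ρ 0) (β t) := by
  have h0 : (0:ℝ) ∈ Set.Icc 0 T := ⟨le_rfl, hT⟩
  have hTT : T ∈ Set.Icc 0 T := ⟨hT, le_rfl⟩
  obtain ⟨s, hs, hmax⟩ := isCompact_Icc.exists_isMaxOn ⟨0, h0⟩
    (fun t ht => (h.dβ t ht).continuousAt.continuousWithinAt : ContinuousOn β (Set.Icc 0 T))
  have hρ0 := h.ρpos 0 h0
  have key : 0 ≤ mf a (μ * ρ 0) (β s) := by
    rcases le_total (ρ s ^ 2 / 2 - (2 * a + 1)) 0 with hq | hq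
    · exact (h.restrict hs.2).Y1 hμ hs.1 hβ (fun t ht => hmax ⟨ht.1, ht.2.trans hs.2⟩) hq
    · have := h.Y2 hμ hs.1 hs.2 hβT hq
      have e1 := h.sin_nn T hTT
      have hJ : 0 ≤ J a (β s) := by
        rw [← J_zero a]
        exact J_mono a ⟨le_rfl, by positivity⟩ ⟨h.βnn s hs, (h.βlt s hs).le⟩ (h.βnn s hs)
      have hc := pow_nonneg (cos2_pos (h.βnn s hs) (h.βlt s hs)).le a
      have e2 := mul_le_mul_of_nonneg_left (Real.sin_le_one (χ s)) hc
      have e3 := h.ρmono h0 hs hs.1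
      have e4 := mul_le_mul_of_nonneg_right (mul_le_mul_of_nonneg_left e3 hμ.le) hJ
      unfold mf
      linarith
  intro t ht
  exact key.trans (mf_anti a (by positivity) ⟨h.βnn t ht, (h.βlt t ht).le⟩
    ⟨h.βnn s hs, (h.βlt s hs).le⟩ (hmax ht))

theorem TSol.noR0 (h : TSol a μ ρ β χ T) (hμ : 0 < μ) (hT : 0 ≤ T) (hβ : β 0 = 0) (hχ : χ 0 = 0)
    (hβT : β T = 0) (hQ : 0 ≤ ρ 0 ^ 2 / 2 - (2 * a + 1)) : Real.sin (χ T) ≤ 0 := by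
  have := h.Y2 hμ le_rfl hT hβT hQ
  simpa [hβ, hχ, J_zero] using this

end

end LamArc

open Real

namespace LamArc

/-- the algebraic inequality behind the small-radius estimate -/
theorem small_alg {A μ κ u v c s g : ℝ} (hA : 1 ≤ A) (hκ : 0 < κ) (hκ4 : κ ≤ 1 / 4)
    (hκμ : 6 * A * κ ≤ μ) (hu : 0 < u) (hu1 : u ≤ 1) (hv : 0 ≤ v) (hvu : v < u)
    (hs : 0 ≤ s) (hcs : s ^ 2 + c ^ 2 = 1) (hg : g * (u ^ 2 - v ^ 2) = 2 * A)
    (hZ : 0 < c + κ * u) :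
    c + κ * u < u * (g * (u * c + v * s) + (v * s - u * c) / 2 + μ - κ) := by
  have hμ : 0 < μ := by nlinarith
  have hμ2 : 2 * κ < μ := by nlinarith
  have hd : 0 < u ^ 2 - v ^ 2 := by nlinarith
  have hg0 : 0 < g := by
    by_contra hcon
    push Not at hcon
    nlinarith
  have hvs : 0 ≤ v * s := mul_nonneg hv hs
  have hgu : 2 * A ≤ g * u ^ 2 := by nlinarith [mul_nonneg hg0.le (sq_nonneg v)]
  rcases le_or_gt 0 c with hc | hc
  · have e1 : 2 * c ≤ g * u ^ 2 * c := by nlinarith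
    have e2 : 0 ≤ u * (g * (v * s)) := by positivity
    have hu2 : u ^ 2 ≤ 1 := pow_le_one₀ hu.le hu1
    have e3 : u ^ 2 * c ≤ c := mul_le_of_le_one_left hc hu2
    have e4 : 0 ≤ u * (v * s) := by positivity
    have e5 : 2 * κ * u < μ * u := by nlinarith
    nlinarith
  · rcases le_or_gt 0 (u * c + v * s) with hw | hw
    · have e1 : 0 ≤ u * (g * (u * c + v * s)) := by positivity
      have e2 : 0 ≤ u * (v * s) := by positivity
      have e3 : 0 ≤ u ^ 2 * (-c) := mul_nonneg (by positivity) (by linarith)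
      have e5 : 2 * κ * u < μ * u := by nlinarith
      nlinarith
    · have hc2 : -c < κ * u := by linarith
      have hku : κ * u ≤ 1 / 4 := by nlinarith
      have hs2 : 1 / 2 ≤ s := by nlinarith
      have hvs2 : v * s < κ * u ^ 2 := by nlinarith
      have hv2 : v ≤ u / 2 := by
        have : v / 2 ≤ v * s := by nlinarith
        nlinarith
      have hd2 : 3 / 4 * u ^ 2 ≤ u ^ 2 - v ^ 2 := by nlinarith
      have hg2 : g * u ^ 2 ≤ 8 / 3 * A := by nlinarith [mul_le_mul_of_nonneg_left hd2 hg0.le]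
      have hw2 : -(κ * u ^ 2) ≤ u * c + v * s := by nlinarith
      have e1 : -(8 / 3 * A * κ) ≤ g * (u * c + v * s) := by
        have := mul_le_mul_of_nonneg_left hw2 hg0.le
        nlinarith
      have e3 : 0 ≤ u * (-c) := mul_nonneg hu.le (by linarith)
      have e5 : 1 * κ ≤ A * κ := mul_le_mul_of_nonneg_right hA hκ.le
      have e4 : 2 * κ < g * (u * c + v * s) + (v * s - u * c) / 2 + μ := by linarith
      have e6 : 0 < u * (g * (u * c + v * s) + (v * s - u * c) / 2 + μ - 2 * κ) :=
        mul_pos hu (by linarith)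
      linarith

section
variable {a : ℕ} {μ : ℝ} {ρ β χ : ℝ → ℝ} {T : ℝ}

theorem K_eq {a : ℕ} {μ r b x : ℝ} (hr : 0 < r) (hc : 0 < Real.cos (2 * b)) :
    G0 a μ r b x - Real.cos x / r =
      (2 * a / (r ^ 2 * Real.cos (2 * b))) * (r * Real.cos b * Real.cos (x - b)
        + r * Real.sin b * Real.sin (x - b)) +
      (r * Real.sin b * Real.sin (x - b) - r * Real.cos b * Real.cos (x - b)) / 2 + μ := by
  have e1 : r * Real.cos b * Real.cos (x - b) + r * Real.sin b * Real.sin (x - b) =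
      r * (Real.cos x * Real.cos (2 * b) + Real.sin x * Real.sin (2 * b)) := by
    rw [← Real.cos_sub, show x - 2 * b = (x - b) - b by ring, Real.cos_sub (x - b) b]; ring
  have e2 : r * Real.sin b * Real.sin (x - b) - r * Real.cos b * Real.cos (x - b) =
      - (r * Real.cos x) := by
    have : Real.cos x = Real.cos ((x - b) + b) := by ring_nf
    rw [this, Real.cos_add]; ring
  rw [e1, e2, G0, Real.tan_eq_sin_div_cos]
  field_simp
  ring

theorem small_const {κ R u1 : ℝ} (hκ : 0 < κ) (hκ4 : κ ≤ 1 / 4) (hR : 0 < R) (hR1 : R ≤ 1)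
    (hu1 : u1 = κ * R ^ 2 / 16) : κ * u1 ≤ 1 / 4 ∧ u1 ^ 2 ≤ R ^ 2 / 2 := by
  have hR2 : R ^ 2 ≤ 1 := pow_le_one₀ hR.le hR1
  have hR20 : 0 < R ^ 2 := by positivity
  have h1 : κ * R ^ 2 ≤ 1 / 4 * R ^ 2 := mul_le_mul_of_nonneg_right hκ4 hR20.le
  have h2 : u1 ≤ R ^ 2 := by rw [hu1]; linarith
  have h3 : u1 ≤ 1 / 2 := by rw [hu1]; linarith
  have h4 : 0 < u1 := by rw [hu1]; positivity
  constructor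
  · nlinarith
  · nlinarith

theorem TSol.small (h : TSol a μ ρ β χ T) (ha : 1 ≤ a) {κ R u1 : ℝ} (hT : 0 ≤ T)
    (hκ : 0 < κ) (hκ4 : κ ≤ 1 / 4) (hκμ : 6 * a * κ ≤ μ) (hR : 0 < R) (hR1 : R ≤ 1)
    (hu1 : u1 = κ * R ^ 2 / 16) (hρ : ρ 0 = κ * u1 ^ 2 / 4) (hβ : β 0 = 0) (hχ : χ 0 = 0)
    (hρR : ∀ t ∈ Set.Icc 0 T, ρ t ≤ R) : ρ T < R := by
  have hA : (1:ℝ) ≤ a := by exact_mod_cast ha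
  have h0 : (0:ℝ) ∈ Set.Icc 0 T := ⟨le_rfl, hT⟩
  have hTT : T ∈ Set.Icc 0 T := ⟨hT, le_rfl⟩
  set r := ρ 0 with hr
  have hr0 : 0 < r := h.ρpos 0 h0
  have hu10 : 0 < u1 := by rw [hu1]; positivity
  set u : ℝ → ℝ := fun t => ρ t * Real.cos (β t) with hu
  set v : ℝ → ℝ := fun t => ρ t * Real.sin (β t) with hv
  set φ : ℝ → ℝ := fun t => χ t - β t with hφ
  have hπ := Real.pi_pos
  have hcb : ∀ t ∈ Set.Icc 0 T, 0 < Real.cos (β t) := fun t ht =>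
    Real.cos_pos_of_mem_Ioo ⟨by linarith [h.βnn t ht], by linarith [h.βlt t ht]⟩
  have hsb : ∀ t ∈ Set.Icc 0 T, 0 ≤ Real.sin (β t) := fun t ht =>
    Real.sin_nonneg_of_nonneg_of_le_pi (h.βnn t ht) (by linarith [h.βlt t ht])
  have hc2 : ∀ t ∈ Set.Icc 0 T, 0 < Real.cos (2 * β t) := fun t ht =>
    cos2_pos (h.βnn t ht) (h.βlt t ht)
  have hupos : ∀ t ∈ Set.Icc 0 T, 0 < u t := fun t ht => mul_pos (h.ρpos t ht) (hcb t ht)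
  have hvnn : ∀ t ∈ Set.Icc 0 T, 0 ≤ v t := fun t ht => mul_nonneg (h.ρpos t ht).le (hsb t ht)
  have hu_le : ∀ t ∈ Set.Icc 0 T, u t ≤ 1 := fun t ht => by
    have e1 := hρR t ht
    have e2 := Real.cos_le_one (β t)
    have := mul_le_mul (e1.trans hR1) e2 (hcb t ht).le zero_le_one
    simpa [hu] using this
  have huv : ∀ t, u t ^ 2 - v t ^ 2 = ρ t ^ 2 * Real.cos (2 * β t) := fun t => by
    simp only [hu, hv]; rw [Real.cos_two_mul']; ring
  have hvu : ∀ t ∈ Set.Icc 0 T, v t < u t := fun t ht => by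
    have e := huv t
    have e2 := mul_pos (pow_pos (h.ρpos t ht) 2) (hc2 t ht)
    have e3 := hupos t ht
    have e4 := hvnn t ht
    by_contra hcon
    push Not at hcon
    nlinarith
  have hdu : ∀ t ∈ Set.Icc 0 T, HasDerivAt u (Real.sin (φ t)) t := fun t ht => by
    refine ((h.dρ t ht).mul (h.dβ t ht).cos).congr_deriv ?_
    have hp := (h.ρpos t ht).ne'
    simp only [hφ, Real.sin_sub]
    field_simp
    ring
  have hdv : ∀ t ∈ Set.Icc 0 T, HasDerivAt v (Real.cos (φ t)) t := fun t ht => by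
    refine ((h.dρ t ht).mul (h.dβ t ht).sin).congr_deriv ?_
    have hp := (h.ρpos t ht).ne'
    simp only [hφ, Real.cos_sub]
    field_simp
    ring
  set g : ℝ → ℝ := fun t => 2 * a / (ρ t ^ 2 * Real.cos (2 * β t)) with hg
  have hguv : ∀ t ∈ Set.Icc 0 T, g t * (u t ^ 2 - v t ^ 2) = 2 * a := fun t ht => by
    have hp := (h.ρpos t ht).ne'
    have := (hc2 t ht).ne'
    rw [huv]; simp only [hg]; field_simp
  set K : ℝ → ℝ := fun t => g t * (u t * Real.cos (φ t) + v t * Real.sin (φ t)) +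
    (v t * Real.sin (φ t) - u t * Real.cos (φ t)) / 2 + μ with hK
  have hdφ : ∀ t ∈ Set.Icc 0 T, HasDerivAt φ (K t) t := fun t ht => by
    refine ((h.dχ t ht).sub (h.dβ t ht)).congr_deriv ?_
    rw [K_eq (h.ρpos t ht) (hc2 t ht)]
  have hμ0 : 0 < μ := by nlinarith
  have hφnn : ∀ t ∈ Set.Icc 0 T, 0 ≤ φ t := by
    have := barrier_pos hdφ (by simp [hφ, hβ, hχ]) (fun t ht h0 => by
      simp only [hK, h0, Real.cos_zero, Real.sin_zero]
      have e1 := hguv t ht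
      have e2 := hupos t ht
      have e3 := hu_le t ht
      have e4 := hvnn t ht
      have e5 := hvu t ht
      have hd0 : 0 < u t ^ 2 - v t ^ 2 := by nlinarith
      have hg0 : 0 < g t := by
        by_contra hcon
        push Not at hcon
        have := mul_nonpos_of_nonpos_of_nonneg hcon hd0.le
        linarith
      have e6 : 2 ≤ g t * (u t) ^ 2 := by nlinarith [mul_nonneg hg0.le (sq_nonneg (v t))]
      have e7 : 2 ≤ g t * u t := by nlinarith [mul_pos hg0 e2]
      nlinarith)
    intro t ht
    rcases ht.1.eq_or_lt with h0 | h0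
    · rw [← h0]; simp [hφ, hβ, hχ]
    · exact (this t ⟨h0, ht.2⟩).le
  have hsφ : ∀ t ∈ Set.Icc 0 T, 0 ≤ Real.sin (φ t) := fun t ht =>
    Real.sin_nonneg_of_nonneg_of_le_pi (hφnn t ht) (by
      simp only [hφ]; linarith [h.χle t ht, h.βnn t ht])
  have hW : ∀ t ∈ Set.Icc 0 T, (Real.cos (φ t) + κ * u t) * u t ≤ 2 * r := by
    refine barrier_le (f := fun t => (Real.cos (φ t) + κ * u t) * u t)
      (fun t ht => (((hdφ t ht).cos.add ((hdu t ht).const_mul κ)).mul (hdu t ht))) ?_ ?_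
    · simp only [hu, hφ, hβ, hχ]
      simp
      have : r ≤ 1 := (hρR 0 h0).trans hR1
      have : ρ 0 = r := rfl
      rw [this]
      have : κ * r ≤ 1 := by nlinarith
      have := mul_le_mul_of_nonneg_right this hr0.le
      linarith
    · intro t ht hge
      have hut := hupos t ht
      have hZ : 0 < Real.cos (φ t) + κ * u t := by
        by_contra hcon
        push Not at hcon
        nlinarith
      have := small_alg hA hκ hκ4 hκμ hut (hu_le t ht) (hvnn t ht) (hvu t ht) (hsφ t ht)
        (Real.sin_sq_add_cos_sq _) (hguv t ht) hZ
      have e := mul_le_mul_of_nonneg_left this.le (hsφ t ht)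
      simp only [hK] at e ⊢
      simp only [Pi.add_apply]
      nlinarith
  by_contra hcon
  push Not at hcon
  have hρT : ρ T = R := le_antisymm (hρR T hTT) hcon
  have huT : R ^ 2 / 2 ≤ u T ^ 2 := by
    simp only [hu, hρT]
    have := hc2 T hTT
    rw [Real.cos_two_mul] at this
    have hR2 : 0 < R ^ 2 := by positivity
    rw [mul_pow]; nlinarith
  have humono : MonotoneOn u (Set.Icc 0 T) := mono_of_deriv hdu hsφ
  obtain ⟨hu1small, hu1sq⟩ := small_const hκ hκ4 hR hR1 hu1
  have hu1R : u1 ≤ u T := (sq_le_sq₀ hu10.le (hupos T hTT).le).1 (hu1sq.trans huT)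
  have hu0 : u 0 ≤ u1 := by
    simp only [hu, hβ, Real.cos_zero, mul_one]
    have : ρ 0 = r := rfl
    rw [this, hρ]
    have := mul_le_mul_of_nonneg_right hu1small hu10.le
    linarith
  obtain ⟨t1, ht1, hut1⟩ := intermediate_value_Icc hT
    (fun t ht => (hdu t ht).continuousAt.continuousWithinAt : ContinuousOn u (Set.Icc 0 T))
    ⟨hu0, hu1R⟩
  have hsub : ∀ t ∈ Set.Icc t1 T, t ∈ Set.Icc 0 T := fun t ht => ⟨ht1.1.trans ht.1, ht.2⟩
  have hanti := anti_of_deriv (f := fun t => v t + κ / 4 * (u t * u t))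
    (fun t ht => (hdv t (hsub t ht)).add
      (((hdu t (hsub t ht)).mul (hdu t (hsub t ht))).const_mul (κ / 4)))
    (fun t ht' => by
      have ht := hsub t ht'
      have e1 := hW t ht
      have e2 : u1 ≤ u t := hut1 ▸ humono ht1 ht ht'.1
      have e3 := Real.sin_le_one (φ t)
      have e4 := hsφ t ht
      have e5 := hupos t ht
      have e6 : 4 * r ≤ κ * u t ^ 2 := by
        rw [hρ]
        have : u1 ^ 2 ≤ u t ^ 2 := by nlinarith
        have := mul_le_mul_of_nonneg_left this hκ.le
        linarith
      have e7 : u t * (Real.cos (φ t) + κ / 2 * u t * Real.sin (φ t)) ≤ 0 := by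
        have : κ / 2 * u t ^ 2 * Real.sin (φ t) ≤ κ / 2 * u t ^ 2 * 1 :=
          mul_le_mul_of_nonneg_left e3 (by positivity)
        linarith
      have e8 : Real.cos (φ t) + κ / 2 * u t * Real.sin (φ t) ≤ 0 := by
        by_contra hc
        push Not at hc
        linarith [mul_pos e5 hc]
      linarith) ⟨le_rfl, ht1.2⟩ ⟨ht1.2, le_rfl⟩ ht1.2
  simp only [hut1] at hanti
  have e1 := hvnn T hTT
  have e2 := hvu t1 ht1
  rw [hut1] at e2
  have e3 : κ / 4 * (R ^ 2 / 2) ≤ κ / 4 * (u T * u T) :=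
    mul_le_mul_of_nonneg_left (by linarith) (by positivity)
  have e4 : κ / 4 * (u1 * u1) ≤ u1 / 16 := by
    have := mul_le_mul_of_nonneg_right hu1small hu10.le
    linarith
  have e5 : κ / 4 * (R ^ 2 / 2) = 2 * u1 := by rw [hu1]; ring
  linarith

end

end LamArc

open Real

namespace LamArc

theorem theta_alg {A r sw cw sx cx lam t2 : ℝ} (hr : r ≠ 0) (hs : sw ≠ 0) (hc : cw ≠ 0)
    (h1 : sw ^ 2 + cw ^ 2 = 1) (ht : t2 = (cw ^ 2 - sw ^ 2) / (2 * sw * cw)) :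
    -((2 * A * t2 * sx - (r ^ 2 / 2 - (2 * A + 1)) * cx) / r + -lam - cx / r) =
    (r * cw / 2 - A / (r * cw)) * (cx * cw - sx * sw) +
      (A / (r * sw) - r * sw / 2) * (-(sx * cw + cx * sw)) + lam := by
  have e : (r * cw / 2 - A / (r * cw)) * (cx * cw - sx * sw) +
      (A / (r * sw) - r * sw / 2) * (-(sx * cw + cx * sw)) + lam =
      r * cx / 2 * (sw ^ 2 + cw ^ 2) - A / r * (2 * cx + sx * ((cw ^ 2 - sw ^ 2) / (sw * cw)))
        + lam := by
    field_simp
    ring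
  rw [e, h1, ht]
  field_simp
  ring

theorem final_of_TSol {a n : ℕ} (hn : (n : ℝ) - 1 = a) {lam : ℝ} {ρ β χ : ℝ → ℝ} {T : ℝ}
    (h : TSol a (-lam) ρ β χ T) (hT : 0 < T) (hβ0 : β 0 = 0) (hχ0 : χ 0 = 0) (hβT : β T = 0)
    (hχT : χ T = π) (hpos : ∀ t ∈ Set.Ioo 0 T, 0 < β t) :
    ∃ (T : ℝ) (x y θ : ℝ → ℝ), 0 < T ∧
      (∀ t ∈ Set.Icc 0 T, 0 < x t ∧ 0 < y t) ∧
      (∀ t ∈ Set.Icc 0 T, HasDerivAt x (Real.cos (θ t)) t) ∧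
      (∀ t ∈ Set.Icc 0 T, HasDerivAt y (Real.sin (θ t)) t) ∧
      (∀ t ∈ Set.Icc 0 T, HasDerivAt θ
        ((x t / 2 - ((n : ℝ) - 1) / x t) * Real.sin (θ t) +
          (((n : ℝ) - 1) / y t - y t / 2) * Real.cos (θ t) + lam) t) ∧
      x 0 = y 0 ∧ 0 < x 0 ∧ θ 0 = -(π / 4) ∧
      x T = y T ∧ 0 < x T ∧ θ T = -(5 * π / 4) ∧
      (∀ t ∈ Set.Ioo 0 T, 0 < y t ∧ y t < x t) := by
  have hπ := Real.pi_pos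
  rw [hn]
  have hrev : ∀ t ∈ Set.Icc 0 T, T - t ∈ Set.Icc 0 T := fun t ht =>
    ⟨by linarith [ht.2], by linarith [ht.1]⟩
  have hsub : ∀ t, HasDerivAt (fun s => T - s) (-1) t := fun t => by
    simpa using (hasDerivAt_id t).const_sub T
  have hcw : ∀ t ∈ Set.Icc 0 T, 0 < Real.cos (π / 4 - β t) := fun t ht =>
    Real.cos_pos_of_mem_Ioo ⟨by linarith [h.βlt t ht], by linarith [h.βnn t ht]⟩
  have hsw : ∀ t ∈ Set.Icc 0 T, 0 < Real.sin (π / 4 - β t) := fun t ht =>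
    Real.sin_pos_of_pos_of_lt_pi (by linarith [h.βlt t ht]) (by linarith [h.βnn t ht])
  have hcos : ∀ s, Real.cos (χ s - π / 4 - β s - π) =
      -(Real.sin (χ s) * Real.cos (π / 4 - β s) + Real.cos (χ s) * Real.sin (π / 4 - β s)) := by
    intro s
    rw [← Real.sin_add, Real.cos_sub_pi, ← Real.cos_sub_pi_div_two]; congr 2; ring
  have hsin : ∀ s, Real.sin (χ s - π / 4 - β s - π) =
      (Real.cos (χ s) * Real.cos (π / 4 - β s) - Real.sin (χ s) * Real.sin (π / 4 - β s)) := by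
    intro s
    rw [← Real.cos_add, Real.sin_sub_pi,
      show χ s - π / 4 - β s = χ s + (π / 4 - β s) - π / 2 by ring, Real.sin_sub_pi_div_two]
    ring
  have hbr : ∀ f : ℝ → ℝ, ∀ d t, HasDerivAt f d (T - t) → HasDerivAt (fun s => f (T - s)) (-d) t :=
    fun f d t hf => (HasDerivAt.comp t hf (hsub t)).congr_deriv (by ring)
  have hX : ∀ t ∈ Set.Icc 0 T, HasDerivAt (fun s => ρ s * Real.cos (π / 4 - β s))
      (-Real.cos (χ t - π / 4 - β t - π)) t := fun t ht => by
    refine ((h.dρ t ht).mul ((h.dβ t ht).const_sub (π / 4)).cos).congr_deriv ?_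
    have := (h.ρpos t ht).ne'
    rw [hcos]; field_simp; try ring
  have hY : ∀ t ∈ Set.Icc 0 T, HasDerivAt (fun s => ρ s * Real.sin (π / 4 - β s))
      (-Real.sin (χ t - π / 4 - β t - π)) t := fun t ht => by
    refine ((h.dρ t ht).mul ((h.dβ t ht).const_sub (π / 4)).sin).congr_deriv ?_
    have := (h.ρpos t ht).ne'
    rw [hsin]; field_simp; ring
  refine ⟨T, fun t => ρ (T - t) * Real.cos (π / 4 - β (T - t)),
    fun t => ρ (T - t) * Real.sin (π / 4 - β (T - t)),
    fun t => χ (T - t) - π / 4 - β (T - t) - π, hT, ?_, ?_, ?_, ?_, ?_, ?_, ?_, ?_, ?_, ?_, ?_⟩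
  · intro t ht
    have := hrev t ht
    exact ⟨mul_pos (h.ρpos _ this) (hcw _ this), mul_pos (h.ρpos _ this) (hsw _ this)⟩
  · intro t ht
    simpa using hbr _ _ t (hX _ (hrev t ht))
  · intro t ht
    simpa using hbr _ _ t (hY _ (hrev t ht))
  · intro t ht
    have hs := hrev t ht
    have := hbr _ _ t ((((h.dχ _ hs).sub_const (π / 4)).sub (h.dβ _ hs)).sub_const π)
    refine this.congr_deriv ?_
    rw [hcos, hsin, G0]
    refine theta_alg (h.ρpos _ hs).ne' (hsw _ hs).ne' (hcw _ hs).ne' (Real.sin_sq_add_cos_sq _) ?_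
    rw [Real.tan_eq_sin_div_cos, ← Real.cos_two_mul', ← Real.sin_two_mul,
      show 2 * (π / 4 - β (T - t)) = π / 2 - 2 * β (T - t) by ring, Real.cos_pi_div_two_sub,
      Real.sin_pi_div_two_sub]
  · simp [hβT]
  · simp only [sub_zero, hβT]
    exact mul_pos (h.ρpos T ⟨hT.le, le_rfl⟩) (by rw [Real.cos_pi_div_four]; positivity)
  · simp [hβT, hχT]
  · simp [hβ0]
  · simp only [sub_self, hβ0, sub_zero]
    exact mul_pos (h.ρpos 0 ⟨le_rfl, hT.le⟩) (by rw [Real.cos_pi_div_four]; positivity)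
  · simp [hβ0, hχ0]; ring
  · intro t ht
    have hs := hrev t ⟨ht.1.le, ht.2.le⟩
    refine ⟨mul_pos (h.ρpos _ hs) (hsw _ hs), mul_lt_mul_of_pos_left ?_ (h.ρpos _ hs)⟩
    have hb := hpos (T - t) ⟨by linarith [ht.2], by linarith [ht.1]⟩
    rw [← Real.cos_pi_div_two_sub]
    have := h.βlt _ hs
    exact Real.cos_lt_cos_of_nonneg_of_le_pi (by linarith) (by linarith) (by linarith)

end LamArc

open Real

namespace LamArc

theorem deriv_nonpos_left {f : ℝ → ℝ} {d c T : ℝ} (hc : c < T) (hd : HasDerivAt f d T)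
    (hf : ∀ t ∈ Set.Icc c T, f T ≤ f t) : d ≤ 0 := by
  by_contra hpos
  push Not at hpos
  have hl := hd.tendsto_slope.eventually (lt_mem_nhds hpos)
  have hl' : ∀ᶠ s in nhdsWithin T (Set.Iio T), 0 < slope f T s :=
    hl.filter_mono (nhdsWithin_mono _ (fun s hs => ne_of_lt hs))
  have h2 : ∀ᶠ s in nhdsWithin T (Set.Iio T), s ∈ Set.Ioo c T := Ioo_mem_nhdsLT hc
  obtain ⟨s, hs, hs'⟩ := (hl'.and h2).exists
  rw [slope_def_field] at hs
  have h3 := hf s ⟨hs'.1.le, hs'.2.le⟩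
  have : (f s - f T) / (s - T) ≤ 0 :=
    div_nonpos_of_nonneg_of_nonpos (by linarith) (by linarith [hs'.2])
  linarith

theorem eventually_lt_right {f : ℝ → ℝ} {d T : ℝ} (hd : HasDerivAt f d T) (hneg : d < 0) :
    ∀ᶠ s in nhdsWithin T (Set.Ioi T), f s < f T := by
  have hl := hd.tendsto_slope.eventually (gt_mem_nhds hneg)
  have hl' : ∀ᶠ s in nhdsWithin T (Set.Ioi T), slope f T s < 0 :=
    hl.filter_mono (nhdsWithin_mono _ (fun s hs => ne_of_gt hs))
  filter_upwards [hl', self_mem_nhdsWithin] with s hs hs'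
  rw [slope_def_field] at hs
  have hs'' : T < s := hs'
  by_contra hcon
  push Not at hcon
  have : 0 ≤ (f s - f T) / (s - T) := div_nonneg (by linarith) (by linarith)
  linarith

theorem eventually_gt_left {f : ℝ → ℝ} {d T : ℝ} (hd : HasDerivAt f d T) (hneg : d < 0) :
    ∀ᶠ s in nhdsWithin T (Set.Iio T), f T < f s := by
  have hl := hd.tendsto_slope.eventually (gt_mem_nhds hneg)
  have hl' : ∀ᶠ s in nhdsWithin T (Set.Iio T), slope f T s < 0 :=
    hl.filter_mono (nhdsWithin_mono _ (fun s hs => ne_of_lt hs))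
  filter_upwards [hl', self_mem_nhdsWithin] with s hs hs'
  rw [slope_def_field] at hs
  have hs'' : s < T := hs'
  by_contra hcon
  push Not at hcon
  have : 0 ≤ (f s - f T) / (s - T) := div_nonneg_of_nonpos (by linarith) (by linarith)
  linarith

theorem strict_left {f g : ℝ → ℝ} {c T e : ℝ} (hc : c < T)
    (hf : ∀ s ∈ Set.Icc c T, HasDerivAt f (g s) s) (hg : g T = 0) (hgd : HasDerivAt g e T)
    (he : e < 0) : ∃ s ∈ Set.Ioo c T, f s < f T := by
  have h1 := eventually_gt_left hgd he
  rw [hg] at h1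
  obtain ⟨c', hc', hsub⟩ := (mem_nhdsLT_iff_exists_Ioo_subset' hc).1 h1
  have hc'T : c' < T := hc'
  have hm : max c c' < T := max_lt hc hc'T
  have h2 : c ≤ max c c' := le_max_left _ _
  have h3 : c' ≤ max c c' := le_max_right _ _
  set s := (max c c' + T) / 2 with hs
  have hsT : s < T := by rw [hs]; linarith
  have hcs : max c c' < s := by rw [hs]; linarith
  have hmono : StrictMonoOn f (Set.Icc s T) := by
    refine strictMonoOn_of_deriv_pos (convex_Icc _ _)
      (fun t ht => (hf t ⟨by linarith [ht.1], ht.2⟩).continuousAt.continuousWithinAt) ?_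
    intro t ht
    rw [interior_Icc] at ht
    rw [(hf t ⟨by linarith [ht.1], ht.2.le⟩).deriv]
    exact hsub ⟨by linarith [ht.1], ht.2⟩
  exact ⟨s, ⟨by linarith, hsT⟩, hmono ⟨le_rfl, hsT.le⟩ ⟨hsT.le, le_rfl⟩ hsT⟩

theorem strict_right {f g : ℝ → ℝ} {c T e : ℝ} (hc : T < c)
    (hf : ∀ s ∈ Set.Icc T c, HasDerivAt f (g s) s) (hg : g T = 0) (hgd : HasDerivAt g e T)
    (he : e < 0) : ∃ s ∈ Set.Ioo T c, f s < f T := by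
  have h1 := eventually_lt_right hgd he
  rw [hg] at h1
  obtain ⟨c', hc', hsub⟩ := (mem_nhdsGT_iff_exists_Ioo_subset' hc).1 h1
  have hc'T : T < c' := hc'
  have hm : T < min c c' := lt_min hc hc'T
  have h2 : min c c' ≤ c := min_le_left _ _
  have h3 : min c c' ≤ c' := min_le_right _ _
  set s := (min c c' + T) / 2 with hs
  have hsT : T < s := by rw [hs]; linarith
  have hcs : s < min c c' := by rw [hs]; linarith
  have hmono : StrictAntiOn f (Set.Icc T s) := by
    refine strictAntiOn_of_deriv_neg (convex_Icc _ _)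
      (fun t ht => (hf t ⟨ht.1, by linarith [ht.2]⟩).continuousAt.continuousWithinAt) ?_
    intro t ht
    rw [interior_Icc] at ht
    rw [(hf t ⟨ht.1.le, by linarith [ht.2]⟩).deriv]
    exact hsub ⟨ht.1, by linarith [ht.2]⟩
  exact ⟨s, ⟨hsT, by linarith⟩, hmono ⟨le_rfl, hsT.le⟩ ⟨hsT.le, le_rfl⟩ hsT⟩

theorem first_zero {f : ℝ → ℝ} {d T : ℝ} (hdT : d ≤ T) (hf : ContinuousOn f (Set.Icc d T))
    (h0 : 0 < f d) (h1 : f T < 0) :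
    ∃ s ∈ Set.Icc d T, f s = 0 ∧ ∀ t ∈ Set.Icc d s, 0 ≤ f t := by
  have hcl : IsClosed (Set.Icc d T ∩ f ⁻¹' Set.Iic 0) :=
    hf.preimage_isClosed_of_isClosed isClosed_Icc isClosed_Iic
  have hcomp : IsCompact (Set.Icc d T ∩ f ⁻¹' Set.Iic 0) :=
    isCompact_Icc.of_isClosed_subset hcl Set.inter_subset_left
  obtain ⟨s, hs, hmin⟩ := hcomp.exists_isLeast ⟨T, ⟨hdT, le_rfl⟩, h1.le⟩
  have hlt : ∀ t ∈ Set.Ico d s, 0 < f t := by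
    intro t ht
    by_contra hcon
    push Not at hcon
    have := hmin ⟨⟨ht.1, ht.2.le.trans hs.1.2⟩, hcon⟩
    linarith [ht.2]
  have hs0 : f s ≤ 0 := hs.2
  obtain ⟨t, ht, ht0⟩ := intermediate_value_Icc' hs.1.1
    (hf.mono (Set.Icc_subset_Icc_right hs.1.2)) ⟨hs0, h0.le⟩
  have hts : t = s := by
    by_contra hne
    have := hlt t ⟨ht.1, lt_of_le_of_ne ht.2 hne⟩
    linarith
  rw [hts] at ht0
  refine ⟨s, hs.1, ht0, fun t ht => ?_⟩
  rcases ht.2.eq_or_lt with h | h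
  · rw [h, ht0]
  · exact (hlt t ⟨ht.1, h⟩).le

structure Setup (a : ℕ) (μ l M B N R0 : ℝ) : Prop where
  ha : 1 ≤ a
  hμ : 0 < μ
  hl : 0 < l
  hlR : l ≤ R0
  hR0 : R0 ^ 2 / 2 = 2 * a + 1
  hM : M = R0 + N
  hN : N = π / μ + 2
  hB : 0 < B
  hB' : B < π / 4
  hmf : mf a (μ * l) B < 0

section
variable {a : ℕ} {μ l M B N R0 : ℝ}

theorem Setup.N2 (S : Setup a μ l M B N R0) : 2 < N := by
  have := S.hμ
  have : 0 < π / μ := by positivity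
  linarith [S.hN]

theorem Setup.G_start (S : Setup a μ l M B N R0) {r : ℝ} (h1 : l ≤ r) (h2 : r ≤ R0) :
    μ ≤ G a μ l M B r 0 0 := by
  have hr : 0 < r := S.hl.trans_le h1
  have hB := S.hB
  have := S.N2
  unfold G G0
  rw [cl_eq h1 (by linarith [S.hM]), cl_eq (by linarith) hB.le]
  simp
  have : r ^ 2 ≤ R0 ^ 2 := pow_le_pow_left₀ hr.le h2 2
  have hR := S.hR0
  exact div_nonneg (by linarith) hr.le

theorem start (S : Setup a μ l M B N R0) (F : PFlow a μ l M B N) :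
    ∃ δ, 0 < δ ∧ δ < 1 ∧ ∀ r ∈ Set.Icc l R0, ∀ t ∈ Set.Ioc 0 δ,
      0 < F.β r t ∧ F.β r t < B ∧ 0 < F.χ r t ∧ F.χ r t < π := by
  have hC := F.hC
  have hμ := S.hμ
  have hB := S.hB
  have hN := S.N2
  obtain ⟨δ, hδ, hδ'⟩ : ∃ δ : ℝ, 0 < δ ∧ δ < min (min (μ / F.C) (1 / F.C)) (min (B / F.C) 1) :=
    exists_between (by positivity)
  simp only [lt_min_iff] at hδ'
  obtain ⟨⟨k1, k2⟩, k3, k4⟩ := hδ'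
  rw [lt_div_iff₀ hC] at k1 k2 k3
  refine ⟨δ, hδ, k4, fun r hr => ?_⟩
  have hCt : ∀ t ∈ Set.Icc 0 δ, F.C * t ≤ δ * F.C := fun t ht => by
    rw [mul_comm]; exact mul_le_mul_of_nonneg_right ht.2 hC.le
  have hχ : ∀ t ∈ Set.Ioc 0 δ, 0 < F.χ r t := by
    refine barrier_pos (fun t ht => F.dχ r t ⟨by linarith [ht.1], by linarith [ht.2]⟩)
      (F.χ0 r).ge (fun t ht _ => ?_)
    have h1 := F.lipG r t ⟨ht.1, by linarith [ht.2]⟩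
    have h2 := S.G_start hr.1 hr.2
    have h3 := (abs_le.1 h1).1
    have := hCt t ht
    linarith
  have hχ2 : ∀ t ∈ Set.Icc 0 δ, |F.χ r t| < 1 := fun t ht => by
    have := F.lipχ r r t 0 ⟨ht.1, by linarith [ht.2]⟩ ⟨le_rfl, by linarith⟩
    rw [F.χ0, sub_self, abs_zero, zero_add, sub_zero, sub_zero, abs_of_nonneg ht.1] at this
    linarith [hCt t ht]
  have hβ : ∀ t ∈ Set.Ioc 0 δ, 0 < F.β r t := by
    refine barrier_pos (fun t ht => F.dβ r t ⟨by linarith [ht.1], by linarith [ht.2]⟩)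
      (F.β0 r).ge (fun t ht _ => ?_)
    refine div_pos (Real.cos_pos_of_mem_Ioo ?_) (S.hl.trans_le (le_cl _ _ _))
    have := abs_lt.1 (hχ2 t ht)
    constructor <;> linarith [this.1, this.2, Real.pi_gt_three]
  intro t ht
  refine ⟨hβ t ht, ?_, hχ t ht, ?_⟩
  · have := F.lipβ r r t 0 ⟨ht.1.le, by linarith [ht.2]⟩ ⟨le_rfl, by linarith⟩
    rw [F.β0, sub_self, abs_zero, zero_add, sub_zero, sub_zero, abs_of_nonneg ht.1.le] at this
    linarith [hCt t ⟨ht.1.le, ht.2⟩, le_abs_self (F.β r t)]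
  · linarith [(abs_lt.1 (hχ2 t ⟨ht.1.le, ht.2⟩)).2, Real.pi_gt_three]

theorem toTSol (S : Setup a μ l M B N R0) (F : PFlow a μ l M B N) {r T : ℝ}
    (hr : r ∈ Set.Icc l R0) (hTN : T < N)
    (hβ : ∀ t ∈ Set.Icc 0 T, 0 ≤ F.β r t ∧ F.β r t ≤ B)
    (hχ : ∀ t ∈ Set.Icc 0 T, 0 ≤ F.χ r t ∧ F.χ r t ≤ π) :
    TSol a μ (F.ρ r) (F.β r) (F.χ r) T := by
  have hN := S.N2
  have hin : ∀ t ∈ Set.Icc 0 T, t ∈ Set.Ioo (-N) N := fun t ht =>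
    ⟨by linarith [ht.1], by linarith [ht.2]⟩
  have hρ1 : ∀ t ∈ Set.Icc 0 T, l ≤ F.ρ r t := fun t ht => by
    have := mono_of_deriv (fun t ht => F.dρ r t (hin t ht))
      (fun t ht => Real.sin_nonneg_of_nonneg_of_le_pi (hχ t ht).1 (hχ t ht).2)
      ⟨le_rfl, ht.1.trans ht.2⟩ ht ht.1
    rw [F.ρ0] at this
    exact hr.1.trans this
  have hρ2 : ∀ t ∈ Set.Icc 0 T, F.ρ r t ≤ M := fun t ht => by
    have := mono_of_deriv (f := fun t => t - F.ρ r t)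
      (fun t ht => (hasDerivAt_id t).sub (F.dρ r t (hin t ht)))
      (fun t ht => by linarith [Real.sin_le_one (F.χ r t)])
      ⟨le_rfl, ht.1.trans ht.2⟩ ht ht.1
    simp only [F.ρ0] at this
    linarith [S.hM, hr.2, ht.2]
  have hB := S.hB
  have hB' := S.hB'
  refine ⟨fun t ht => F.dρ r t (hin t ht), fun t ht => ?_, fun t ht => ?_,
    fun t ht => S.hl.trans_le (hρ1 t ht), fun t ht => (hβ t ht).1,
    fun t ht => by linarith [(hβ t ht).2], fun t ht => (hχ t ht).1, fun t ht => (hχ t ht).2⟩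
  · have := F.dβ r t (hin t ht)
    rwa [cl_eq (hρ1 t ht) (hρ2 t ht)] at this
  · have := F.dχ r t (hin t ht)
    unfold G at this
    rwa [cl_eq (hρ1 t ht) (hρ2 t ht), cl_eq (by linarith [(hβ t ht).1]) (hβ t ht).2] at this

/-- the curve dips through the diagonal transversally before turning by `π` -/
def Good (F : PFlow a μ l M B N) (δ r : ℝ) : Prop :=
  ∃ T ∈ Set.Icc δ (π / μ + 1), F.β r T < 0 ∧
    ∀ t ∈ Set.Icc δ T, 0 < F.χ r t ∧ F.χ r t < π ∧ F.β r t < B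

/-- closed limiting conditions -/
def Lim (F : PFlow a μ l M B N) (δ r T : ℝ) : Prop :=
  T ∈ Set.Icc δ (π / μ) ∧ F.β r T = 0 ∧ ∀ t ∈ Set.Icc 0 T, 0 ≤ F.β r t ∧ F.β r t ≤ B ∧
    0 ≤ F.χ r t ∧ F.χ r t ≤ π ∧ 0 ≤ mf a (μ * l) (F.β r t)

theorem mf_weaken {c c' b : ℝ} (hb : 0 ≤ b) (hb' : b ≤ π / 4) (hc : c ≤ c') (h : 0 ≤ mf a c' b) :
    0 ≤ mf a c b := by
  have hJ : 0 ≤ J a b := by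
    rw [← J_zero a]; exact J_mono a ⟨le_rfl, by positivity⟩ ⟨hb, hb'⟩ hb
  unfold mf at *
  have := mul_le_mul_of_nonneg_right hc hJ
  linarith

theorem β_cont (F : PFlow a μ l M B N) (r : ℝ) {s T : ℝ} (hs : 0 ≤ s) (hT : T < N) :
    ContinuousOn (F.β r) (Set.Icc s T) := fun t ht =>
  (F.dβ r t ⟨by linarith [ht.1, ht.2], by linarith [ht.2]⟩).continuousAt.continuousWithinAt

theorem χ_cont (F : PFlow a μ l M B N) (r : ℝ) {s T : ℝ} (hs : 0 ≤ s) (hT : T < N) :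
    ContinuousOn (F.χ r) (Set.Icc s T) := fun t ht =>
  (F.dχ r t ⟨by linarith [ht.1, ht.2], by linarith [ht.2]⟩).continuousAt.continuousWithinAt

theorem good_to_lim (S : Setup a μ l M B N R0) (F : PFlow a μ l M B N) {δ : ℝ} (hδ : 0 < δ)
    (hst : ∀ r ∈ Set.Icc l R0, ∀ t ∈ Set.Ioc 0 δ,
      0 < F.β r t ∧ F.β r t < B ∧ 0 < F.χ r t ∧ F.χ r t < π)
    {r : ℝ} (hr : r ∈ Set.Icc l R0) (hg : Good F δ r) :
    ∃ T, Lim F δ r T ∧ 0 < F.χ r T ∧ F.χ r T < π ∧ TSol a μ (F.ρ r) (F.β r) (F.χ r) T := by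
  obtain ⟨T', hT', hneg, hall⟩ := hg
  have hμ := S.hμ
  have hT'N : T' < N := by linarith [S.hN, hT'.2]
  obtain ⟨T, hT, hT0, hnn⟩ := first_zero hT'.1 (β_cont F r hδ.le hT'N)
    (hst r hr δ ⟨hδ, le_rfl⟩).1 hneg
  have hTpos : 0 < T := hδ.trans_le hT.1
  have hβ : ∀ t ∈ Set.Icc 0 T, 0 ≤ F.β r t ∧ F.β r t ≤ B := by
    intro t ht
    rcases ht.1.eq_or_lt with h | h
    · rw [← h, F.β0]; exact ⟨le_rfl, S.hB.le⟩
    rcases le_total t δ with h' | h'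
    · have := hst r hr t ⟨h, h'⟩
      exact ⟨this.1.le, this.2.1.le⟩
    · exact ⟨hnn t ⟨h', ht.2⟩, (hall t ⟨h', ht.2.trans hT.2⟩).2.2.le⟩
  have hχ : ∀ t ∈ Set.Icc 0 T, 0 ≤ F.χ r t ∧ F.χ r t ≤ π := by
    intro t ht
    rcases ht.1.eq_or_lt with h | h
    · rw [← h, F.χ0]; exact ⟨le_rfl, Real.pi_pos.le⟩
    rcases le_total t δ with h' | h'
    · have := hst r hr t ⟨h, h'⟩
      exact ⟨this.2.2.1.le, this.2.2.2.le⟩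
    · have := hall t ⟨h', ht.2.trans hT.2⟩
      exact ⟨this.1.le, this.2.1.le⟩
  have hsol := toTSol S F hr (hT.2.trans_lt hT'N) hβ hχ
  have htime := hsol.time hTpos.le (F.β0 r) (F.χ0 r)
  have hχT := hall T hT
  have hmf := hsol.Ybound hμ hTpos.le (F.β0 r) hT0
  refine ⟨T, ⟨⟨hT.1, ?_⟩, hT0, fun t ht => ⟨(hβ t ht).1, (hβ t ht).2, (hχ t ht).1, (hχ t ht).2, ?_⟩⟩,
    hχT.1, hχT.2.1, hsol⟩
  · rw [le_div_iff₀ hμ]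
    rw [hT0] at htime
    linarith
  · refine mf_weaken (hβ t ht).1 ((hβ t ht).2.trans S.hB'.le) ?_ (hmf t ht)
    rw [F.ρ0]
    exact mul_le_mul_of_nonneg_left hr.1 hμ.le

theorem not_good_R0 (S : Setup a μ l M B N R0) (F : PFlow a μ l M B N) {δ : ℝ} (hδ : 0 < δ)
    (hst : ∀ r ∈ Set.Icc l R0, ∀ t ∈ Set.Ioc 0 δ,
      0 < F.β r t ∧ F.β r t < B ∧ 0 < F.χ r t ∧ F.χ r t < π) : ¬ Good F δ R0 := by
  intro hg
  obtain ⟨T, hL, h1, h2, hsol⟩ := good_to_lim S F hδ hst ⟨S.hlR, le_rfl⟩ hg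
  have hT : 0 ≤ T := hδ.le.trans hL.1.1
  have := hsol.noR0 S.hμ hT (F.β0 _) (F.χ0 _) hL.2.1 (by rw [F.ρ0]; linarith [S.hR0])
  linarith [Real.sin_pos_of_pos_of_lt_pi h1 h2]

theorem good_open (S : Setup a μ l M B N R0) (F : PFlow a μ l M B N) {δ : ℝ} (hδ : 0 < δ) {r : ℝ}
    (hg : Good F δ r) : ∃ ε > 0, ∀ r', |r' - r| < ε → Good F δ r' := by
  obtain ⟨T, hT, hneg, hall⟩ := hg
  have hTN : T < N := by linarith [S.hN, hT.2]
  have hC := F.hC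
  have hcont : ContinuousOn (fun t => min (min (F.χ r t) (π - F.χ r t)) (B - F.β r t))
      (Set.Icc δ T) := by
    have h1 := β_cont F r hδ.le hTN
    have h2 := χ_cont F r hδ.le hTN
    exact ContinuousOn.inf (ContinuousOn.inf h2 (continuousOn_const.sub h2)) (continuousOn_const.sub h1)
  obtain ⟨t0, ht0, hmin⟩ := isCompact_Icc.exists_isMinOn ⟨δ, le_rfl, hT.1⟩ hcont
  set η := min (min (min (F.χ r t0) (π - F.χ r t0)) (B - F.β r t0)) (-F.β r T) with hη
  have hη0 : 0 < η := by
    have := hall t0 ht0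
    simp only [hη, lt_min_iff]
    exact ⟨⟨⟨this.1, by linarith [this.2.1]⟩, by linarith [this.2.2]⟩, by linarith⟩
  refine ⟨η / F.C, by positivity, fun r' hr' => ?_⟩
  rw [lt_div_iff₀ hC] at hr'
  have hb : ∀ t ∈ Set.Icc δ T, |F.β r' t - F.β r t| < η ∧ |F.χ r' t - F.χ r t| < η := by
    intro t ht
    have h1 := F.lipβ r' r t t ⟨by linarith [ht.1], by linarith [ht.2]⟩
      ⟨by linarith [ht.1], by linarith [ht.2]⟩
    have h2 := F.lipχ r' r t t ⟨by linarith [ht.1], by linarith [ht.2]⟩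
      ⟨by linarith [ht.1], by linarith [ht.2]⟩
    rw [sub_self, abs_zero, add_zero] at h1 h2
    constructor <;> linarith
  refine ⟨T, hT, ?_, fun t ht => ?_⟩
  · have := (abs_lt.1 (hb T ⟨hT.1, le_rfl⟩).1).2
    have h2 : η ≤ -F.β r T := min_le_right _ _
    linarith
  · have h1 := abs_lt.1 (hb t ht).1
    have h2 := abs_lt.1 (hb t ht).2
    have h3 : η ≤ min (min (F.χ r t) (π - F.χ r t)) (B - F.β r t) :=
      (min_le_left _ _).trans (hmin ht)
    simp only [le_min_iff] at h3
    exact ⟨by linarith [h3.1.1, h2.1], by linarith [h3.1.2, h2.2], by linarith [h3.2, h1.2]⟩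

/-- extending slightly past a frequently-negative time -/
theorem push_good (S : Setup a μ l M B N R0) (F : PFlow a μ l M B N) {δ : ℝ} (hδ : 0 < δ)
    (hst : ∀ r ∈ Set.Icc l R0, ∀ t ∈ Set.Ioc 0 δ,
      0 < F.β r t ∧ F.β r t < B ∧ 0 < F.χ r t ∧ F.χ r t < π)
    {r T : ℝ} (hr : r ∈ Set.Icc l R0) (hT0 : 0 < T) (hT : T ≤ π / μ)
    (hall : ∀ t ∈ Set.Ioc 0 T, 0 < F.χ r t ∧ F.χ r t < π ∧ F.β r t < B)
    (hfr : ∃ᶠ s in nhdsWithin T (Set.Ioi T), F.β r s < 0) : Good F δ r := by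
  have hN := S.hN
  have hTin : T ∈ Set.Ioo (-N) N := ⟨by linarith, by linarith⟩
  have hTT := hall T ⟨hT0, le_rfl⟩
  have c1 := (F.dχ r T hTin).continuousAt
  have c2 := (F.dβ r T hTin).continuousAt
  have hev : ∀ᶠ s in nhds T, 0 < F.χ r s ∧ F.χ r s < π ∧ F.β r s < B :=
    (c1.eventually (lt_mem_nhds hTT.1)).and ((c1.eventually (gt_mem_nhds hTT.2.1)).and
      (c2.eventually (gt_mem_nhds hTT.2.2)))
  obtain ⟨ε, hε, hball⟩ := Metric.eventually_nhds_iff.1 hev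
  have hev2 : ∀ᶠ s in nhdsWithin T (Set.Ioi T), s ∈ Set.Ioo T (T + min ε 1) :=
    Ioo_mem_nhdsGT (by have : 0 < min ε 1 := by positivity
                       linarith)
  obtain ⟨s, hs1, hs2⟩ := (hfr.and_eventually hev2).exists
  have m1 := min_le_left ε 1
  have m2 := min_le_right ε 1
  refine ⟨s, ⟨?_, by linarith [hs2.2]⟩, hs1, fun t ht => ?_⟩
  · by_contra hcon
    push Not at hcon
    have := (hst r hr s ⟨by linarith [hs2.1], hcon.le⟩).1
    linarith
  · rcases le_or_gt t T with h | h
    · exact hall t ⟨hδ.trans_le ht.1, h⟩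
    · refine hball ?_
      rw [Real.dist_eq, abs_of_pos (by linarith)]
      linarith [ht.2, hs2.2]

end
end LamArc

open Real

namespace LamArc
section
variable {a : ℕ} {μ l M B N R0 : ℝ}

/-- A perpendicular return exists for the trajectory starting at radius `r`. -/
def Perp (F : PFlow a μ l M B N) (r : ℝ) : Prop :=
  ∃ T, 0 < T ∧ TSol a μ (F.ρ r) (F.β r) (F.χ r) T ∧ F.β r T = 0 ∧ F.χ r T = π ∧
    ∀ t ∈ Set.Ioo 0 T, 0 < F.β r t

theorem lim_cases (S : Setup a μ l M B N R0) (F : PFlow a μ l M B N) {δ : ℝ} (hδ : 0 < δ)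
    (hst : ∀ r ∈ Set.Icc l R0, ∀ t ∈ Set.Ioc 0 δ,
      0 < F.β r t ∧ F.β r t < B ∧ 0 < F.χ r t ∧ F.χ r t < π)
    {r T : ℝ} (hr : r ∈ Set.Icc l R0) (hL : Lim F δ r T) : Perp F r ∨ Good F δ r := by
  obtain ⟨hT, hβT, hall⟩ := hL
  have hμ := S.hμ
  have hπ := Real.pi_pos
  have hN := S.hN
  have hT0 : 0 < T := hδ.trans_le hT.1
  have hTN : T < N := by linarith [hT.2]
  have hsol : TSol a μ (F.ρ r) (F.β r) (F.χ r) T := toTSol S F hr hTN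
    (fun t ht => ⟨(hall t ht).1, (hall t ht).2.1⟩)
    (fun t ht => ⟨(hall t ht).2.2.1, (hall t ht).2.2.2.1⟩)
  have hTT : T ∈ Set.Icc 0 T := ⟨hT0.le, le_rfl⟩
  have hβB : ∀ t ∈ Set.Icc 0 T, F.β r t < B := fun t ht => by
    refine lt_of_le_of_ne (hall t ht).2.1 fun h => ?_
    have := (hall t ht).2.2.2.2
    rw [h] at this
    linarith [S.hmf]
  have hin : ∀ t ∈ Set.Icc 0 T, t ∈ Set.Ioo (-N) N := fun t ht =>
    ⟨by linarith [ht.1, ht.2], by linarith [ht.2]⟩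
  -- `χ` stays in the open interval
  have hχ0 : ∀ t ∈ Set.Ioo 0 T, 0 < F.χ r t := by
    intro t ht
    have ht' : t ∈ Set.Icc 0 T := ⟨ht.1.le, ht.2.le⟩
    refine lt_of_le_of_ne (hall t ht').2.2.1 fun h => ?_
    have hmin : IsLocalMin (F.χ r) t := by
      filter_upwards [Icc_mem_nhds ht.1 ht.2] with s hs
      rw [← h]; exact (hall s hs).2.2.1
    have hG := hmin.hasDerivAt_eq_zero (F.dχ r t (hin t ht'))
    have hu := F.uniq r t ⟨ht.1.le, by linarith [ht.2]⟩ (by rw [← h, Real.sin_zero]) hG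
    rw [F.ρ0] at hu
    rw [← hu.2, ← h] at hG
    have hGi := S.G_start hr.1 hr.2
    have e : G a μ l M B r (F.β r t) 0 = G a μ l M B r 0 0 := by
      unfold G G0; simp
    linarith
  have hχπ : ∀ t ∈ Set.Ioo 0 T, F.χ r t < π := by
    intro t ht
    have ht' : t ∈ Set.Icc 0 T := ⟨ht.1.le, ht.2.le⟩
    refine lt_of_le_of_ne (hall t ht').2.2.2.1 fun h => ?_
    have hmax : IsLocalMax (F.χ r) t := by
      filter_upwards [Icc_mem_nhds ht.1 ht.2] with s hs
      rw [h]; exact (hall s hs).2.2.2.1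
    have hG := hmax.hasDerivAt_eq_zero (F.dχ r t (hin t ht'))
    have hu := F.uniq r t ⟨ht.1.le, by linarith [ht.2]⟩ (by rw [h, Real.sin_pi]) hG
    rw [F.χ0, h] at hu
    linarith [hu.1]
  -- second derivative of β at a point with β = 0, χ = π/2
  have hsec : ∀ t ∈ Set.Icc 0 T, F.β r t = 0 → F.χ r t = π / 2 →
      HasDerivAt (fun s => Real.cos (F.χ r s) / F.ρ r s) (-μ / F.ρ r t) t := by
    intro t ht h1 h2
    have hp := (hsol.ρpos t ht).ne'
    refine ((hsol.dχ t ht).cos.div (hsol.dρ t ht) hp).congr_deriv ?_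
    rw [h1, h2]
    unfold G0
    simp
    field_simp
  have hcos0 : ∀ t ∈ Set.Icc 0 T, Real.cos (F.χ r t) = 0 → F.χ r t = π / 2 := by
    intro t ht h
    have h1 := (hall t ht).2.2.1
    have h2 := (hall t ht).2.2.2.1
    exact Real.injOn_cos ⟨h1, h2⟩ ⟨by linarith, by linarith⟩ (by rw [h, Real.cos_pi_div_two])
  have hneg : ∀ t ∈ Set.Icc 0 T, -μ / F.ρ r t < 0 := fun t ht =>
    div_neg_of_neg_of_pos (by linarith) (hsol.ρpos t ht)
  have hβpos : ∀ t ∈ Set.Ioo 0 T, 0 < F.β r t := by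
    intro t ht
    have ht' : t ∈ Set.Icc 0 T := ⟨ht.1.le, ht.2.le⟩
    refine lt_of_le_of_ne (hall t ht').1 fun h => ?_
    have hmin : IsLocalMin (F.β r) t := by
      filter_upwards [Icc_mem_nhds ht.1 ht.2] with s hs
      rw [← h]; exact (hall s hs).1
    have h1 := hmin.hasDerivAt_eq_zero (hsol.dβ t ht')
    have h2 : Real.cos (F.χ r t) = 0 := by
      rcases div_eq_zero_iff.1 h1 with h | h
      · exact h
      · exact absurd h (hsol.ρpos t ht').ne'
    have h3 := hcos0 t ht' h2
    obtain ⟨s, hs, hlt⟩ := strict_right ht.2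
      (fun s hs => hsol.dβ s ⟨ht.1.le.trans hs.1, hs.2⟩) h1 (hsec t ht' h.symm h3) (hneg t ht')
    have := (hall s ⟨by linarith [ht.1, hs.1], hs.2.le⟩).1
    linarith
  have hd := deriv_nonpos_left hT0 (hsol.dβ T hTT) (fun t ht => by rw [hβT]; exact (hall t ht).1)
  have hρT := hsol.ρpos T hTT
  have hcT : Real.cos (F.χ r T) ≤ 0 := by
    by_contra hcon
    push Not at hcon
    have := div_pos hcon hρT
    linarith
  have hcT' : Real.cos (F.χ r T) < 0 := by
    refine lt_of_le_of_ne hcT fun h => ?_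
    have h3 := hcos0 T hTT h
    obtain ⟨s, hs, hlt⟩ := strict_left hT0 (fun s hs => hsol.dβ s hs) (by rw [h, zero_div])
      (hsec T hTT hβT h3) (hneg T hTT)
    have := (hall s ⟨hs.1.le, hs.2.le⟩).1
    linarith
  rcases (hall T hTT).2.2.2.1.eq_or_lt with h | h
  · exact Or.inl ⟨T, hT0, hsol, hβT, h, hβpos⟩
  · right
    refine push_good S F hδ hst hr hT0 hT.2 (fun t ht => ?_) ?_
    · refine ⟨?_, ?_, hβB t ⟨ht.1.le, ht.2⟩⟩
      · rcases ht.2.eq_or_lt with e | e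
        · rw [e]
          refine lt_of_le_of_ne (hall T hTT).2.2.1 fun h0 => ?_
          rw [← h0, Real.cos_zero] at hcT
          linarith
        · exact hχ0 t ⟨ht.1, e⟩
      · rcases ht.2.eq_or_lt with e | e
        · rw [e]; exact h
        · exact hχπ t ⟨ht.1, e⟩
    · have := eventually_lt_right (hsol.dβ T hTT) (div_neg_of_neg_of_pos hcT' hρT)
      rw [hβT] at this
      exact this.frequently

theorem lim_closed (S : Setup a μ l M B N R0) (F : PFlow a μ l M B N) {δ : ℝ} (hδ : 0 < δ)
    {x : ℕ → ℝ} {r : ℝ} (hx : Filter.Tendsto x Filter.atTop (nhds r)) {T : ℕ → ℝ}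
    (hL : ∀ k, Lim F δ (x k) (T k)) : ∃ T', Lim F δ r T' := by
  have hN := S.hN
  obtain ⟨T', hT', φ, hφ, hlim⟩ := isCompact_Icc.tendsto_subseq (fun k => (hL k).1)
  have hx' := hx.comp hφ.tendsto_atTop
  have hT0 : 0 < T' := hδ.trans_le hT'.1
  have hTk : ∀ k, 0 < T k := fun k => hδ.trans_le (hL k).1.1
  have hmem : ∀ τ ∈ Set.Icc (0:ℝ) 1, ∀ s ∈ Set.Icc δ (π / μ), τ * s ∈ Set.Ico 0 N := by
    intro τ hτ s hs
    have hs0 : 0 ≤ s := hδ.le.trans hs.1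
    refine ⟨mul_nonneg hτ.1 hs0, ?_⟩
    have := mul_le_mul_of_nonneg_right hτ.2 hs0
    linarith [hs.2]
  have hsmall : ∀ τ ∈ Set.Icc (0:ℝ) 1, Filter.Tendsto
      (fun k => F.C * (|x (φ k) - r| + |τ * T (φ k) - τ * T'|)) Filter.atTop (nhds 0) := by
    intro τ hτ
    have h1 : Filter.Tendsto (fun k => |x (φ k) - r|) Filter.atTop (nhds 0) := by
      have := (hx'.sub_const r).abs
      simpa using this
    have h2 : Filter.Tendsto (fun k => |τ * T (φ k) - τ * T'|) Filter.atTop (nhds 0) := by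
      have := ((hlim.const_mul τ).sub_const (τ * T')).abs
      simpa using this
    simpa using (h1.add h2).const_mul F.C
  have hβ : ∀ τ ∈ Set.Icc (0:ℝ) 1, Filter.Tendsto (fun k => F.β (x (φ k)) (τ * T (φ k)))
      Filter.atTop (nhds (F.β r (τ * T'))) := by
    intro τ hτ
    rw [tendsto_iff_dist_tendsto_zero]
    refine squeeze_zero (fun _ => dist_nonneg) (fun k => ?_) (hsmall τ hτ)
    rw [Real.dist_eq]
    exact F.lipβ _ _ _ _ (hmem τ hτ _ (hL _).1) (hmem τ hτ _ hT')
  have hχ : ∀ τ ∈ Set.Icc (0:ℝ) 1, Filter.Tendsto (fun k => F.χ (x (φ k)) (τ * T (φ k)))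
      Filter.atTop (nhds (F.χ r (τ * T'))) := by
    intro τ hτ
    rw [tendsto_iff_dist_tendsto_zero]
    refine squeeze_zero (fun _ => dist_nonneg) (fun k => ?_) (hsmall τ hτ)
    rw [Real.dist_eq]
    exact F.lipχ _ _ _ _ (hmem τ hτ _ (hL _).1) (hmem τ hτ _ hT')
  refine ⟨T', hT', ?_, fun t ht => ?_⟩
  · have h1 := hβ 1 ⟨zero_le_one, le_rfl⟩
    simp only [one_mul] at h1
    have : ∀ k, F.β (x (φ k)) (T (φ k)) = 0 := fun k => (hL _).2.1
    simp only [this] at h1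
    exact (tendsto_nhds_unique h1 tendsto_const_nhds)
  · have hτ : t / T' ∈ Set.Icc (0:ℝ) 1 :=
      ⟨div_nonneg ht.1 hT0.le, (div_le_one hT0).2 ht.2⟩
    have e : t / T' * T' = t := by field_simp
    have b := hβ _ hτ
    have c := hχ _ hτ
    rw [e] at b c
    have hk : ∀ k, t / T' * T (φ k) ∈ Set.Icc 0 (T (φ k)) := fun k =>
      ⟨mul_nonneg hτ.1 (hTk _).le, mul_le_of_le_one_left (hTk _).le hτ.2⟩
    refine ⟨ge_of_tendsto' b fun k => ((hL (φ k)).2.2 _ (hk k)).1,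
      le_of_tendsto' b fun k => ((hL (φ k)).2.2 _ (hk k)).2.1,
      ge_of_tendsto' c fun k => ((hL (φ k)).2.2 _ (hk k)).2.2.1,
      le_of_tendsto' c fun k => ((hL (φ k)).2.2 _ (hk k)).2.2.2.1,
      ge_of_tendsto' (((mf_cont a (μ * l)).tendsto _).comp b) fun k =>
        ((hL (φ k)).2.2 _ (hk k)).2.2.2.2⟩

theorem good_small (S : Setup a μ l M B N R0) (F : PFlow a μ l M B N) {δ : ℝ} (hδ : 0 < δ)
    (hδ1 : δ < 1)
    (hst : ∀ r ∈ Set.Icc l R0, ∀ t ∈ Set.Ioc 0 δ,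
      0 < F.β r t ∧ F.β r t < B ∧ 0 < F.χ r t ∧ F.χ r t < π)
    {κ R u1 : ℝ} (hκ : 0 < κ) (hκ4 : κ ≤ 1 / 4) (hκμ : 6 * a * κ ≤ μ) (hR : 0 < R) (hR1 : R ≤ 1)
    (hRμ : R * μ ≤ 1) (hu1 : u1 = κ * R ^ 2 / 16) (hl : l = κ * u1 ^ 2 / 4) (hlR : l < R) :
    Good F δ l := by
  have hμ := S.hμ
  have hN := S.hN
  have hπ := Real.pi_pos
  have hA : (1:ℝ) ≤ a := by exact_mod_cast S.ha
  have hlmem : l ∈ Set.Icc l R0 := ⟨le_rfl, S.hlR⟩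
  have hπμ : 0 < π / μ := by positivity
  set N1 := π / μ + 1 with hN1
  have hin : ∀ t ∈ Set.Icc 0 N1, t ∈ Set.Ioo (-N) N := fun t ht =>
    ⟨by linarith [ht.1, ht.2], by linarith [ht.2]⟩
  have hρc : ContinuousOn (F.ρ l) (Set.Icc 0 N1) := fun t ht =>
    (F.dρ l t (hin t ht)).continuousAt.continuousWithinAt
  have hβc : ContinuousOn (F.β l) (Set.Icc 0 N1) := β_cont F l le_rfl (by linarith)
  -- first time the conditions fail
  obtain ⟨t0, ht0, hcond, hmaxi⟩ : ∃ t0 ∈ Set.Icc 0 N1,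
      (∀ s ∈ Set.Icc 0 t0, 0 ≤ F.β l s ∧ F.β l s ≤ B ∧ F.ρ l s ≤ R) ∧
      (∀ t ∈ Set.Icc 0 N1, (∀ s ∈ Set.Icc 0 t, 0 ≤ F.β l s ∧ F.β l s ≤ B ∧ F.ρ l s ≤ R) →
        t ≤ t0) := by
    set A := {t | t ∈ Set.Icc 0 N1 ∧ ∀ s ∈ Set.Icc 0 t,
      0 ≤ F.β l s ∧ F.β l s ≤ B ∧ F.ρ l s ≤ R} with hAdef
    have hA0 : (0:ℝ) ∈ A := by
      refine ⟨⟨le_rfl, by linarith⟩, fun s hs => ?_⟩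
      have : s = 0 := le_antisymm hs.2 hs.1
      rw [this, F.β0, F.ρ0]
      exact ⟨le_rfl, S.hB.le, hlR.le⟩
    have hbdd : BddAbove A := ⟨N1, fun t ht => ht.1.2⟩
    have hmem : sSup A ∈ Set.Icc 0 N1 :=
      ⟨le_csSup hbdd hA0, csSup_le ⟨0, hA0⟩ fun t ht => ht.1.2⟩
    refine ⟨sSup A, hmem, ?_, fun t ht h => le_csSup hbdd ⟨ht, h⟩⟩
    have hlt : ∀ s ∈ Set.Ico 0 (sSup A), 0 ≤ F.β l s ∧ F.β l s ≤ B ∧ F.ρ l s ≤ R := by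
      intro s hs
      obtain ⟨t, ht, hst'⟩ := exists_lt_of_lt_csSup ⟨0, hA0⟩ hs.2
      exact ht.2 s ⟨hs.1, hst'.le⟩
    intro s hs
    rcases hs.2.eq_or_lt with e | e
    · rcases hs.1.eq_or_lt with e0 | e0
      · exact hA0.2 s ⟨hs.1, e0.symm.le⟩
      · have hsin := hin s ⟨hs.1, hs.2.trans hmem.2⟩
        have b := ((F.dβ l s hsin).continuousAt.continuousWithinAt (s := Set.Iio s)).tendsto
        have p := ((F.dρ l s hsin).continuousAt.continuousWithinAt (s := Set.Iio s)).tendsto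
        have hev : ∀ᶠ t in nhdsWithin s (Set.Iio s),
            0 ≤ F.β l t ∧ F.β l t ≤ B ∧ F.ρ l t ≤ R := by
          filter_upwards [Ioo_mem_nhdsLT e0] with t ht
          exact hlt t ⟨ht.1.le, by rw [← e]; exact ht.2⟩
        exact ⟨ge_of_tendsto b (hev.mono fun _ h => h.1),
          le_of_tendsto b (hev.mono fun _ h => h.2.1),
          le_of_tendsto p (hev.mono fun _ h => h.2.2)⟩
    · exact hlt s ⟨hs.1, e⟩
  have hin0 : ∀ t ∈ Set.Icc 0 t0, t ∈ Set.Ioo (-N) N := fun t ht =>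
    hin t ⟨ht.1, ht.2.trans ht0.2⟩
  have ht0pos : 0 < t0 := by
    have hc := (F.dρ l 0 (hin 0 ⟨le_rfl, by linarith⟩)).continuousAt
    have hev := hc.eventually (gt_mem_nhds (by rw [F.ρ0]; exact hlR : F.ρ l 0 < R))
    obtain ⟨ε, hε, hball⟩ := Metric.eventually_nhds_iff.1 hev
    have hm : 0 < min δ (ε / 2) := by positivity
    refine hm.trans_le (hmaxi _ ⟨hm.le, (min_le_left _ _).trans (by linarith)⟩ fun s hs => ?_)
    have hs1 : s ≤ δ := hs.2.trans (min_le_left _ _)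
    have hs2 : s ≤ ε / 2 := hs.2.trans (min_le_right _ _)
    have hρs : F.ρ l s ≤ R := le_of_lt (hball (by
      rw [Real.dist_eq, sub_zero, abs_of_nonneg hs.1]; linarith))
    rcases hs.1.eq_or_lt with h | h
    · rw [← h, F.β0]
      exact ⟨le_rfl, S.hB.le, by rw [h]; exact hρs⟩
    · have := hst l hlmem s ⟨h, hs1⟩
      exact ⟨this.1.le, this.2.1.le, hρs⟩
  -- the clamped radius is small
  have hcl : ∀ t ∈ Set.Icc 0 t0, 0 < cl l M (F.ρ l t) ∧ cl l M (F.ρ l t) ≤ R := fun t ht =>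
    ⟨S.hl.trans_le (le_cl _ _ _), cl_le' hlR.le (hcond t ht).2.2⟩
  have hQ : ∀ q : ℝ, 0 < q → q ≤ R → 1 < -(q ^ 2 / 2 - (2 * a + 1)) := by
    intro q h1 h2
    have : q ^ 2 ≤ 1 := pow_le_one₀ h1.le (h2.trans hR1)
    linarith
  have hχpos : ∀ t ∈ Set.Ioc 0 t0, 0 < F.χ l t := by
    refine barrier_pos (fun t ht => F.dχ l t (hin0 t ht)) (F.χ0 l).ge (fun t ht h => ?_)
    have h1 := hcl t ht
    have h2 := hQ _ h1.1 h1.2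
    rw [h]; unfold G G0
    simp only [Real.sin_zero, Real.cos_zero, mul_zero, mul_one, zero_sub]
    have := div_pos (zero_lt_one.trans h2) h1.1
    linarith
  have hχlt : ∀ t ∈ Set.Ioc 0 t0, F.χ l t < π := by
    have := barrier_pos (f := fun t => π - F.χ l t)
      (fun t ht => (F.dχ l t (hin0 t ht)).const_sub π) (by rw [F.χ0]; linarith) (fun t ht h => ?_)
    · intro t ht
      linarith [this t ht]
    have h1 := hcl t ht
    have h2 := hQ _ h1.1 h1.2
    have h' : F.χ l t = π := by linarith
    rw [h']; unfold G G0
    simp only [Real.sin_pi, Real.cos_pi, mul_zero, zero_sub]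
    have h3 : μ < -(cl l M (F.ρ l t) ^ 2 / 2 - (2 * a + 1)) / cl l M (F.ρ l t) := by
      rw [lt_div_iff₀ h1.1]
      have := mul_le_mul_of_nonneg_left h1.2 hμ.le
      linarith
    have e : -((cl l M (F.ρ l t) ^ 2 / 2 - (2 * a + 1)) * -1) / cl l M (F.ρ l t) =
      -(-(cl l M (F.ρ l t) ^ 2 / 2 - (2 * a + 1)) / cl l M (F.ρ l t)) := by ring
    rw [e]
    linarith
  have hsol : TSol a μ (F.ρ l) (F.β l) (F.χ l) t0 := by
    refine toTSol S F hlmem (by linarith [ht0.2]) (fun t ht => ⟨(hcond t ht).1, (hcond t ht).2.1⟩)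
      (fun t ht => ?_)
    rcases ht.1.eq_or_lt with h | h
    · rw [← h, F.χ0]; exact ⟨le_rfl, hπ.le⟩
    · exact ⟨(hχpos t ⟨h, ht.2⟩).le, (hχlt t ⟨h, ht.2⟩).le⟩
  have htt : t0 ∈ Set.Icc 0 t0 := ⟨ht0pos.le, le_rfl⟩
  have hρ0 := hsol.ρpos t0 htt
  have htime : t0 ≤ π / μ := by
    rw [le_div_iff₀ hμ]
    have h1 := hsol.time ht0pos.le (F.β0 l) (F.χ0 l)
    have h2 := hQ _ hρ0 (hcond t0 htt).2.2
    have h3 := hχlt t0 ⟨ht0pos, le_rfl⟩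
    have h4 := (hcond t0 htt).1
    nlinarith
  have hρlt : F.ρ l t0 < R := hsol.small S.ha ht0pos.le hκ hκ4 hκμ hR hR1 hu1
    (by rw [F.ρ0]; exact hl) (F.β0 l) (F.χ0 l) (fun t ht => (hcond t ht).2.2)
  have hβB : ∀ t ∈ Set.Icc 0 t0, F.β l t < B := by
    obtain ⟨s, hs, hmax⟩ := isCompact_Icc.exists_isMaxOn ⟨0, le_rfl, ht0pos.le⟩
      (hβc.mono (Set.Icc_subset_Icc_right ht0.2))
    have h1 := (hsol.restrict hs.2).Y1 hμ hs.1 (F.β0 l)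
      (fun t ht => hmax ⟨ht.1, ht.2.trans hs.2⟩)
      (by linarith [hQ _ (hsol.ρpos s hs) (hcond s hs).2.2])
    rw [F.ρ0] at h1
    have h2 : F.β l s < B := by
      refine lt_of_le_of_ne (hcond s hs).2.1 fun h => ?_
      rw [h] at h1
      linarith [S.hmf]
    exact fun t ht => (hmax ht).trans_lt h2
  refine push_good S F hδ hst hlmem ht0pos htime
    (fun t ht => ⟨hχpos t ht, hχlt t ht, hβB t ⟨ht.1.le, ht.2⟩⟩) ?_
  intro hev
  have hev' : ∀ᶠ s in nhdsWithin t0 (Set.Ioi t0), 0 ≤ F.β l s ∧ F.β l s ≤ B ∧ F.ρ l s ≤ R := by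
    have b := ((F.dβ l t0 (hin0 t0 htt)).continuousAt.eventually
      (gt_mem_nhds (hβB t0 htt))).filter_mono (nhdsWithin_le_nhds (s := Set.Ioi t0))
    have p := ((F.dρ l t0 (hin0 t0 htt)).continuousAt.eventually
      (gt_mem_nhds hρlt)).filter_mono (nhdsWithin_le_nhds (s := Set.Ioi t0))
    filter_upwards [hev, b, p] with s h1 h2 h3
    exact ⟨not_lt.1 h1, h2.le, h3.le⟩
  have ht0N : t0 < N1 := by linarith
  obtain ⟨c, hc, hsub⟩ := (mem_nhdsGT_iff_exists_Ioo_subset' ht0N).1 hev'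
  have hc' : t0 < c := hc
  obtain ⟨t, ht1, ht2⟩ := exists_between (lt_min hc' ht0N)
  have hlt := lt_min_iff.1 ht2
  have := hmaxi t ⟨by linarith, hlt.2.le⟩ (fun s hs => by
    rcases le_or_gt s t0 with h | h
    · exact hcond s ⟨hs.1, h⟩
    · exact hsub ⟨h, by linarith [hs.2, hlt.1]⟩)
  linarith

theorem exists_perp (S : Setup a μ l M B N R0) (F : PFlow a μ l M B N)
    {κ R u1 : ℝ} (hκ : 0 < κ) (hκ4 : κ ≤ 1 / 4) (hκμ : 6 * a * κ ≤ μ) (hR : 0 < R) (hR1 : R ≤ 1)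
    (hRμ : R * μ ≤ 1) (hu1 : u1 = κ * R ^ 2 / 16) (hl : l = κ * u1 ^ 2 / 4) (hlR : l < R) :
    ∃ r, Perp F r := by
  obtain ⟨δ, hδ, hδ1, hst⟩ := start S F
  by_contra hno
  push Not at hno
  have hcl : IsClosed ({r | Good F δ r} ∩ Set.Icc l R0) := by
    refine IsSeqClosed.isClosed fun x r hx hxr => ?_
    have hmem : r ∈ Set.Icc l R0 := isClosed_Icc.mem_of_tendsto hxr
      (Filter.Eventually.of_forall fun k => (hx k).2)
    have hT : ∀ k, ∃ T, Lim F δ (x k) T := fun k => by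
      obtain ⟨T, hT, _⟩ := good_to_lim S F hδ hst (hx k).2 (hx k).1
      exact ⟨T, hT⟩
    choose T hT using hT
    obtain ⟨T', hT'⟩ := lim_closed S F hδ hxr hT
    rcases lim_cases S F hδ hst hmem hT' with h | h
    · exact absurd h (hno r)
    · exact ⟨h, hmem⟩
  have hsub := hcl.Icc_subset_of_forall_exists_gt
    (good_small S F hδ hδ1 hst hκ hκ4 hκμ hR hR1 hRμ hu1 hl hlR) (fun x hx y hy => by
      obtain ⟨ε, hε, hop⟩ := good_open S F hδ hx.1
      have hy' : x < y := hy
      have hm : 0 < min (ε / 2) (y - x) := lt_min (by positivity) (by linarith)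
      refine ⟨x + min (ε / 2) (y - x), hop _ ?_, by linarith, ?_⟩
      · rw [add_sub_cancel_left, abs_of_pos hm]
        linarith [min_le_left (ε / 2) (y - x)]
      · linarith [min_le_right (ε / 2) (y - x)])
  exact not_good_R0 S F hδ hst (hsub ⟨S.hlR, le_rfl⟩)

end

end LamArc

theorem exists_perpendicular_arc_below_diagonal
    (lam : ℝ) (hlam : lam < 0) (n : ℕ) (hn : 2 ≤ n) :
    ∃ (T : ℝ) (x y θ : ℝ → ℝ), 0 < T ∧
      (∀ t ∈ Set.Icc 0 T, 0 < x t ∧ 0 < y t) ∧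
      (∀ t ∈ Set.Icc 0 T, HasDerivAt x (Real.cos (θ t)) t) ∧
      (∀ t ∈ Set.Icc 0 T, HasDerivAt y (Real.sin (θ t)) t) ∧
      (∀ t ∈ Set.Icc 0 T, HasDerivAt θ
        ((x t / 2 - ((n : ℝ) - 1) / x t) * Real.sin (θ t) +
          (((n : ℝ) - 1) / y t - y t / 2) * Real.cos (θ t) + lam) t) ∧
      x 0 = y 0 ∧ 0 < x 0 ∧ θ 0 = -(π / 4) ∧
      x T = y T ∧ 0 < x T ∧ θ T = -(5 * π / 4) ∧
      (∀ t ∈ Set.Ioo 0 T, 0 < y t ∧ y t < x t) := by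
  obtain ⟨a, rfl⟩ : ∃ a, n = a + 1 := ⟨n - 1, by omega⟩
  have ha : 1 ≤ a := by omega
  have hA : (1:ℝ) ≤ a := by exact_mod_cast ha
  set μ := -lam with hμd
  have hμ : 0 < μ := by linarith
  obtain ⟨κ, hκd⟩ : ∃ κ, κ = min (1 / 4) (μ / (6 * a)) := ⟨_, rfl⟩
  obtain ⟨R, hRd⟩ : ∃ R, R = min 1 (1 / μ) := ⟨_, rfl⟩
  have hκ : 0 < κ := by rw [hκd]; positivity
  have hκ4 : κ ≤ 1 / 4 := by rw [hκd]; exact min_le_left _ _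
  have hκμ : 6 * a * κ ≤ μ := by
    have : κ ≤ μ / (6 * a) := by rw [hκd]; exact min_le_right _ _
    rw [le_div_iff₀ (by positivity)] at this
    linarith
  have hR : 0 < R := by rw [hRd]; positivity
  have hR1 : R ≤ 1 := by rw [hRd]; exact min_le_left _ _
  have hRμ : R * μ ≤ 1 := by
    have : R ≤ 1 / μ := by rw [hRd]; exact min_le_right _ _
    rwa [le_div_iff₀ hμ] at this
  obtain ⟨u1, hu1⟩ : ∃ u1, u1 = κ * R ^ 2 / 16 := ⟨_, rfl⟩
  obtain ⟨l, hl⟩ : ∃ l, l = κ * u1 ^ 2 / 4 := ⟨_, rfl⟩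
  have hu10 : 0 < u1 := by rw [hu1]; positivity
  have hl0 : 0 < l := by rw [hl]; positivity
  have hlR : l < R := by
    have h1 := (LamArc.small_const hκ hκ4 hR hR1 hu1).2
    have h2 : R ^ 2 ≤ R := by nlinarith
    have h3 : κ * u1 ^ 2 ≤ 1 * u1 ^ 2 := mul_le_mul_of_nonneg_right (by linarith) (by positivity)
    rw [hl]
    linarith
  obtain ⟨R0, hR0d⟩ : ∃ R0, R0 = Real.sqrt (4 * a + 2) := ⟨_, rfl⟩
  have hR0sq : R0 ^ 2 = 4 * a + 2 := by rw [hR0d, Real.sq_sqrt (by positivity)]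
  have hR01 : 1 ≤ R0 := by rw [hR0d]; exact Real.one_le_sqrt.2 (by linarith)
  obtain ⟨B, hB, hB', hmf⟩ := LamArc.exists_B a ha (mul_pos hμ hl0)
  have hN : 0 < π / μ + 2 := by positivity
  obtain ⟨F⟩ := LamArc.exists_PFlow a μ l (R0 + (π / μ + 2)) B (π / μ + 2) hl0 (by linarith) hB hB' hN
  have S : LamArc.Setup a μ l (R0 + (π / μ + 2)) B (π / μ + 2) R0 :=
    ⟨ha, hμ, hl0, by linarith, by linarith, rfl, rfl, hB, hB', hmf⟩
  obtain ⟨r, T, hT, hsol, hβT, hχT, hpos⟩ :=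
    LamArc.exists_perp S F hκ hκ4 hκμ hR hR1 hRμ hu1 hl hlR
  exact LamArc.final_of_TSol (by push_cast; ring) hsol hT (F.β0 r) (F.χ0 r) hβT hχT hpos
end
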